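/- Suppose f is non-degenerate over ℝ, s₀ ∉ ℤ, and τ₀ is a compact simplex of codimension 1 (so ρ = 1) whose vertices a_1,…,a_n ∈ ℕⁿ are the only points of supp(f) lying on τ₀; the vectors a_1,…,a_n are then linearly independent over ℚ. Let ε_i ≠ 0 be the Taylor coefficient of f at the exponent a_i (so f_{τ₀}(x) = ∑_{i=1}^n ε_i x^{a_i}), let A be the n×n matrix whose i-th column is a_i, and let γ = (γ_1,…,γ_n) be the unique solution of ∑_{i=1}^n γ_i a_i = (1,…,1); then each γ_i > 0 and ∑_i γ_i = −s₀. Then there is an open neighbourhood U of 0 in ℝⁿ such that for every C^∞ function φ with compact support contained in U, as t → +∞: ∫_{ℝⁿ} e^{i t f(x)} φ(x) dx = μ · t^{s₀} + o(t^{s₀}), where μ = |det A|^{−1} · φ(0) · (∏_{j=1}^n Γ(γ_j) |ε_j|^{−γ_j}) · ∑_{β ∈ {−1,1}ⁿ} ∏_{j=1}^n e^{sign(ε_j β^{a_j}) i π γ_j / 2}, with β^{a_j} = ∏_{k=1}^n β_k^{(a_j)_k} and Γ the Gamma function. -/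

import Mathlib

/-!
On each open orthant, pass to logarithmic coordinates `x i = β i * exp (y i)`. Lebesgue measure
becomes `exp (y₁ + ⋯ + yₙ) dy`, and near the origin `f` is a finite sum `∑ x ^ g * h g x` over the
minimal exponents `g` of its support, with `h g` smooth (`exists_decomposition`). Since `τ₀` is a
compact facet meeting the diagonal, it is cut out by a weight `u` with positive entries that equals
`1` on `τ₀` and exceeds `1` on all other exponents; moreover `∑ u i = ∑ γ k = -s₀`
(`simplex_face`). The translation `y i ↦ y i - u i * log t` therefore extracts the factor `t ^ s₀`
and turns the phase `t * f` into a function converging, as `t → ∞`, to the model phase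
`∑ η j * exp ⟨a_j, y⟩` with `η j = ε_j β ^ a_j`, while the amplitude converges to `φ 0`.

Pointwise convergence is not enough, as the limit amplitude is constant and the model integral
converges only conditionally. Uniformity comes from non-degeneracy. In logarithmic coordinates all
derivatives of the phase are bounded by `M = t * ∑ |x ^ g|` (`phase_jet`), and non-degeneracy gives a
matching lower bound for its gradient near the origin (`logd_lower_bound`, proved by contradiction:
a sequence violating the bound selects a compact face whose polynomial has a critical point in the
torus). Integrating by parts `n * N` times gains `(1 + M) ^ (-n * N)` (`ibp_iterate`). As
`M ≥ exp ⟨a_j, y⟩` for each of the `n` vertices, this is at most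
`∏ (1 + exp ⟨a_j, y⟩) ^ (-N)`, which is integrable against `exp (y₁ + ⋯ + yₙ)` because
`(1, …, 1) = ∑ γ k a_k` with `0 < γ k < N`. So the parts of the integrals over `‖y‖ ≥ R` are
uniformly small, and the limit depends only on the limit phase (`osc_tendsto`).

The same comparison applies to the model phase with the amplitude `exp (-δ ∑ exp ⟨a_j, y⟩)` as
`δ → 0`, for which the linear change of variables `z j = ⟨a_j, y⟩` splits the integral into
one-dimensional Gamma integrals: it equals `|det A|⁻¹ ∏ Γ(γ j) (δ - i η j) ^ (-γ j)` (`osc_model`).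
Letting `δ → 0` and summing over the orthants gives `μ`.
-/

open MeasureTheory Filter Topology Complex

noncomputable section
open scoped Classical

/-- Inner product `⟨a, y⟩ = ∑ i, a i * y i` on `Fin n → ℝ`. -/
def dotR {n : ℕ} (a y : Fin n → ℝ) : ℝ := ∑ i, a i * y i

/-- The Newton polyhedron of a support set `S ⊆ ℕⁿ`: the convex hull of `S + [0,∞)ⁿ`. -/
def newtonPolyhedron {n : ℕ} (S : Set (Fin n → ℕ)) : Set (Fin n → ℝ) :=
  convexHull ℝ {x : Fin n → ℝ | ∃ α ∈ S, ∀ i, (α i : ℝ) ≤ x i}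

/-- The face of `Γ` cut out by a nonnegative linear functional `u`:
the set of minimizers of `⟨u, ·⟩` on `Γ`. -/
def traceFace {n : ℕ} (Γ : Set (Fin n → ℝ)) (u : Fin n → ℝ) : Set (Fin n → ℝ) :=
  {y ∈ Γ | ∀ z ∈ Γ, dotR u y ≤ dotR u z}

/-- `τ` is a face of `Γ`: the set of minimizers of some nonnegative linear functional. -/
def IsFaceOf {n : ℕ} (Γ τ : Set (Fin n → ℝ)) : Prop :=
  ∃ u : Fin n → ℝ, (∀ i, 0 ≤ u i) ∧ τ = traceFace Γ u

/-- The dimension of (the affine span of) a subset of `ℝⁿ`. -/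
def faceDim {n : ℕ} (τ : Set (Fin n → ℝ)) : ℕ := Module.finrank ℝ (vectorSpan ℝ τ)

/-- Given Taylor coefficients `a : ℕⁿ → ℝ` and a region `γ ⊆ ℝⁿ`, the polynomial
`f_γ(x) = ∑_{α ∈ γ ∩ ℕⁿ} a_α x^α`. -/
def facePoly {n : ℕ} (a : (Fin n → ℕ) → ℝ) (γ : Set (Fin n → ℝ)) (x : Fin n → ℝ) : ℝ :=
  ∑' α : Fin n → ℕ, if (fun i => (α i : ℝ)) ∈ γ then a α * ∏ i, x i ^ α i else 0

/-- `f` (with Taylor coefficients `a` and Newton polyhedron `Γ`) is non-degenerate over ℝ: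
for every compact face `γ` of `Γ`, the polynomial `f_γ` has no critical point in `(ℝ∖{0})ⁿ`. -/
def NonDegenerateR {n : ℕ} (a : (Fin n → ℕ) → ℝ) (Γ : Set (Fin n → ℝ)) : Prop :=
  ∀ γ : Set (Fin n → ℝ), IsFaceOf Γ γ → IsCompact γ →
    ∀ x : Fin n → ℝ, (∀ i, x i ≠ 0) → fderiv ℝ (facePoly a γ) x ≠ 0

/-- The positive open orthant `(0,∞)^m`. -/
def posOrthant (m : ℕ) : Set (Fin m → ℝ) := {y | ∀ i, 0 < y i}

/-- `pad ρ y = (1,…,1,y_{ρ+1},…,y_n)`: the first `ρ` coordinates are `1`,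
the remaining ones come from `y`. -/
def padR {n : ℕ} (ρ : ℕ) (y : Fin (n - ρ) → ℝ) : Fin n → ℝ :=
  fun i => if h : (i : ℕ) < ρ then 1 else y ⟨(i : ℕ) - ρ, by have := i.isLt; omega⟩

/-- `pPow u s = u^s` for `u > 0`, and `0` otherwise (so in particular `0^s = 0`). -/
def pPow (u s : ℝ) : ℝ := if 0 < u then u ^ s else 0

/-- `G` is a meromorphic continuation of `Z` (defined for `Re s > 0`) to a connected open
set containing the half-plane `{Re s > 0}` and the point `s₀`. -/
def IsMeroCont (Z : ℂ → ℂ) (s₀ : ℂ) (G : ℂ → ℂ) : Prop :=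
  ∃ U : Set ℂ, IsOpen U ∧ IsConnected U ∧ ({s : ℂ | 0 < s.re} ∪ {s₀}) ⊆ U ∧
    MeromorphicOn G U ∧ ∀ s : ℂ, 0 < s.re → G s = Z s

/-- The positive part `max (σ • f) 0`; for `σ = 1` this is `f₊`, for `σ = -1` it is `f₋`. -/
def sgnPart (σ : ℝ) (u : ℝ) : ℝ := max (σ * u) 0


open scoped ContDiff

/-! ### Pointwise bounds on jets -/

section Jets
variable {V E F' : Type*} [NormedAddCommGroup V] [NormedSpace ℝ V]
  [NormedAddCommGroup E] [NormedSpace ℝ E] [NormedAddCommGroup F'] [NormedSpace ℝ F']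

/-- All derivatives of `G` at `v` of order at most `K` have norm at most `m`. -/
def JetLe (K : ℕ) (G : V → E) (m : ℝ) (v : V) : Prop :=
  ∀ k ≤ K, ‖iteratedFDeriv ℝ k G v‖ ≤ m

lemma JetLe.mono {K K' : ℕ} {G : V → E} {m m' : ℝ} {v : V} (h : JetLe K G m v)
    (hk : K' ≤ K) (hm : m ≤ m') : JetLe K' G m' v :=
  fun k hk' => (h k (hk'.trans hk)).trans hm

lemma JetLe.norm_le {K : ℕ} {G : V → E} {m : ℝ} {v : V} (h : JetLe K G m v) : ‖G v‖ ≤ m := by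
  simpa using h 0 (Nat.zero_le _)

lemma JetLe.nonneg {K : ℕ} {G : V → E} {m : ℝ} {v : V} (h : JetLe K G m v) : 0 ≤ m :=
  (norm_nonneg _).trans h.norm_le

lemma JetLe.exists (K : ℕ) (G : V → E) (v : V) : ∃ m, JetLe K G m v := by
  refine ⟨∑ k ∈ Finset.range (K + 1), ‖iteratedFDeriv ℝ k G v‖, fun k hk => ?_⟩
  exact Finset.single_le_sum (f := fun k => ‖iteratedFDeriv ℝ k G v‖)
    (fun _ _ => norm_nonneg _) (Finset.mem_range.2 (by omega))

lemma JetLe.smul {K : ℕ} {f : V → ℝ} {g : V → E} {a b : ℝ} {v : V}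
    (hf : ContDiff ℝ ∞ f) (hg : ContDiff ℝ ∞ g) (ha : JetLe K f a v) (hb : JetLe K g b v) :
    JetLe K (fun y => f y • g y) (2 ^ K * (a * b)) v := by
  intro k hk
  have hab : 0 ≤ a * b := mul_nonneg ha.nonneg hb.nonneg
  calc _ ≤ ∑ i ∈ Finset.range (k + 1), (k.choose i : ℝ) * ‖iteratedFDeriv ℝ i f v‖ *
        ‖iteratedFDeriv ℝ (k - i) g v‖ :=
        norm_iteratedFDeriv_smul_le hf hg v (by exact_mod_cast le_top)
    _ ≤ ∑ i ∈ Finset.range (k + 1), (k.choose i : ℝ) * (a * b) := by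
        refine Finset.sum_le_sum fun i hi => ?_
        rw [mul_assoc]
        have hi' : i < k + 1 := Finset.mem_range.1 hi
        gcongr
        · exact ha.nonneg
        · exact ha i (by omega)
        · exact hb (k - i) (by omega)
    _ = 2 ^ k * (a * b) := by
        rw [← Finset.sum_mul]
        congr 1
        exact_mod_cast Nat.sum_range_choose k
    _ ≤ 2 ^ K * (a * b) := by
        gcongr
        norm_num

lemma JetLe.add {K : ℕ} {f g : V → E} {a b : ℝ} {v : V}
    (hf : ContDiff ℝ ∞ f) (hg : ContDiff ℝ ∞ g) (ha : JetLe K f a v) (hb : JetLe K g b v) :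
    JetLe K (fun y => f y + g y) (a + b) v := by
  intro k hk
  have : iteratedFDeriv ℝ k (fun y => f y + g y) v
      = iteratedFDeriv ℝ k f v + iteratedFDeriv ℝ k g v :=
    iteratedFDeriv_add_apply (hf.contDiffAt.of_le (by exact_mod_cast le_top))
      (hg.contDiffAt.of_le (by exact_mod_cast le_top))
  rw [this]
  exact (norm_add_le _ _).trans (add_le_add (ha k hk) (hb k hk))

lemma JetLe.const (K : ℕ) (c : E) (v : V) : JetLe K (fun _ => c) ‖c‖ v := by
  intro k hk
  rcases Nat.eq_zero_or_pos k with rfl | h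
  · simp
  · rw [iteratedFDeriv_const_of_ne (by omega)]
    simp

lemma JetLe.sum {ι : Type*} {K : ℕ} {f : ι → V → E} {a : ι → ℝ} {v : V} (s : Finset ι)
    (hf : ∀ i ∈ s, ContDiff ℝ ∞ (f i)) (ha : ∀ i ∈ s, JetLe K (f i) (a i) v) :
    JetLe K (fun y => ∑ i ∈ s, f i y) (∑ i ∈ s, a i) v := by
  induction s using Finset.induction_on with
  | empty => simpa using JetLe.const K (0 : E) v
  | insert i s hi ih =>
    simp only [Finset.sum_insert hi]
    refine JetLe.add (hf i (by simp)) (ContDiff.sum fun j hj => hf j (by simp [hj]))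
      (ha i (by simp)) (ih (fun j hj => hf j (by simp [hj])) (fun j hj => ha j (by simp [hj])))

lemma JetLe.clm_comp {K : ℕ} {g : V → E} {b : ℝ} {v : V} (L : E →L[ℝ] F')
    (hg : ContDiff ℝ ∞ g) (hb : JetLe K g b v) : JetLe K (fun y => L (g y)) (‖L‖ * b) v := by
  intro k hk
  refine (L.norm_iteratedFDeriv_comp_left (n := k) (N := ∞) hg.contDiffAt
    (by exact_mod_cast le_top)).trans ?_
  gcongr
  exact hb k hk

lemma JetLe.fderiv {K : ℕ} {G : V → E} {m : ℝ} {v : V} (h : JetLe (K + 1) G m v) :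
    JetLe K (fderiv ℝ G) m v := by
  intro k hk
  rw [norm_iteratedFDeriv_fderiv]
  exact h (k + 1) (by omega)

lemma JetLe.fderiv_apply {K : ℕ} {G : V → E} {m : ℝ} {v w : V} (hG : ContDiff ℝ ∞ G)
    (hw : ‖w‖ ≤ 1) (h : JetLe (K + 1) G m v) : JetLe K (fun y => _root_.fderiv ℝ G y w) m v := by
  intro k hk
  have hG' : ContDiff ℝ ∞ (_root_.fderiv ℝ G) := hG.fderiv_right (by exact_mod_cast le_rfl)
  refine (norm_iteratedFDeriv_clm_apply_const (N := ∞) hG'.contDiffAt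
    (by exact_mod_cast le_top)).trans ?_
  calc _ ≤ 1 * ‖iteratedFDeriv ℝ k (_root_.fderiv ℝ G) v‖ := by gcongr
    _ ≤ m := by rw [one_mul]; exact h.fderiv k hk

lemma JetLe.succ {K : ℕ} {G : V → E} {m : ℝ} {v : V} (h0 : ‖G v‖ ≤ m)
    (h : JetLe K (_root_.fderiv ℝ G) m v) : JetLe (K + 1) G m v := by
  intro k hk
  rcases k with _ | k
  · simpa using h0
  · rw [← norm_iteratedFDeriv_fderiv]
    exact h k (by omega)

lemma JetLe.neg {K : ℕ} {G : V → E} {m : ℝ} {v : V} (h : JetLe K G m v) :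
    JetLe K (fun y => - G y) m v := by
  intro k hk
  have : iteratedFDeriv ℝ k (fun y => - G y) v = - iteratedFDeriv ℝ k G v :=
    iteratedFDeriv_neg_apply
  rw [this, norm_neg]
  exact h k hk

/-- The jet of `1 / Q` has size `1 / Q` as soon as the jet of `Q` has size `Q`. -/
lemma JetLe.inv (K : ℕ) {C : ℝ} (_hC : 0 ≤ C) : ∃ C' : ℝ, 0 ≤ C' ∧ ∀ (Q : V → ℝ) (v : V),
    ContDiff ℝ ∞ Q → (∀ y, 0 < Q y) → JetLe K Q (C * Q v) v →
      JetLe K (fun y => (Q y)⁻¹) (C' * (Q v)⁻¹) v := by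
  induction K with
  | zero =>
    refine ⟨1, zero_le_one, fun Q v hQ hpos h k hk => ?_⟩
    obtain rfl : k = 0 := by omega
    simp [abs_of_pos (hpos v)]
  | succ K ih =>
    obtain ⟨C', hC', H⟩ := ih
    refine ⟨max 1 (2 ^ K * (2 ^ K * (C' * C') * C)), by positivity, fun Q v hQ hpos h => ?_⟩
    have hQv := hpos v
    have hinv : ContDiff ℝ ∞ (fun y => (Q y)⁻¹) := hQ.inv fun y => (hpos y).ne'
    have h1 := H Q v hQ hpos (h.mono (Nat.le_succ K) le_rfl)
    have h2 : JetLe K (fun y => (Q y)⁻¹ * (Q y)⁻¹) _ v := JetLe.smul hinv hinv h1 h1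
    have h3 := (JetLe.smul (hinv.mul hinv) (hQ.fderiv_right (by exact_mod_cast le_rfl)) h2
      h.fderiv).neg
    have hfd : (fun y => -(((Q y)⁻¹ * (Q y)⁻¹) • _root_.fderiv ℝ Q y))
        = _root_.fderiv ℝ (fun y => (Q y)⁻¹) := by
      funext y
      have := (hasDerivAt_inv (hpos y).ne').comp_hasFDerivAt y
        (hQ.differentiable (by simp) y).hasFDerivAt
      have h4 := this.fderiv
      rw [Function.comp_def] at h4
      rw [h4, ← neg_smul]
      congr 1
      rw [pow_two, mul_inv]
    rw [hfd] at h3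
    refine JetLe.succ ?_ (h3.mono le_rfl ?_)
    · rw [Real.norm_of_nonneg (inv_nonneg.2 hQv.le)]
      have : 0 < (Q v)⁻¹ := inv_pos.2 hQv
      nlinarith [le_max_left 1 (2 ^ K * (2 ^ K * (C' * C') * C))]
    · refine le_trans (le_of_eq ?_) (mul_le_mul_of_nonneg_right (le_max_right _ _)
        (inv_nonneg.2 hQv.le))
      field_simp

end Jets

/-! ### Repeated integration by parts -/

section IBP
variable {n : ℕ}

/-- The `i`-th partial derivative. -/
def pd {E : Type*} [NormedAddCommGroup E] [NormedSpace ℝ E] (i : Fin n) (G : (Fin n → ℝ) → E)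
    (y : Fin n → ℝ) : E := fderiv ℝ G y (Pi.single i 1)

lemma pd_contDiff {E : Type*} [NormedAddCommGroup E] [NormedSpace ℝ E] (i : Fin n)
    {G : (Fin n → ℝ) → E} (hG : ContDiff ℝ ∞ G) : ContDiff ℝ ∞ (pd i G) :=
  (hG.fderiv_right (m := ∞) (by exact_mod_cast le_rfl)).clm_apply contDiff_const

lemma pd_hasCompactSupport {E : Type*} [NormedAddCommGroup E] [NormedSpace ℝ E] (i : Fin n)
    {G : (Fin n → ℝ) → E} (hG : HasCompactSupport G) : HasCompactSupport (pd i G) :=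
  hG.fderiv_apply ℝ (Pi.single i 1)

/-- `1 + |∇F|²`. -/
def gradSq (F : (Fin n → ℝ) → ℝ) (y : Fin n → ℝ) : ℝ := 1 + ∑ i, pd i F y * pd i F y

lemma gradSq_pos (F : (Fin n → ℝ) → ℝ) (y : Fin n → ℝ) : 0 < gradSq F y := by
  have : 0 ≤ ∑ i, pd i F y * pd i F y := Finset.sum_nonneg fun i _ => mul_self_nonneg _
  unfold gradSq; linarith

lemma gradSq_contDiff {F : (Fin n → ℝ) → ℝ} (hF : ContDiff ℝ ∞ F) : ContDiff ℝ ∞ (gradSq F) :=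
  contDiff_const.add (ContDiff.sum fun i _ => (pd_contDiff i hF).mul (pd_contDiff i hF))

/-- The vector field `∇F / (1 + |∇F|²)`. -/
def vfield (F : (Fin n → ℝ) → ℝ) (i : Fin n) (y : Fin n → ℝ) : ℝ := pd i F y * (gradSq F y)⁻¹

/-- The transpose of the operator `(1 + |∇F|²)⁻¹ (1 - i ∇F · ∇)`, which fixes `exp (i F)`. -/
def ibpOp (F : (Fin n → ℝ) → ℝ) (G : (Fin n → ℝ) → ℂ) (y : Fin n → ℝ) : ℂ :=
  (gradSq F y)⁻¹ • G y + I * ∑ i, pd i (fun z => vfield F i z • G z) y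

lemma vfield_contDiff {F : (Fin n → ℝ) → ℝ} (hF : ContDiff ℝ ∞ F) (i : Fin n) :
    ContDiff ℝ ∞ (vfield F i) :=
  (pd_contDiff i hF).mul ((gradSq_contDiff hF).inv fun y => (gradSq_pos F y).ne')

lemma ibpOp_contDiff {F : (Fin n → ℝ) → ℝ} {G : (Fin n → ℝ) → ℂ} (hF : ContDiff ℝ ∞ F)
    (hG : ContDiff ℝ ∞ G) : ContDiff ℝ ∞ (ibpOp F G) := by
  refine ContDiff.add (((gradSq_contDiff hF).inv fun y => (gradSq_pos F y).ne').smul hG) ?_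
  exact contDiff_const.mul (ContDiff.sum fun i _ => pd_contDiff i ((vfield_contDiff hF i).smul hG))

lemma ibpOp_hasCompactSupport {F : (Fin n → ℝ) → ℝ} {G : (Fin n → ℝ) → ℂ}
    (hG : HasCompactSupport G) : HasCompactSupport (ibpOp F G) := by
  refine HasCompactSupport.intro hG fun x hx => ?_
  have h0 : G x = 0 := image_eq_zero_of_notMem_tsupport hx
  have h1 : ∀ i, pd i (fun z => vfield F i z • G z) x = 0 := by
    intro i
    have : (fun z => vfield F i z • G z) =ᶠ[𝓝 x] fun _ => 0 := by
      filter_upwards [notMem_tsupport_iff_eventuallyEq.1 hx] with z hz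
      simp [hz]
    unfold pd
    rw [this.fderiv_eq]
    simp
  simp only [ibpOp, h0, h1]
  simp

lemma expI_contDiff {F : (Fin n → ℝ) → ℝ} (hF : ContDiff ℝ ∞ F) :
    ContDiff ℝ ∞ (fun y => Complex.exp (I * (F y : ℂ))) :=
  (contDiff_const.mul (Complex.ofRealCLM.contDiff.comp hF)).cexp

lemma pd_expI {F : (Fin n → ℝ) → ℝ} (hF : ContDiff ℝ ∞ F) (i : Fin n) (y : Fin n → ℝ) :
    fderiv ℝ (fun y => Complex.exp (I * (F y : ℂ))) y (Pi.single i 1)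
      = I * pd i F y * Complex.exp (I * (F y : ℂ)) := by
  have h1 : HasFDerivAt F (fderiv ℝ F y) y := (hF.differentiable (by simp) y).hasFDerivAt
  have h2 : HasFDerivAt (fun y => (F y : ℂ)) (Complex.ofRealCLM.comp (fderiv ℝ F y)) y :=
    Complex.ofRealCLM.hasFDerivAt.comp y h1
  have h3 := ((h2.const_mul I).cexp).fderiv
  rw [h3]
  simp [pd]
  ring

lemma integral_expI_pd {F : (Fin n → ℝ) → ℝ} {W : (Fin n → ℝ) → ℂ} (hF : ContDiff ℝ ∞ F)
    (hW : ContDiff ℝ ∞ W) (hWc : HasCompactSupport W) (i : Fin n) :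
    ∫ y, Complex.exp (I * (F y : ℂ)) * pd i W y
      = - ∫ y, I * pd i F y * Complex.exp (I * (F y : ℂ)) * W y := by
  have hE := expI_contDiff hF
  simp only [← pd_expI hF]
  refine integral_mul_fderiv_eq_neg_fderiv_mul_of_integrable (μ := volume)
      (f := fun y => Complex.exp (I * (F y : ℂ))) (g := W)
      (v := Pi.single i 1) ?_ ?_ ?_ (fun x _ => hE.differentiable (by simp) x)
      (fun x _ => hW.differentiable (by simp) x)
  · exact (((pd_contDiff i hE).continuous).mul hW.continuous).integrable_of_hasCompactSupport
      hWc.mul_left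
  · exact (hE.continuous.mul (pd_contDiff i hW).continuous).integrable_of_hasCompactSupport
      (pd_hasCompactSupport i hWc).mul_left
  · exact (hE.continuous.mul hW.continuous).integrable_of_hasCompactSupport hWc.mul_left

/-- The pointwise identity `L (exp (i F)) = exp (i F)` behind the integration by parts. -/
lemma expI_identity (F : (Fin n → ℝ) → ℝ) (y : Fin n → ℝ) (g : ℂ) :
    Complex.exp (I * (F y : ℂ)) * ((gradSq F y)⁻¹ • g) +
      ∑ i, (-I) * (I * pd i F y * Complex.exp (I * (F y : ℂ)) * (vfield F i y • g))
      = Complex.exp (I * (F y : ℂ)) * g := by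
  have hq : (gradSq F y : ℂ) ≠ 0 := by exact_mod_cast (gradSq_pos F y).ne'
  generalize hE : Complex.exp (I * (F y : ℂ)) = E
  have e1 : ∀ i, (-I) * (I * pd i F y * E * (vfield F i y • g))
      = (pd i F y * pd i F y : ℂ) * (E * (gradSq F y : ℂ)⁻¹ * g) := by
    intro i
    simp only [vfield, Complex.real_smul]
    push_cast
    linear_combination (-(pd i F y * pd i F y : ℂ) *
      (E * (gradSq F y : ℂ)⁻¹ * g)) * I_mul_I
  rw [Finset.sum_congr rfl fun i _ => e1 i, ← Finset.sum_mul, Complex.real_smul]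
  have e2 : (∑ i, (pd i F y * pd i F y : ℂ)) = gradSq F y - 1 := by
    simp [gradSq]
  rw [e2]
  push_cast
  field_simp
  ring

/-- One integration by parts moves the operator fixing `exp (i F)` onto the amplitude. -/
lemma integral_ibpOp {F : (Fin n → ℝ) → ℝ} {G : (Fin n → ℝ) → ℂ} (hF : ContDiff ℝ ∞ F)
    (hG : ContDiff ℝ ∞ G) (hGc : HasCompactSupport G) :
    ∫ y, Complex.exp (I * (F y : ℂ)) * G y = ∫ y, Complex.exp (I * (F y : ℂ)) * ibpOp F G y := by
  have hE := expI_contDiff hF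
  have hW : ∀ i, ContDiff ℝ ∞ (fun z => vfield F i z • G z) := fun i =>
    (vfield_contDiff hF i).smul hG
  have hWc : ∀ i, HasCompactSupport (fun z => vfield F i z • G z) := fun i =>
    hGc.smul_left (f := vfield F i)
  have hqc : Continuous fun y => (gradSq F y)⁻¹ :=
    ((gradSq_contDiff hF).inv fun y => (gradSq_pos F y).ne').continuous
  have hI1 : Integrable (fun y => Complex.exp (I * (F y : ℂ)) * ((gradSq F y)⁻¹ • G y)) := by
    refine (hE.continuous.mul (hqc.smul hG.continuous)).integrable_of_hasCompactSupport ?_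
    exact (hGc.smul_left (f := fun y => (gradSq F y)⁻¹)).mul_left
  have hI2 : ∀ i, Integrable (fun y => Complex.exp (I * (F y : ℂ)) *
      pd i (fun z => vfield F i z • G z) y) := fun i =>
    (hE.continuous.mul (pd_contDiff i (hW i)).continuous).integrable_of_hasCompactSupport
        ((pd_hasCompactSupport i (hWc i)).mul_left)
  have hI3 : ∀ i, Integrable (fun y => I * pd i F y * Complex.exp (I * (F y : ℂ)) *
      (vfield F i y • G y)) := by
    intro i
    refine Continuous.integrable_of_hasCompactSupport ?_ ((hWc i).mul_left)
    exact ((continuous_const.mul (Complex.continuous_ofReal.comp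
      (pd_contDiff i hF).continuous)).mul hE.continuous).mul (hW i).continuous
  have key : ∀ i, I * ∫ y, Complex.exp (I * (F y : ℂ)) * pd i (fun z => vfield F i z • G z) y
      = ∫ y, (-I) * (I * pd i F y * Complex.exp (I * (F y : ℂ)) * (vfield F i y • G y)) := by
    intro i
    rw [integral_expI_pd hF (hW i) (hWc i) i, integral_const_mul]
    ring
  have hsplit : ∀ y, Complex.exp (I * (F y : ℂ)) * ibpOp F G y =
      Complex.exp (I * (F y : ℂ)) * ((gradSq F y)⁻¹ • G y) +
        ∑ i, I * (Complex.exp (I * (F y : ℂ)) * pd i (fun z => vfield F i z • G z) y) := by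
    intro y
    simp only [ibpOp, mul_add, Finset.mul_sum]
    congr 1
    exact Finset.sum_congr rfl fun i _ => by ring
  simp only [hsplit]
  rw [integral_add hI1 (integrable_finsetSum _ fun i _ => (hI2 i).const_mul I),
    integral_finsetSum _ fun i _ => (hI2 i).const_mul I]
  simp only [integral_const_mul I, key]
  rw [← integral_finsetSum _ fun i _ => (hI3 i).const_mul (-I),
    ← integral_add hI1 (integrable_finsetSum _ fun i _ => (hI3 i).const_mul (-I))]
  congr 1
  funext y
  exact (expI_identity F y (G y)).symm

/-- One integration by parts gains a factor `1 / (1 + M)`. -/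
lemma ibpOp_jet (n K : ℕ) {C c : ℝ} (hC : 0 ≤ C) (hc : 0 < c) : ∃ C' : ℝ, 0 ≤ C' ∧
    ∀ (F : (Fin n → ℝ) → ℝ) (G : (Fin n → ℝ) → ℂ) (v : Fin n → ℝ) (M μ : ℝ),
      ContDiff ℝ ∞ F → ContDiff ℝ ∞ G → 0 ≤ M →
      (μ ≠ 0 → (∀ i, JetLe (K + 1) (pd i F) (C * M) v) ∧
        c * M ^ 2 ≤ ∑ i, pd i F v * pd i F v) →
      JetLe (K + 1) G μ v → JetLe K (ibpOp F G) (C' * (μ / (1 + M))) v := by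
  set C1 : ℝ := 1 + n * (2 ^ (K + 1) * C ^ 2 / c) with hC1
  have hC1n : 0 ≤ C1 := by positivity
  obtain ⟨C2, hC2, hinv⟩ := JetLe.inv (V := Fin n → ℝ) (K + 1) hC1n
  set c2 : ℝ := 2 * (1 + 1 / c) with hc2
  have hc2p : 0 < c2 := by positivity
  set A1 : ℝ := 2 ^ (K + 1) * (C2 * c2) with hA1
  set A2 : ℝ := 2 ^ (K + 1) * (2 ^ (K + 1) * (C * (C2 * c2))) with hA2
  refine ⟨A1 + n * A2, by positivity, fun F G v M μ hF hG hM hyp hjet => ?_⟩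
  have hq := (gradSq_contDiff hF).inv fun y => (gradSq_pos F y).ne'
  -- generic bookkeeping from bounds on the two scalar coefficients
  have main : ∀ p q : ℝ, JetLe (K + 1) (fun y => (gradSq F y)⁻¹) p v →
      (∀ i, JetLe (K + 1) (vfield F i) q v) →
      JetLe K (ibpOp F G) (2 ^ (K + 1) * (p * μ) + n * (2 ^ (K + 1) * (q * μ))) v := by
    intro p q hp hq'
    have h1 := JetLe.smul hq hG hp hjet
    have h2 : ∀ i, JetLe K (pd i (fun z => vfield F i z • G z)) (2 ^ (K + 1) * (q * μ)) v := by
      intro i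
      refine JetLe.fderiv_apply ((vfield_contDiff hF i).smul hG) ?_
        (JetLe.smul (vfield_contDiff hF i) hG (hq' i) hjet)
      simp [Pi.norm_single]
    have hpd : ∀ i, ContDiff ℝ ∞ (pd i (fun z => vfield F i z • G z)) := fun i =>
      pd_contDiff i ((vfield_contDiff hF i).smul hG)
    have h3 := JetLe.sum Finset.univ (fun i _ => hpd i) (fun i _ => h2 i)
    have h4 := h3.clm_comp (ContinuousLinearMap.mul ℝ ℂ I) (ContDiff.sum fun i _ => hpd i)
    have h5 := JetLe.add (hq.smul hG)
      ((ContinuousLinearMap.mul ℝ ℂ I).contDiff.comp (ContDiff.sum fun i _ => hpd i))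
      (h1.mono (Nat.le_succ K) le_rfl) h4
    refine h5.mono le_rfl ?_
    have : ‖ContinuousLinearMap.mul ℝ ℂ I‖ ≤ 1 := by
      refine (ContinuousLinearMap.opNorm_mul_apply_le ℝ ℂ I).trans (by simp)
    simp only [Finset.sum_const, Finset.card_univ, Fintype.card_fin, nsmul_eq_mul]
    have hnn : 0 ≤ (n : ℝ) * (2 ^ (K + 1) * (q * μ)) := by
      rcases Nat.eq_zero_or_pos n with rfl | hn
      · simp
      · have := (h2 ⟨0, hn⟩).nonneg
        positivity
    nlinarith
  by_cases hμ : μ = 0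
  · subst hμ
    obtain ⟨p, hp⟩ := JetLe.exists (K + 1) (fun y => (gradSq F y)⁻¹) v
    choose q hq' using fun i => JetLe.exists (K + 1) (vfield F i) v
    have := main p (∑ i, q i) hp (fun i => (hq' i).mono le_rfl
      (Finset.single_le_sum (fun j _ => (hq' j).nonneg) (Finset.mem_univ i)))
    simpa using this
  · obtain ⟨hj, hlow⟩ := hyp hμ
    have hμ0 : 0 ≤ μ := hjet.nonneg
    have hQlow : 1 + c * M ^ 2 ≤ gradSq F v := by unfold gradSq; linarith
    have hQpos := gradSq_pos F v
    have hQjet : JetLe (K + 1) (gradSq F) (C1 * gradSq F v) v := by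
      have h1 : ∀ i, JetLe (K + 1) (fun y => pd i F y * pd i F y)
          (2 ^ (K + 1) * ((C * M) * (C * M))) v := fun i =>
        JetLe.smul (pd_contDiff i hF) (pd_contDiff i hF) (hj i) (hj i)
      have h2 := JetLe.add contDiff_const (ContDiff.sum fun i _ =>
        (pd_contDiff i hF).mul (pd_contDiff i hF)) (JetLe.const (K + 1) (1 : ℝ) v)
        (JetLe.sum Finset.univ (fun i _ => (pd_contDiff i hF).mul (pd_contDiff i hF))
          (fun i _ => h1 i))
      refine h2.mono le_rfl ?_
      simp only [Finset.sum_const, Finset.card_univ, Fintype.card_fin, nsmul_eq_mul, norm_one]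
      have h3 : C1 * (1 + c * M ^ 2) ≤ C1 * gradSq F v := by gcongr
      refine le_trans ?_ h3
      have e : C1 * (1 + c * M ^ 2) = 1 + n * (2 ^ (K + 1) * (C * M * (C * M)))
          + c * M ^ 2 + n * (2 ^ (K + 1) * C ^ 2 / c) := by
        rw [hC1]; field_simp; ring
      rw [e]
      have : 0 ≤ c * M ^ 2 := by positivity
      have : 0 ≤ n * (2 ^ (K + 1) * C ^ 2 / c) := by positivity
      linarith
    have hI := hinv (gradSq F) v (gradSq_contDiff hF) (gradSq_pos F) hQjet
    have hrat : (1 + M) * (1 + M) * (gradSq F v)⁻¹ ≤ c2 := by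
      rw [← div_eq_mul_inv, div_le_iff₀ hQpos]
      calc (1 + M) * (1 + M) ≤ c2 * (1 + c * M ^ 2) := by
            have : c2 * (1 + c * M ^ 2) = 2 + 2 * M ^ 2 + (2 / c + 2 * c * M ^ 2) := by
              rw [hc2]; field_simp; ring
            rw [this]
            have : 0 ≤ 2 / c + 2 * c * M ^ 2 := by positivity
            nlinarith [sq_nonneg (1 - M)]
        _ ≤ _ := by gcongr
    have hi0 : 0 < (gradSq F v)⁻¹ := inv_pos.2 hQpos
    have hM1 : 0 < 1 + M := by linarith
    have hp : JetLe (K + 1) (fun y => (gradSq F y)⁻¹) (C2 * c2 / (1 + M)) v := by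
      refine hI.mono le_rfl ?_
      rw [mul_div_assoc]
      gcongr
      rw [le_div_iff₀ hM1]
      nlinarith [mul_pos hM1 hi0, mul_nonneg hM (mul_pos hM1 hi0).le]
    have hq' : ∀ i, JetLe (K + 1) (vfield F i) (2 ^ (K + 1) * (C * (C2 * c2)) / (1 + M)) v := by
      intro i
      refine (JetLe.smul (pd_contDiff i hF) hq (hj i) hI).mono le_rfl ?_
      rw [mul_div_assoc]
      gcongr
      rw [le_div_iff₀ hM1]
      have : M * (gradSq F v)⁻¹ * (1 + M) ≤ c2 := by
        nlinarith [mul_pos hM1 hi0]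
      calc C * M * (C2 * (gradSq F v)⁻¹) * (1 + M)
          = C * (C2 * (M * (gradSq F v)⁻¹ * (1 + M))) := by ring
        _ ≤ C * (C2 * c2) := by gcongr
    refine (main _ _ hp hq').mono le_rfl (le_of_eq ?_)
    rw [hA1, hA2]
    field_simp

/-- `N` integrations by parts gain a factor `1 / (1 + M) ^ N`. -/
lemma ibp_iterate (n N : ℕ) {C c : ℝ} (hC : 0 ≤ C) (hc : 0 < c) : ∃ C' : ℝ, 0 ≤ C' ∧
    ∀ (F : (Fin n → ℝ) → ℝ) (G : (Fin n → ℝ) → ℂ) (M μ : (Fin n → ℝ) → ℝ),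
      ContDiff ℝ ∞ F → ContDiff ℝ ∞ G → HasCompactSupport G → (∀ v, 0 ≤ M v) →
      (∀ v, μ v ≠ 0 → (∀ i, JetLe N (pd i F) (C * M v) v) ∧
        c * M v ^ 2 ≤ ∑ i, pd i F v * pd i F v) →
      (∀ v, JetLe N G (μ v) v) →
      ∃ H : (Fin n → ℝ) → ℂ,
        ∫ y, Complex.exp (I * (F y : ℂ)) * G y = ∫ y, Complex.exp (I * (F y : ℂ)) * H y ∧
        ∀ v, ‖H v‖ ≤ C' * (μ v / (1 + M v) ^ N) := by
  induction N with
  | zero =>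
    refine ⟨1, zero_le_one, fun F G M μ hF hG hGc hM hyp hj => ⟨G, rfl, fun v => ?_⟩⟩
    simpa using (hj v).norm_le
  | succ N ih =>
    obtain ⟨C1, hC1, h1⟩ := ih
    obtain ⟨C2, hC2, h2⟩ := ibpOp_jet n N hC hc
    refine ⟨C1 * C2, by positivity, fun F G M μ hF hG hGc hM hyp hj => ?_⟩
    obtain ⟨H, hH1, hH2⟩ := h1 F (ibpOp F G) M (fun v => C2 * (μ v / (1 + M v))) hF
      (ibpOp_contDiff hF hG) (ibpOp_hasCompactSupport hGc) hM
      (fun v hv => by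
        have hμ : μ v ≠ 0 := by
          intro h0; simp [h0] at hv
        exact ⟨fun i => ((hyp v hμ).1 i).mono (Nat.le_succ N) le_rfl, (hyp v hμ).2⟩)
      (fun v => h2 F G v (M v) (μ v) hF hG (hM v) (hyp v) (hj v))
    refine ⟨H, (integral_ibpOp hF hG hGc).trans hH1, fun v => (hH2 v).trans (le_of_eq ?_)⟩
    have : 0 < 1 + M v := by linarith [hM v]
    field_simp
    ring

end IBP

open scoped ContDiff

/-! ### Oscillatory integrals with exponential weight -/

section Comp
variable {V W E : Type*} [NormedAddCommGroup V] [NormedSpace ℝ V]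
  [NormedAddCommGroup W] [NormedSpace ℝ W]
  [NormedAddCommGroup E] [NormedSpace ℝ E]

lemma JetLe.comp_affine {K : ℕ} {g : W → E} {m : ℝ} (L : V →L[ℝ] W) (c : W) {v : V}
    (hg : ContDiff ℝ ∞ g) (h : JetLe K g m (L v + c)) :
    JetLe K (fun y => g (L y + c)) (m * max 1 ‖L‖ ^ K) v := by
  intro k hk
  have hg' : ContDiff ℝ ∞ (fun z => g (z + c)) := hg.comp (contDiff_id.add contDiff_const)
  have h1 := L.iteratedFDeriv_comp_right (f := fun z => g (z + c)) (n := ∞) hg' v (i := k)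
    (by exact_mod_cast le_top)
  have h2 : (fun y => g (L y + c)) = (fun z => g (z + c)) ∘ L := rfl
  rw [h2, h1]
  refine (ContinuousMultilinearMap.norm_compContinuousLinearMap_le _ _).trans ?_
  rw [iteratedFDeriv_comp_add_right]
  simp only [Finset.prod_const, Finset.card_univ, Fintype.card_fin]
  have h3 : ‖L‖ ^ k ≤ max 1 ‖L‖ ^ K :=
    (pow_le_pow_left₀ (norm_nonneg _) (le_max_right _ _) k).trans
      (pow_le_pow_right₀ (le_max_left _ _) hk)
  exact mul_le_mul (h k hk) h3 (by positivity) h.nonneg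

lemma JetLe.of_eventually_zero {K : ℕ} {g : V → E} {v : V} (h : g =ᶠ[𝓝 v] fun _ => 0) :
    JetLe K g 0 v := by
  intro k hk
  have h1 := (h.iteratedFDeriv ℝ k).eq_of_nhds
  rw [h1]
  simp only [iteratedFDeriv_fun_zero]
  simp

lemma JetLe.congr {K : ℕ} {g g' : V → E} {m : ℝ} {v : V} (h : g =ᶠ[𝓝 v] g')
    (hg : JetLe K g' m v) : JetLe K g m v := by
  intro k hk
  rw [(h.iteratedFDeriv ℝ k).eq_of_nhds]
  exact hg k hk

lemma JetLe.exp (K : ℕ) (L : V →L[ℝ] ℝ) (c : ℝ) (v : V) :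
    JetLe K (fun y => Real.exp (L y + c)) (Real.exp (L v + c) * max 1 ‖L‖ ^ K) v := by
  refine JetLe.comp_affine L c Real.contDiff_exp fun k hk => ?_
  rw [norm_iteratedFDeriv_eq_norm_iteratedDeriv, iteratedDeriv_eq_iterate, Real.iter_deriv_exp]
  simp

/-- A compactly supported smooth function has bounded jets. -/
lemma JetLe.of_compact (K : ℕ) {g : V → E} (hg : ContDiff ℝ ∞ g) (hc : HasCompactSupport g) :
    ∃ C, 0 ≤ C ∧ ∀ v, JetLe K g C v := by
  have h : ∀ k : ℕ, ∃ C, ∀ v, ‖iteratedFDeriv ℝ k g v‖ ≤ C := fun k =>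
    (hg.continuous_iteratedFDeriv (m := k) (by exact_mod_cast le_top)).bounded_above_of_compact_support
      (hc.iteratedFDeriv k)
  choose C hC using h
  refine ⟨∑ k ∈ Finset.range (K + 1), |C k|, by positivity, fun v k hk => ?_⟩
  exact ((hC k v).trans (le_abs_self _)).trans (Finset.single_le_sum (f := fun k => |C k|)
    (fun _ _ => abs_nonneg _) (Finset.mem_range.2 (by omega)))

end Comp

section Osc
variable {n : ℕ}

/-- The linear form `y ↦ ∑ i, b i * y i`. -/
def lin (b : Fin n → ℝ) : (Fin n → ℝ) →L[ℝ] ℝ :=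
  ∑ i, b i • ContinuousLinearMap.proj (R := ℝ) (φ := fun _ : Fin n => ℝ) i

lemma lin_apply (b y : Fin n → ℝ) : lin b y = ∑ i, b i * y i := by
  simp [lin]

/-- The density `exp (y₁ + ⋯ + yₙ)` of Lebesgue measure in logarithmic coordinates. -/
def wt (y : Fin n → ℝ) : ℝ := Real.exp (∑ i, y i)

lemma wt_pos (y : Fin n → ℝ) : 0 < wt y := Real.exp_pos _

lemma wt_eq : (wt : (Fin n → ℝ) → ℝ) = fun y => Real.exp (lin (fun _ => 1) y + 0) := by
  funext y; simp [wt, lin_apply]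

lemma wt_contDiff : ContDiff ℝ ∞ (wt : (Fin n → ℝ) → ℝ) := by
  rw [wt_eq]
  exact Real.contDiff_exp.comp ((lin _).contDiff.add contDiff_const)

/-- The oscillatory integral with phase `F` and amplitude `Ψ`. -/
def osc (F : (Fin n → ℝ) → ℝ) (Ψ : (Fin n → ℝ) → ℂ) : ℂ :=
  ∫ y, Complex.exp (I * (F y : ℂ)) * (wt y • Ψ y)

/-- A fixed bump function equal to `1` on the unit ball. -/
def bump0 (n : ℕ) : ContDiffBump (0 : Fin n → ℝ) := ⟨1, 2, zero_lt_one, one_lt_two⟩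

/-- A smooth cutoff equal to `1` on the ball of radius `R`. -/
def cut (R : ℝ) (y : Fin n → ℝ) : ℝ := bump0 n (R⁻¹ • y)

lemma cut_contDiff (R : ℝ) : ContDiff ℝ ∞ (cut R : (Fin n → ℝ) → ℝ) :=
  (bump0 n).contDiff.comp (contDiff_id.const_smul R⁻¹)

lemma cut_nonneg (R : ℝ) (y : Fin n → ℝ) : 0 ≤ cut R y := (bump0 n).nonneg

lemma cut_le_one (R : ℝ) (y : Fin n → ℝ) : cut R y ≤ 1 := (bump0 n).le_one

lemma cut_eq_one {R : ℝ} (hR : 0 < R) {y : Fin n → ℝ} (hy : ‖y‖ ≤ R) : cut R y = 1 := by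
  refine (bump0 n).one_of_mem_closedBall ?_
  simp only [Metric.mem_closedBall, dist_zero_right, norm_smul, norm_inv, Real.norm_eq_abs,
    abs_of_pos hR, bump0]
  rw [inv_mul_le_iff₀ hR]; linarith

lemma cut_hasCompactSupport {R : ℝ} (hR : 0 < R) :
    HasCompactSupport (cut R : (Fin n → ℝ) → ℝ) := by
  refine HasCompactSupport.intro (isCompact_closedBall (0 : Fin n → ℝ) (2 * R)) fun y hy => ?_
  refine (bump0 n).zero_of_le_dist ?_
  simp only [Metric.mem_closedBall, dist_zero_right, not_le] at hy
  simp only [dist_zero_right, norm_smul, norm_inv, Real.norm_eq_abs, abs_of_pos hR, bump0]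
  rw [← div_eq_inv_mul, le_div_iff₀ hR]
  exact hy.le

lemma cut_jet (n K : ℕ) : ∃ C, 0 ≤ C ∧ ∀ R : ℝ, 1 ≤ R → ∀ v : Fin n → ℝ, JetLe K (cut R) C v := by
  obtain ⟨C, hC, h⟩ := JetLe.of_compact K (bump0 n).contDiff (bump0 n).hasCompactSupport
  refine ⟨C, hC, fun R hR v => ?_⟩
  have h1 := JetLe.comp_affine (K := K) (g := bump0 n) (R⁻¹ • ContinuousLinearMap.id ℝ (Fin n → ℝ))
    0 (v := v) (bump0 n).contDiff (h _)
  have e : (fun y : Fin n → ℝ => bump0 n ((R⁻¹ • ContinuousLinearMap.id ℝ (Fin n → ℝ)) y + 0))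
      = cut R := by
    funext y; simp [cut]
  rw [e] at h1
  refine h1.mono le_rfl ?_
  have h2 : ‖R⁻¹ • ContinuousLinearMap.id ℝ (Fin n → ℝ)‖ ≤ 1 := by
    rw [norm_smul, norm_inv, Real.norm_eq_abs, abs_of_pos (by linarith)]
    have := ContinuousLinearMap.norm_id_le (𝕜 := ℝ) (E := Fin n → ℝ)
    have h3 : R⁻¹ ≤ 1 := inv_le_one_of_one_le₀ hR
    have h4 : 0 < R⁻¹ := by positivity
    nlinarith [norm_nonneg (ContinuousLinearMap.id ℝ (Fin n → ℝ))]
  rw [max_eq_left h2]; simp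

lemma cut_tendsto (y : Fin n → ℝ) : Tendsto (fun R => cut R y) atTop (𝓝 1) := by
  refine tendsto_const_nhds.congr' ?_
  filter_upwards [eventually_ge_atTop (max 1 ‖y‖)] with R hR
  exact (cut_eq_one (by linarith [le_max_left 1 ‖y‖]) ((le_max_right _ _).trans hR)).symm

/-- The integrable majorant left after integrating by parts: `n * N` integrations leave a power
`(1 + M) ^ (-n * N)`, and `M` dominates each of the `n` exponentials. -/
def majorant (b : Fin n → Fin n → ℝ) (N : ℕ) (y : Fin n → ℝ) : ℝ :=
  wt y * ∏ j, ((1 + Real.exp (lin (b j) y)) ^ N)⁻¹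

lemma majorant_nonneg (b : Fin n → Fin n → ℝ) (N : ℕ) (y : Fin n → ℝ) : 0 ≤ majorant b N y := by
  have := wt_pos y
  unfold majorant; positivity

/-- Phase/amplitude pairs for which integration by parts can be performed with uniform constants.
The function `M` measures the size of the phase: its gradient is at least of size `M` on the
support of the amplitude, and none of its derivatives exceeds this order of magnitude. -/
structure Adm (b : Fin n → Fin n → ℝ) (N : ℕ) (C c : ℝ) (F : (Fin n → ℝ) → ℝ)
    (Ψ : (Fin n → ℝ) → ℂ) (M : (Fin n → ℝ) → ℝ) : Prop where
  smoothF : ContDiff ℝ ∞ F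
  smoothΨ : ContDiff ℝ ∞ Ψ
  int : Integrable (fun y => wt y • Ψ y)
  M_nonneg : ∀ v, 0 ≤ M v
  M_ge : ∀ v j, Real.exp (lin (b j) v) ≤ M v
  jetF : ∀ v i, JetLe N (pd i F) (C * M v) v
  jetΨ : ∀ v, JetLe N Ψ C v
  lower : ∀ v ∈ tsupport Ψ, c * M v ^ 2 ≤ ∑ i, pd i F v * pd i F v

lemma expI_norm (x : ℝ) : ‖Complex.exp (I * (x : ℂ))‖ = 1 := by
  rw [mul_comm]; exact Complex.norm_exp_ofReal_mul_I x

/-- The part of an admissible oscillatory integral lying outside a large ball is controlled by the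
tail of the majorant. -/
lemma osc_tail_bound (b : Fin n → Fin n → ℝ) (N : ℕ) {C c : ℝ} (hC : 0 ≤ C) (hc : 0 < c)
    (hD : Integrable (majorant b N)) : ∃ C', 0 ≤ C' ∧ ∀ R : ℝ, 1 ≤ R →
      ∀ F Ψ M, Adm b (n * N) C c F Ψ M →
        ‖osc F Ψ - osc F (fun y => cut R y • Ψ y)‖ ≤
          C' * ∫ y in {y | R ≤ ‖y‖}, majorant b N y := by
  obtain ⟨C1, hC1, hcut⟩ := cut_jet n (n * N)
  obtain ⟨C2, hC2, hibp⟩ := ibp_iterate n (n * N) hC hc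
  set K := n * N with hK
  set A : ℝ := max 1 ‖lin (fun _ : Fin n => (1 : ℝ))‖ ^ K with hA
  have hA0 : 0 ≤ A := by positivity
  set B : ℝ := 2 ^ K * (A * (2 ^ K * ((C1 + C1) * C))) with hB
  have hB0 : 0 ≤ B := by positivity
  refine ⟨C2 * B, by positivity, fun R hR F Ψ M adm => ?_⟩
  have hRm : MeasurableSet {y : Fin n → ℝ | R ≤ ‖y‖} :=
    measurableSet_le measurable_const measurable_norm
  -- the bound for the part between radii `R` and `R'`
  have step : ∀ R' : ℝ, R ≤ R' → ‖osc F (fun y => (cut R' y - cut R y) • Ψ y)‖ ≤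
      C2 * B * ∫ y in {y | R ≤ ‖y‖}, majorant b N y := by
    intro R' hRR'
    have hsc : ContDiff ℝ ∞ (fun y : Fin n → ℝ => cut R' y - cut R y) :=
      (cut_contDiff R').sub (cut_contDiff R)
    have hs2 := hsc.smul adm.smoothΨ
    have hs3 := wt_contDiff.smul hs2
    set μ : (Fin n → ℝ) → ℝ := fun v => if v ∈ tsupport Ψ ∧ R ≤ ‖v‖ then B * wt v else 0 with hμ
    refine Exists.elim (hibp F (fun y => wt y • ((cut R' y - cut R y) • Ψ y)) M μ
      adm.smoothF hs3 ?_ adm.M_nonneg ?_ ?_) ?_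
    · have h1 : HasCompactSupport (fun y : Fin n → ℝ => cut R' y - cut R y) :=
        (cut_hasCompactSupport (by linarith)).sub (cut_hasCompactSupport (by linarith))
      exact (h1.smul_right (f' := Ψ)).smul_left (f := wt)
    · intro v hv
      have hv' : v ∈ tsupport Ψ ∧ R ≤ ‖v‖ := by
        by_contra h; exact hv (by simp only [hμ, if_neg h])
      exact ⟨adm.jetF v, adm.lower v hv'.1⟩
    · intro v
      by_cases hv : v ∈ tsupport Ψ ∧ R ≤ ‖v‖
      · have h1 : JetLe K (fun y : Fin n → ℝ => cut R' y - cut R y) (C1 + C1) v := by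
          simp only [sub_eq_add_neg]
          exact JetLe.add (cut_contDiff R') (cut_contDiff R).neg
            (hcut R' (by linarith) v) (hcut R hR v).neg
        have h2 : JetLe K wt (wt v * A) v := by
          have := JetLe.exp K (lin (fun _ : Fin n => (1 : ℝ))) 0 v
          rw [wt_eq]
          exact this
        have h3 := JetLe.smul wt_contDiff hs2 h2 (JetLe.smul hsc adm.smoothΨ h1 (adm.jetΨ v))
        refine h3.mono le_rfl (le_of_eq ?_)
        simp only [hμ, if_pos hv, hB]
        ring
      · simp only [hμ, if_neg hv]
        refine JetLe.of_eventually_zero ?_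
        rcases not_and_or.1 hv with h | h
        · filter_upwards [notMem_tsupport_iff_eventuallyEq.1 h] with z hz
          simp [hz]
        · have : ∀ᶠ z in 𝓝 v, ‖z‖ < R :=
            continuous_norm.continuousAt.eventually_lt continuousAt_const (not_le.1 h)
          filter_upwards [this] with z hz
          rw [cut_eq_one (by linarith) hz.le, cut_eq_one (by linarith) (hz.le.trans hRR')]
          simp
    · rintro H ⟨hH1, hH2⟩
      rw [osc, hH1, ← integral_indicator hRm, ← integral_const_mul]
      refine norm_integral_le_of_norm_le ((hD.indicator hRm).const_mul _)
        (Eventually.of_forall fun v => ?_)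
      rw [norm_mul, expI_norm, one_mul]
      refine (hH2 v).trans ?_
      by_cases hv : v ∈ tsupport Ψ ∧ R ≤ ‖v‖
      · have hv' : v ∈ {y : Fin n → ℝ | R ≤ ‖y‖} := hv.2
        rw [Set.indicator_of_mem hv', mul_assoc]
        refine mul_le_mul_of_nonneg_left ?_ hC2
        simp only [hμ, if_pos hv, majorant]
        rw [div_eq_mul_inv, mul_assoc]
        have hw := wt_pos v
        refine mul_le_mul_of_nonneg_left (mul_le_mul_of_nonneg_left ?_ hw.le) hB0
        rw [Finset.prod_inv_distrib]
        refine inv_anti₀ (by positivity) ?_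
        rw [hK, mul_comm n N, pow_mul]
        calc ∏ j : Fin n, (1 + Real.exp (lin (b j) v)) ^ N
            ≤ ∏ j : Fin n, (1 + M v) ^ N := by
              refine Finset.prod_le_prod (fun _ _ => by positivity) fun j _ => ?_
              have := adm.M_ge v j
              gcongr
          _ = _ := by simp
      · simp only [hμ, if_neg hv, zero_div, mul_zero]
        exact mul_nonneg (by positivity)
          (Set.indicator_nonneg (fun _ _ => majorant_nonneg _ _ _) _)
  -- let `R'` tend to infinity
  have hE := (expI_contDiff adm.smoothF).continuous
  have hbint : ∀ R₁ : ℝ, Integrable (fun y => Complex.exp (I * (F y : ℂ)) *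
      (wt y • (cut R₁ y • Ψ y))) := by
    intro R₁
    refine adm.int.norm.mono' ?_ (Eventually.of_forall fun y => ?_)
    · exact (hE.mul (wt_contDiff.continuous.smul
        ((cut_contDiff R₁).continuous.smul adm.smoothΨ.continuous))).aestronglyMeasurable
    · rw [norm_mul, expI_norm, one_mul, norm_smul, norm_smul, norm_smul]
      refine mul_le_mul_of_nonneg_left ?_ (norm_nonneg _)
      rw [Real.norm_of_nonneg (cut_nonneg _ _)]
      exact mul_le_of_le_one_left (norm_nonneg _) (cut_le_one _ _)
  have hlim : Tendsto (fun R' => osc F (fun y => (cut R' y - cut R y) • Ψ y)) atTop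
      (𝓝 (osc F Ψ - osc F (fun y => cut R y • Ψ y))) := by
    have e : ∀ R', osc F (fun y => (cut R' y - cut R y) • Ψ y)
        = osc F (fun y => cut R' y • Ψ y) - osc F (fun y => cut R y • Ψ y) := by
      intro R'
      simp only [osc]
      rw [← integral_sub (hbint R') (hbint R)]
      congr 1; funext y
      rw [sub_smul, smul_sub, mul_sub]
    simp only [e]
    refine Tendsto.sub_const ?_ _
    refine tendsto_integral_filter_of_dominated_convergence (fun y => ‖wt y • Ψ y‖)
      (Eventually.of_forall fun R₁ => (hbint R₁).aestronglyMeasurable)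
      (Eventually.of_forall fun R₁ => Eventually.of_forall fun y => ?_) adm.int.norm
      (Eventually.of_forall fun y => ?_)
    · rw [norm_mul, expI_norm, one_mul, norm_smul, norm_smul, norm_smul]
      refine mul_le_mul_of_nonneg_left ?_ (norm_nonneg _)
      rw [Real.norm_of_nonneg (cut_nonneg _ _)]
      exact mul_le_of_le_one_left (norm_nonneg _) (cut_le_one _ _)
    · have := (((cut_tendsto y).smul_const (Ψ y)).const_smul (wt y)).const_mul
        (Complex.exp (I * (F y : ℂ)))
      simpa using this
  refine le_of_tendsto hlim.norm ?_
  filter_upwards [eventually_ge_atTop R] with R' hR'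
  exact step R' hR'

lemma majorant_tail (b : Fin n → Fin n → ℝ) (N : ℕ) (hD : Integrable (majorant b N)) :
    Tendsto (fun R : ℝ => ∫ y in {y | R ≤ ‖y‖}, majorant b N y) atTop (𝓝 0) := by
  have hRm : ∀ R : ℝ, MeasurableSet {y : Fin n → ℝ | R ≤ ‖y‖} := fun R =>
    measurableSet_le measurable_const measurable_norm
  simp only [← integral_indicator (hRm _)]
  have := tendsto_integral_filter_of_dominated_convergence (μ := volume) (l := atTop)
    (F := fun (R : ℝ) (y : Fin n → ℝ) => Set.indicator {y | R ≤ ‖y‖} (majorant b N) y)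
    (f := fun _ => 0) (majorant b N)
    (Eventually.of_forall fun R => (hD.indicator (hRm R)).aestronglyMeasurable)
    (Eventually.of_forall fun R => Eventually.of_forall fun y => ?_) hD
    (Eventually.of_forall fun y => ?_)
  · simpa using this
  · refine (norm_indicator_le_norm_self _ _).trans ?_
    rw [Real.norm_of_nonneg (majorant_nonneg b N y)]
  · refine tendsto_const_nhds.congr' ?_
    filter_upwards [eventually_gt_atTop ‖y‖] with R hR
    rw [Set.indicator_of_notMem]
    simpa using hR

/-- Along a uniformly admissible family whose phases and amplitudes converge pointwise, the
oscillatory integrals are close to the truncated limit integrals. -/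
lemma osc_near {ι : Type*} {l : Filter ι} [l.IsCountablyGenerated] (b : Fin n → Fin n → ℝ) (N : ℕ)
    {C c : ℝ} (hC : 0 ≤ C) (hc : 0 < c) (hD : Integrable (majorant b N))
    (F : ι → (Fin n → ℝ) → ℝ) (Ψ : ι → (Fin n → ℝ) → ℂ) (M : ι → (Fin n → ℝ) → ℝ)
    (hadm : ∀ᶠ i in l, Adm b (n * N) C c (F i) (Ψ i) (M i))
    (F₀ : (Fin n → ℝ) → ℝ) (κ : ℂ)
    (hF : ∀ y, Tendsto (fun i => F i y) l (𝓝 (F₀ y)))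
    (hΨ : ∀ y, Tendsto (fun i => Ψ i y) l (𝓝 κ)) {ε : ℝ} (hε : 0 < ε) :
    ∃ R₀ : ℝ, ∀ R ≥ R₀, ∀ᶠ i in l,
      ‖osc (F i) (Ψ i) - κ * osc F₀ (fun y => (cut R y : ℂ))‖ < ε := by
  obtain ⟨C', hC', htail⟩ := osc_tail_bound b N hC hc hD
  have h1 : ∀ᶠ R : ℝ in atTop, C' * ∫ y in {y | R ≤ ‖y‖}, majorant b N y < ε / 2 := by
    have := (majorant_tail b N hD).const_mul C'
    rw [mul_zero] at this
    exact this.eventually_lt_const (by linarith)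
  obtain ⟨R₁, hR₁⟩ := eventually_atTop.1 h1
  refine ⟨max 1 R₁, fun R hR => ?_⟩
  have hR1 : 1 ≤ R := (le_max_left _ _).trans hR
  have hlim : Tendsto (fun i => osc (F i) (fun y => cut R y • Ψ i y)) l
      (𝓝 (κ * osc F₀ (fun y => (cut R y : ℂ)))) := by
    have e : κ * osc F₀ (fun y => (cut R y : ℂ))
        = ∫ y, Complex.exp (I * (F₀ y : ℂ)) * (wt y • (cut R y • κ)) := by
      rw [osc, ← integral_const_mul]
      congr 1; funext y
      simp only [Complex.real_smul]; ring
    rw [e]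
    refine tendsto_integral_filter_of_dominated_convergence (fun y => wt y * (cut R y * C))
      ?_ ?_ ?_ (Eventually.of_forall fun y => ?_)
    · filter_upwards [hadm] with i hi
      exact ((expI_contDiff hi.smoothF).continuous.mul (wt_contDiff.continuous.smul
        ((cut_contDiff R).continuous.smul hi.smoothΨ.continuous))).aestronglyMeasurable
    · filter_upwards [hadm] with i hi
      refine Eventually.of_forall fun y => ?_
      rw [norm_mul, expI_norm, one_mul, norm_smul, norm_smul, Real.norm_of_nonneg (wt_pos y).le,
        Real.norm_of_nonneg (cut_nonneg R y)]
      have := (hi.jetΨ y).norm_le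
      have := cut_nonneg R y
      have := wt_pos y
      gcongr
    · refine Continuous.integrable_of_hasCompactSupport ?_ ?_
      · exact wt_contDiff.continuous.mul ((cut_contDiff R).continuous.mul continuous_const)
      · exact ((cut_hasCompactSupport (by linarith)).mul_right).mul_left
    · refine Tendsto.mul ?_ (((hΨ y).const_smul _).const_smul _)
      refine (Complex.continuous_exp.tendsto _).comp ?_
      exact ((Complex.continuous_ofReal.tendsto _).comp (hF y)).const_mul I
  have h2 := (Metric.tendsto_nhds.1 hlim) (ε / 2) (by linarith)
  filter_upwards [hadm, h2] with i hi hi2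
  rw [dist_eq_norm] at hi2
  have h3 := htail R hR1 _ _ _ hi
  have h4 := hR₁ R ((le_max_right _ _).trans hR)
  calc _ = ‖(osc (F i) (Ψ i) - osc (F i) (fun y => cut R y • Ψ i y)) +
        (osc (F i) (fun y => cut R y • Ψ i y) - κ * osc F₀ (fun y => (cut R y : ℂ)))‖ := by
        congr 1; ring
    _ ≤ _ := norm_add_le _ _
    _ < ε := by linarith

/-- The limit of oscillatory integrals along a uniformly admissible family is determined by the
limit phase alone, and may be computed along any other family with the same limit phase. -/
lemma osc_tendsto {ι ι' : Type*} {l : Filter ι} [l.IsCountablyGenerated] {l' : Filter ι'}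
    [l'.IsCountablyGenerated] [l'.NeBot] (b : Fin n → Fin n → ℝ) (N : ℕ)
    {C c : ℝ} (hC : 0 ≤ C) (hc : 0 < c) {C' c' : ℝ} (hC' : 0 ≤ C') (hc' : 0 < c')
    (hD : Integrable (majorant b N))
    (F : ι → (Fin n → ℝ) → ℝ) (Ψ : ι → (Fin n → ℝ) → ℂ) (M : ι → (Fin n → ℝ) → ℝ)
    (hadm : ∀ᶠ i in l, Adm b (n * N) C c (F i) (Ψ i) (M i))
    (F' : ι' → (Fin n → ℝ) → ℝ) (Ψ' : ι' → (Fin n → ℝ) → ℂ) (M' : ι' → (Fin n → ℝ) → ℝ)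
    (hadm' : ∀ᶠ i in l', Adm b (n * N) C' c' (F' i) (Ψ' i) (M' i))
    (F₀ : (Fin n → ℝ) → ℝ) (κ : ℂ)
    (hF : ∀ y, Tendsto (fun i => F i y) l (𝓝 (F₀ y)))
    (hΨ : ∀ y, Tendsto (fun i => Ψ i y) l (𝓝 κ))
    (hF' : ∀ y, Tendsto (fun i => F' i y) l' (𝓝 (F₀ y)))
    (hΨ' : ∀ y, Tendsto (fun i => Ψ' i y) l' (𝓝 1)) {J : ℂ}
    (hJ : Tendsto (fun i => osc (F' i) (Ψ' i)) l' (𝓝 J)) :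
    Tendsto (fun i => osc (F i) (Ψ i)) l (𝓝 (κ * J)) := by
  rw [Metric.tendsto_nhds]
  intro ε hε
  set δ : ℝ := ε / (2 * (‖κ‖ + 1)) with hδ
  have hκ : 0 < ‖κ‖ + 1 := by positivity
  have hδ0 : 0 < δ := by positivity
  obtain ⟨R₁, h1⟩ := osc_near b N hC hc hD F Ψ M hadm F₀ κ hF hΨ (half_pos hε)
  obtain ⟨R₂, h2⟩ := osc_near b N hC' hc' hD F' Ψ' M' hadm' F₀ 1 hF' hΨ' hδ0
  set R := max R₁ R₂
  have h3 : ‖J - osc F₀ (fun y => (cut R y : ℂ))‖ ≤ δ := by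
    have := (hJ.sub_const (osc F₀ (fun y => (cut R y : ℂ)))).norm
    refine le_of_tendsto this ?_
    filter_upwards [h2 R (le_max_right _ _)] with i hi
    rw [one_mul] at hi
    exact hi.le
  filter_upwards [h1 R (le_max_left _ _)] with i hi
  rw [dist_eq_norm]
  calc _ = ‖(osc (F i) (Ψ i) - κ * osc F₀ (fun y => (cut R y : ℂ))) -
        κ * (J - osc F₀ (fun y => (cut R y : ℂ)))‖ := by congr 1; ring
    _ ≤ ‖osc (F i) (Ψ i) - κ * osc F₀ (fun y => (cut R y : ℂ))‖ +
        ‖κ‖ * ‖J - osc F₀ (fun y => (cut R y : ℂ))‖ := by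
        refine (norm_sub_le _ _).trans ?_
        rw [norm_mul]
    _ < ε / 2 + (‖κ‖ + 1) * δ := by
        have : ‖κ‖ * ‖J - osc F₀ (fun y => (cut R y : ℂ))‖ ≤ (‖κ‖ + 1) * δ := by
          gcongr
          linarith
        linarith
    _ = ε := by rw [hδ]; field_simp; norm_num

end Osc

/-! ### Smoothness of power series and the monomial decomposition -/

open scoped ContDiff

section PowerSeries

variable {n : ℕ}

/-- The monomial `x ^ α`. -/
def mono (α : Fin n → ℕ) (x : Fin n → ℝ) : ℝ := ∏ i, x i ^ α i

/-- The total degree `|α|`. -/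
def deg (α : Fin n → ℕ) : ℕ := ∑ i, α i

lemma mono_contDiff (α : Fin n → ℕ) : ContDiff ℝ ∞ (mono α) :=
  contDiff_prod fun i _ => (contDiff_apply ℝ ℝ i).pow (α i)

lemma mono_add (α β : Fin n → ℕ) (x : Fin n → ℝ) : mono (α + β) x = mono α x * mono β x := by
  simp [mono, pow_add, Finset.prod_mul_distrib]

lemma mono_const (α : Fin n → ℕ) (r : ℝ) : mono α (fun _ => r) = r ^ deg α := by
  simp [mono, deg, Finset.prod_pow_eq_pow_sum]

lemma mono_abs_le (α : Fin n → ℕ) {x : Fin n → ℝ} {s : ℝ} (hx : ‖x‖ ≤ s) :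
    |mono α x| ≤ s ^ deg α := by
  rw [mono, Finset.abs_prod, deg, ← Finset.prod_pow_eq_pow_sum]
  refine Finset.prod_le_prod (fun _ _ => abs_nonneg _) fun i _ => ?_
  rw [abs_pow]
  exact pow_le_pow_left₀ (abs_nonneg _) ((norm_le_pi_norm x i).trans hx) _

lemma fderiv_mono (α : Fin n → ℕ) : fderiv ℝ (mono α) = fun x => ∑ i,
    ContinuousLinearMap.toSpanSingleton ℝ
      ((α i : ℝ) • (ContinuousLinearMap.proj i : (Fin n → ℝ) →L[ℝ] ℝ))
      (mono (α - Pi.single i 1) x) := by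
  funext x
  have h : ∀ i ∈ Finset.univ, HasFDerivAt (fun x : Fin n → ℝ => x i ^ α i)
      (((α i : ℝ) * x i ^ (α i - 1)) • (ContinuousLinearMap.proj i : (Fin n → ℝ) →L[ℝ] ℝ)) x := by
    intro i _
    have := (hasFDerivAt_apply (𝕜 := ℝ) i x).pow (α i)
    simpa [nsmul_eq_mul, smul_smul] using this
  have h2 := HasFDerivAt.finsetProd h
  change fderiv ℝ (fun x => ∏ i, x i ^ α i) x = _
  rw [h2.fderiv]
  refine Finset.sum_congr rfl fun i _ => ?_
  rw [ContinuousLinearMap.toSpanSingleton_apply, smul_smul, smul_smul, mono,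
    ← Finset.mul_prod_erase Finset.univ _ (Finset.mem_univ i)]
  have : ∏ j ∈ Finset.univ.erase i, x j ^ ((α - Pi.single i 1 : Fin n → ℕ) j)
      = ∏ j ∈ Finset.univ.erase i, x j ^ α j := by
    refine Finset.prod_congr rfl fun j hj => ?_
    rw [Pi.sub_apply, Pi.single_eq_of_ne (Finset.ne_of_mem_erase hj), Nat.sub_zero]
  rw [this]
  congr 1
  simp
  ring

lemma deg_sub_single {α : Fin n → ℕ} {i : Fin n} (h : α i ≠ 0) :
    deg (α - Pi.single i 1) + 1 = deg α := by
  have h1 : α - Pi.single i 1 + Pi.single i 1 = α := by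
    funext j
    by_cases hj : j = i
    · subst hj; simp; omega
    · simp [Pi.single_eq_of_ne hj]
  conv_rhs => rw [← h1]
  simp [deg, Finset.sum_add_distrib, -Pi.sub_apply]

/-- The jets of `x ^ α` grow polynomially in `|α|`, relative to the size of the monomial. -/
lemma mono_jet {s : ℝ} (hs : 0 < s) (hs1 : s ≤ 1) {x : Fin n → ℝ} (hx : ‖x‖ ≤ s) (K : ℕ) :
    ∀ α : Fin n → ℕ, JetLe K (mono α) (((deg α + 1) / s) ^ K * s ^ deg α) x := by
  induction K with
  | zero =>
    intro α k hk
    obtain rfl : k = 0 := by omega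
    rw [norm_iteratedFDeriv_zero, pow_zero, one_mul]
    exact mono_abs_le α hx
  | succ K ih =>
    intro α
    have h1 : (1 : ℝ) ≤ (deg α + 1) / s := by
      rw [le_div_iff₀ hs]
      have : (0 : ℝ) ≤ deg α := by positivity
      linarith
    refine JetLe.succ ?_ ?_
    · refine (mono_abs_le α hx).trans ?_
      exact le_mul_of_one_le_left (by positivity) (one_le_pow₀ h1)
    · rw [fderiv_mono]
      have h2 := JetLe.sum (K := K) (v := x) (Finset.univ : Finset (Fin n))
        (f := fun i x => ContinuousLinearMap.toSpanSingleton ℝ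
          ((α i : ℝ) • (ContinuousLinearMap.proj i : (Fin n → ℝ) →L[ℝ] ℝ))
          (mono (α - Pi.single i 1) x))
        (fun i _ => ContinuousLinearMap.contDiff _ |>.comp (mono_contDiff _))
        (fun i _ => JetLe.clm_comp _ (mono_contDiff _) (ih (α - Pi.single i 1)))
      refine h2.mono le_rfl ?_
      calc _ ≤ ∑ i, (α i : ℝ) * (((deg α + 1) / s) ^ K * (s ^ deg α / s)) := by
            refine Finset.sum_le_sum fun i _ => ?_
            rw [ContinuousLinearMap.norm_toSpanSingleton, norm_smul, Real.norm_natCast]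
            have hp : ‖(ContinuousLinearMap.proj i : (Fin n → ℝ) →L[ℝ] ℝ)‖ ≤ 1 :=
              ContinuousLinearMap.opNorm_le_bound _ zero_le_one fun y => by
                simpa using norm_le_pi_norm y i
            rw [mul_assoc]
            refine mul_le_mul_of_nonneg_left ?_ (by positivity)
            by_cases h : α i = 0
            · have : α - Pi.single i 1 = α := by
                funext j
                by_cases hj : j = i
                · subst hj; simp [h]
                · simp [Pi.single_eq_of_ne hj]
              rw [this]
              have h3 : s ^ deg α ≤ s ^ deg α / s := le_div_self (by positivity) hs hs1
              calc _ ≤ 1 * (((deg α + 1) / s) ^ K * (s ^ deg α)) := by gcongr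
                _ ≤ _ := by rw [one_mul]; gcongr
            · have h3 := deg_sub_single h
              have h4 : s ^ deg α / s = s ^ deg (α - Pi.single i 1) := by
                rw [← h3, pow_succ]; field_simp
              have h5 : ((deg (α - Pi.single i 1) : ℕ) : ℝ) ≤ deg α := by
                exact_mod_cast by omega
              rw [h4]
              calc _ ≤ 1 * (((deg α + 1) / s) ^ K * (s ^ deg (α - Pi.single i 1))) := by gcongr
                _ = _ := one_mul _
        _ = (deg α : ℝ) / s * ((deg α + 1) / s) ^ K * s ^ deg α := by
            rw [← Finset.sum_mul, deg]
            push_cast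
            ring
        _ ≤ ((deg α + 1) / s) * ((deg α + 1) / s) ^ K * s ^ deg α := by
            gcongr
            linarith
        _ = _ := by ring

/-- A power series that converges absolutely at `(r, …, r)`, multiplied termwise by a cutoff
supported well inside the polydisc, has a smooth sum. -/
lemma contDiff_series {b : (Fin n → ℕ) → ℝ} {r : ℝ} (hr : 0 < r) (hr1 : r ≤ 1)
    (hb : Summable fun α => |b α| * r ^ deg α) :
    ContDiff ℝ ∞ (fun x : Fin n → ℝ => ∑' α, cut (r / 4) x • (b α * mono α x)) := by
  have hs : 0 < r / 2 := by positivity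
  have key : ∀ K : ℕ, ∃ B : ℝ, 0 ≤ B ∧ ∀ (α : Fin n → ℕ) (x : Fin n → ℝ),
      JetLe K (fun x => cut (r / 4) x • (b α * mono α x)) (B * (|b α| * r ^ deg α)) x := by
    intro K
    obtain ⟨C, hC, hcut⟩ := JetLe.of_compact K (cut_contDiff (n := n) (r / 4))
      (cut_hasCompactSupport (by positivity))
    obtain ⟨B, hB⟩ : ∃ B : ℝ, ∀ d : ℕ, ((d : ℝ) + 1) ^ K * (1 / 2 : ℝ) ^ (d + 1) ≤ B := by
      have h1 := (tendsto_pow_const_mul_const_pow_of_abs_lt_one K (r := (1 / 2 : ℝ))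
        (by norm_num [abs_of_pos])).comp (tendsto_add_atTop_nat 1)
      obtain ⟨B, hB⟩ := h1.bddAbove_range
      refine ⟨B, fun d => ?_⟩
      have := hB ⟨d, rfl⟩
      simpa using this
    have hB0 : 0 ≤ B := le_trans (by positivity) (hB 0)
    refine ⟨2 ^ K * (C * (2 * B / (r / 2) ^ K)), by positivity, fun α x => ?_⟩
    by_cases hx : ‖x‖ ≤ r / 2
    · have h1 := JetLe.clm_comp (ContinuousLinearMap.mul ℝ ℝ (b α)) (mono_contDiff α)
        (mono_jet hs (by linarith) hx K α)
      have h2 := JetLe.smul (cut_contDiff (r / 4)) (contDiff_const.mul (mono_contDiff α))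
        (hcut x) h1
      refine h2.mono le_rfl ?_
      have h3 : ‖ContinuousLinearMap.mul ℝ ℝ (b α)‖ ≤ |b α| :=
        ContinuousLinearMap.opNorm_mul_apply_le ℝ ℝ (b α)
      have h4 := hB (deg α)
      have h5 : ((deg α + 1) / (r / 2)) ^ K * (r / 2) ^ deg α
          = 2 / (r / 2) ^ K * (((deg α : ℝ) + 1) ^ K * (1 / 2 : ℝ) ^ (deg α + 1)) * r ^ deg α := by
        rw [div_pow, div_pow r, pow_succ, one_div, inv_pow]
        field_simp
        rw [← mul_pow, div_mul_cancel₀ _ two_ne_zero]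
      calc _ ≤ 2 ^ K * (C * (|b α| * (2 / (r / 2) ^ K * B * r ^ deg α))) := by
            rw [h5]
            gcongr
        _ = _ := by ring
    · have h0 : JetLe K (fun x => cut (r / 4) x • (b α * mono α x)) 0 x := by
        refine JetLe.of_eventually_zero ?_
        have : ∀ᶠ z in 𝓝 x, r / 2 < ‖z‖ :=
          continuousAt_const.eventually_lt continuous_norm.continuousAt (not_le.1 hx)
        filter_upwards [this] with z hz
        have hz0 : cut (r / 4) z = 0 := by
          refine (bump0 n).zero_of_le_dist ?_
          have hr4 : 0 < r / 4 := by positivity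
          simp only [dist_zero_right, norm_smul, norm_inv, Real.norm_eq_abs, abs_of_pos hr4, bump0]
          rw [inv_mul_eq_div, le_div_iff₀ hr4]
          linarith
        simp [hz0]
      exact h0.mono le_rfl (by positivity)
  choose B hB0 hB using key
  refine contDiff_tsum (v := fun K α => B K * (|b α| * r ^ deg α)) (N := ⊤) ?_ ?_ ?_
  · intro α
    exact (cut_contDiff (r / 4)).smul (contDiff_const.mul (mono_contDiff α))
  · intro K _
    exact hb.mul_left _
  · intro K α x _
    exact hB K α x K le_rfl

/-- Near the origin, an analytic function is a finite sum `∑ x ^ g * h g x` over the minimal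
exponents `g` of its support, with `h g` smooth and `h g 0` the Taylor coefficient at `g`. -/
lemma exists_decomposition {f : (Fin n → ℝ) → ℝ} {a : (Fin n → ℕ) → ℝ}
    (hfa : ∀ᶠ x in 𝓝 (0 : Fin n → ℝ), HasSum (fun α => a α * ∏ i, x i ^ α i) (f x)) :
    ∃ (G : Finset (Fin n → ℕ)) (h : (Fin n → ℕ) → (Fin n → ℝ) → ℝ),
      (∀ g ∈ G, a g ≠ 0) ∧ (∀ α, a α ≠ 0 → ∃ g ∈ G, g ≤ α) ∧
      (∀ g ∈ G, ∀ α, a α ≠ 0 → α ≤ g → α = g) ∧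
      (∀ g ∈ G, ContDiff ℝ ∞ (h g) ∧ HasCompactSupport (h g) ∧ h g 0 = a g) ∧
      ∀ᶠ x in 𝓝 (0 : Fin n → ℝ), f x = ∑ g ∈ G, mono g x * h g x := by
  have hfin : {α : Fin n → ℕ | Minimal (fun α => a α ≠ 0) α}.Finite :=
    IsAntichain.finite_of_partiallyWellOrderedOn (setOfPred_minimal_antichain _)
      (Set.isPWO_of_wellQuasiOrderedLE _)
  set G := hfin.toFinset with hG
  have hGmem : ∀ g, g ∈ G ↔ Minimal (fun α => a α ≠ 0) g := fun g => by simp [hG]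
  have hcov : ∀ α, ∃ g, a α ≠ 0 → g ∈ G ∧ g ≤ α := by
    intro α
    by_cases h : a α = 0
    · exact ⟨α, fun h' => absurd h h'⟩
    · obtain ⟨g, h1, h2⟩ := exists_minimal_le_of_wellFoundedLT (fun α => a α ≠ 0) α h
      exact ⟨g, fun _ => ⟨(hGmem g).2 h2, h1⟩⟩
  choose ch hch using hcov
  have hmin : ∀ g ∈ G, ∀ α, a α ≠ 0 → α ≤ g → α = g := fun g hg α hα hle =>
    le_antisymm hle (((hGmem g).1 hg).2 hα hle)
  obtain ⟨δ, hδ, hball⟩ := Metric.eventually_nhds_iff.1 hfa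
  set r : ℝ := min 1 (δ / 2) with hrdef
  have hr : 0 < r := by positivity
  have hr1 : r ≤ 1 := min_le_left _ _
  have hrδ : r < δ := (min_le_right _ _).trans_lt (by linarith)
  have hsum : Summable fun α => |a α| * r ^ deg α := by
    have h1 := (hball (y := fun _ => r) (by
      rw [dist_zero_right]
      refine lt_of_le_of_lt ((pi_norm_le_iff_of_nonneg hr.le).2 fun i => ?_) hrδ
      rw [Real.norm_eq_abs, abs_of_pos hr])).summable.abs
    refine h1.congr fun α => ?_
    have := mono_const α r
    rw [mono] at this
    rw [this, abs_mul, abs_of_pos (pow_pos hr _)]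
  set b : (Fin n → ℕ) → (Fin n → ℕ) → ℝ := fun g β => if ch (g + β) = g then a (g + β) else 0
    with hb
  have hdeg : ∀ α β : Fin n → ℕ, deg (α + β) = deg α + deg β := fun α β => by
    simp [deg, Finset.sum_add_distrib]
  have hbsum : ∀ g, Summable fun β => |b g β| * r ^ deg β := by
    intro g
    have h1 : Summable fun β => (r ^ deg g)⁻¹ * (|a (g + β)| * r ^ deg (g + β)) :=
      (hsum.comp_injective (add_right_injective g)).mul_left _
    refine h1.of_nonneg_of_le (fun β => by positivity) fun β => ?_
    rw [hdeg, pow_add]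
    have : |b g β| ≤ |a (g + β)| := by
      simp only [hb]; split_ifs
      · exact le_rfl
      · simp
    calc |b g β| * r ^ deg β ≤ |a (g + β)| * r ^ deg β := by gcongr
      _ = _ := by field_simp
  refine ⟨G, fun g x => ∑' β, cut (r / 4) x • (b g β * mono β x), fun g hg => ((hGmem g).1 hg).1,
    fun α hα => ⟨ch α, hch α hα⟩, hmin, fun g hg => ⟨contDiff_series hr hr1 (hbsum g), ?_, ?_⟩, ?_⟩
  · refine HasCompactSupport.mono (cut_hasCompactSupport (n := n) (R := r / 4) (by positivity)) ?_
    intro x hx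
    rw [Function.mem_support] at hx ⊢
    contrapose! hx
    simp [hx]
  · have h0 : cut (r / 4) (0 : Fin n → ℝ) = 1 := cut_eq_one (by positivity) (by simp; positivity)
    have hag : a g ≠ 0 := ((hGmem g).1 hg).1
    have hcg : ch g = g := by
      obtain ⟨h1, h2⟩ := hch g hag
      exact hmin g hg _ ((hGmem _).1 h1).1 h2
    beta_reduce
    rw [tsum_eq_single 0]
    · simp [h0, hb, hcg, mono]
    · intro β hβ
      obtain ⟨i, hi⟩ : ∃ i, β i ≠ 0 := by
        by_contra! h; exact hβ (funext h)
      have : mono β (0 : Fin n → ℝ) = 0 :=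
        Finset.prod_eq_zero (Finset.mem_univ i) (by simp [hi])
      simp [this]
  · filter_upwards [hfa, Metric.closedBall_mem_nhds (0 : Fin n → ℝ) (ε := r / 4) (by positivity)]
      with x hx hxr
    have hcut : cut (r / 4) x = 1 := cut_eq_one (by positivity) (by simpa using hxr)
    simp only [hcut, one_smul]
    have hterm : ∀ g ∈ G, HasSum (fun α => if ch α = g then a α * mono α x else 0)
        (mono g x * ∑' β, b g β * mono β x) := by
      intro g hg
      have hs1 : Summable fun β => b g β * mono β x := by
        refine Summable.of_norm_bounded (hbsum g) fun β => ?_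
        rw [norm_mul, Real.norm_eq_abs, Real.norm_eq_abs]
        gcongr
        refine mono_abs_le β ?_
        have : ‖x‖ ≤ r / 4 := by simpa using hxr
        linarith
      have h1 := hs1.hasSum.mul_left (mono g x)
      have h2 : (fun β => mono g x * (b g β * mono β x))
          = (fun α => if ch α = g then a α * mono α x else 0) ∘ (fun β => g + β) := by
        funext β
        simp only [hb, Function.comp, mono_add]
        split_ifs <;> ring
      rw [h2] at h1
      refine ((add_right_injective g).hasSum_iff ?_).1 h1
      intro α hα
      by_contra hne
      have hcg : ch α = g := by
        by_contra h; simp [h] at hne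
      have haα : a α ≠ 0 := by
        intro h; simp [h] at hne
      refine hα ⟨α - g, ?_⟩
      have : g ≤ α := hcg ▸ (hch α haα).2
      exact add_tsub_cancel_of_le this
    have h3 := hasSum_sum hterm
    refine (hx.unique (h3.congr_fun ?_))
    intro α
    by_cases haα : a α = 0
    · simp [haα]
    · rw [Finset.sum_ite_eq, if_pos (hch α haα).1, mono]

end PowerSeries

/-! ### Logarithmic coordinates -/

open scoped ContDiff

section LogCoords

variable {n : ℕ}

/-- Shifted logarithmic coordinates on an orthant: `x i = β i * exp (y i + c i)`. -/
def expMap (β c y : Fin n → ℝ) : Fin n → ℝ := fun i => β i * Real.exp (y i + c i)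

/-- The logarithmic derivative `x i * ∂ψ/∂x i`. -/
def logd (i : Fin n) (ψ : (Fin n → ℝ) → ℝ) (x : Fin n → ℝ) : ℝ := x i * pd i ψ x

lemma logd_contDiff (i : Fin n) {ψ : (Fin n → ℝ) → ℝ} (hψ : ContDiff ℝ ∞ ψ) :
    ContDiff ℝ ∞ (logd i ψ) :=
  (contDiff_apply ℝ ℝ i).mul (pd_contDiff i hψ)

lemma logd_hasCompactSupport (i : Fin n) {ψ : (Fin n → ℝ) → ℝ} (hψ : HasCompactSupport ψ) :
    HasCompactSupport (logd i ψ) :=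
  (pd_hasCompactSupport i hψ).mul_left

lemma expMap_contDiff (β c : Fin n → ℝ) : ContDiff ℝ ∞ (expMap β c) :=
  contDiff_pi.2 fun i =>
    contDiff_const.mul (Real.contDiff_exp.comp ((contDiff_apply ℝ ℝ i).add contDiff_const))

lemma expMap_hasFDerivAt (β c y : Fin n → ℝ) : HasFDerivAt (expMap β c)
    (ContinuousLinearMap.pi fun i => expMap β c y i •
      (ContinuousLinearMap.proj i : (Fin n → ℝ) →L[ℝ] ℝ)) y := by
  refine hasFDerivAt_pi.2 fun i => ?_
  have := (((hasFDerivAt_apply (𝕜 := ℝ) i y).add_const (c i)).exp).const_mul (β i)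
  simpa [expMap, smul_smul] using this

lemma fderiv_comp_expMap {ψ : (Fin n → ℝ) → ℝ} (hψ : ContDiff ℝ ∞ ψ) (β c : Fin n → ℝ) :
    fderiv ℝ (fun y => ψ (expMap β c y)) = fun y => ∑ i,
      ContinuousLinearMap.toSpanSingleton ℝ
        (ContinuousLinearMap.proj i : (Fin n → ℝ) →L[ℝ] ℝ) (logd i ψ (expMap β c y)) := by
  funext y
  have h1 : HasFDerivAt ψ (fderiv ℝ ψ (expMap β c y)) (expMap β c y) :=
    (hψ.differentiable (by simp) _).hasFDerivAt
  have h2 := h1.comp y (expMap_hasFDerivAt β c y)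
  change fderiv ℝ (ψ ∘ expMap β c) y = _
  rw [h2.fderiv]
  ext v
  have h3 : (ContinuousLinearMap.pi fun i => expMap β c y i •
      (ContinuousLinearMap.proj i : (Fin n → ℝ) →L[ℝ] ℝ)) v
      = ∑ i, (expMap β c y i * v i) • Pi.single (M := fun _ => ℝ) i 1 := by
    rw [← pi_eq_sum_univ' (fun i => expMap β c y i * v i)]
    rfl
  rw [ContinuousLinearMap.comp_apply, h3, map_sum, _root_.sum_apply]
  refine Finset.sum_congr rfl fun i _ => ?_
  simp only [map_smul, smul_eq_mul, ContinuousLinearMap.toSpanSingleton_apply, logd, pd,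
    _root_.smul_apply, ContinuousLinearMap.proj_apply]
  ring

lemma pd_comp_expMap {ψ : (Fin n → ℝ) → ℝ} (hψ : ContDiff ℝ ∞ ψ) (β c : Fin n → ℝ) (i : Fin n)
    (y : Fin n → ℝ) : pd i (fun y => ψ (expMap β c y)) y = logd i ψ (expMap β c y) := by
  rw [pd, fderiv_comp_expMap hψ, _root_.sum_apply, Finset.sum_eq_single i]
  · simp [ContinuousLinearMap.toSpanSingleton_apply]
  · intro j _ hj
    simp [ContinuousLinearMap.toSpanSingleton_apply, hj]
  · simp

/-- A compactly supported function has bounded jets in logarithmic coordinates, uniformly in the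
shift and in the orthant: logarithmic derivatives preserve compact supports. -/
lemma jet_comp_expMap (K : ℕ) : ∀ {ψ : (Fin n → ℝ) → ℝ}, ContDiff ℝ ∞ ψ → HasCompactSupport ψ →
    ∃ C, 0 ≤ C ∧ ∀ β c y, JetLe K (fun y => ψ (expMap β c y)) C y := by
  have base : ∀ {ψ : (Fin n → ℝ) → ℝ}, ContDiff ℝ ∞ ψ → HasCompactSupport ψ →
      ∃ C, 0 ≤ C ∧ ∀ x, ‖ψ x‖ ≤ C := by
    intro ψ hψ hc
    obtain ⟨C, hC⟩ := hc.exists_bound_of_continuous hψ.continuous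
    exact ⟨C, (norm_nonneg _).trans (hC 0), hC⟩
  induction K with
  | zero =>
    intro ψ hψ hc
    obtain ⟨C, hC0, hC⟩ := base hψ hc
    refine ⟨C, hC0, fun β c y k hk => ?_⟩
    obtain rfl : k = 0 := by omega
    rw [norm_iteratedFDeriv_zero]
    exact hC _
  | succ K ih =>
    intro ψ hψ hc
    obtain ⟨C0, hC00, hC0⟩ := base hψ hc
    have h1 := fun i => ih (logd_contDiff i hψ) (logd_hasCompactSupport i hc)
    choose C hC hCb using h1
    set S : ℝ := ∑ i, ‖ContinuousLinearMap.toSpanSingleton ℝ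
      (ContinuousLinearMap.proj i : (Fin n → ℝ) →L[ℝ] ℝ)‖ * C i with hS
    refine ⟨max C0 S, le_max_of_le_left hC00, fun β c y => JetLe.succ ?_ ?_⟩
    · exact (hC0 _).trans (le_max_left _ _)
    · rw [fderiv_comp_expMap hψ]
      have hsm : ∀ i, ContDiff ℝ ∞ (fun y => logd i ψ (expMap β c y)) := fun i =>
        (logd_contDiff i hψ).comp (expMap_contDiff β c)
      exact (JetLe.sum (K := K) (v := y) (Finset.univ : Finset (Fin n))
        (f := fun i y => ContinuousLinearMap.toSpanSingleton ℝ
          (ContinuousLinearMap.proj i : (Fin n → ℝ) →L[ℝ] ℝ) (logd i ψ (expMap β c y)))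
        (fun i _ => ContinuousLinearMap.contDiff _ |>.comp (hsm i))
        (fun i _ => JetLe.clm_comp _ (hsm i) (hCb i β c y))).mono le_rfl (le_max_right _ _)

lemma mono_expMap (β c y : Fin n → ℝ) (g : Fin n → ℕ) : mono g (expMap β c y)
    = mono g β * Real.exp (lin (fun i => (g i : ℝ)) y + lin (fun i => (g i : ℝ)) c) := by
  simp only [mono, expMap, mul_pow, Finset.prod_mul_distrib, lin_apply]
  congr 1
  rw [← Finset.sum_add_distrib, Real.exp_sum]
  refine Finset.prod_congr rfl fun i _ => ?_
  rw [← Real.exp_nat_mul, mul_add]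

lemma abs_mono_sign {β : Fin n → ℝ} (hβ : ∀ i, |β i| = 1) (g : Fin n → ℕ) : |mono g β| = 1 := by
  simp [mono, Finset.abs_prod, abs_pow, hβ]

lemma abs_mono_expMap {β : Fin n → ℝ} (hβ : ∀ i, |β i| = 1) (c y : Fin n → ℝ) (g : Fin n → ℕ) :
    |mono g (expMap β c y)|
      = Real.exp (lin (fun i => (g i : ℝ)) y + lin (fun i => (g i : ℝ)) c) := by
  rw [mono_expMap, abs_mul, abs_mono_sign hβ, one_mul, Real.abs_exp]

/-- The function `t * f` in logarithmic coordinates has jets no larger than `t * ∑ |x ^ g|`. -/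
lemma phase_jet (K : ℕ) (G : Finset (Fin n → ℕ)) (h : (Fin n → ℕ) → (Fin n → ℝ) → ℝ)
    (hh : ∀ g ∈ G, ContDiff ℝ ∞ (h g) ∧ HasCompactSupport (h g)) :
    ∃ C, 0 ≤ C ∧ ∀ β c y (t : ℝ), (∀ i, |β i| = 1) → 0 ≤ t → ∀ i,
      JetLe K (pd i (fun y => t * ∑ g ∈ G, mono g (expMap β c y) * h g (expMap β c y)))
        (C * (t * ∑ g ∈ G, |mono g (expMap β c y)|)) y := by
  have h1 : ∀ g, ∃ C, 0 ≤ C ∧ (g ∈ G → ∀ β c y,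
      JetLe (K + 1) (fun y => h g (expMap β c y)) C y) := by
    intro g
    by_cases hg : g ∈ G
    · obtain ⟨C, hC, h'⟩ := jet_comp_expMap (K + 1) (hh g hg).1 (hh g hg).2
      exact ⟨C, hC, fun _ => h'⟩
    · exact ⟨0, le_rfl, fun h => absurd h hg⟩
  choose C hC hCb using h1
  set A : (Fin n → ℕ) → ℝ := fun g => max 1 ‖lin (fun i => (g i : ℝ))‖ ^ (K + 1) with hA
  have hA0 : ∀ g, 0 ≤ A g := fun g => by positivity
  set D : ℝ := ∑ g ∈ G, 2 ^ (K + 1) * (A g * C g) with hD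
  have hterm0 : ∀ g ∈ G, 0 ≤ 2 ^ (K + 1) * (A g * C g) := fun g _ =>
    mul_nonneg (by positivity) (mul_nonneg (hA0 g) (hC g))
  have hD0 : 0 ≤ D := Finset.sum_nonneg hterm0
  refine ⟨D, hD0, fun β c y t hβ ht i => ?_⟩
  have hsh : ∀ g ∈ G, ContDiff ℝ ∞ (fun y => h g (expMap β c y)) := fun g hg =>
    (hh g hg).1.comp (expMap_contDiff β c)
  have hsm : ∀ g, ContDiff ℝ ∞ (fun y => mono g (expMap β c y)) := fun g =>
    (mono_contDiff g).comp (expMap_contDiff β c)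
  have hjm : ∀ g, JetLe (K + 1) (fun y => mono g (expMap β c y))
      (|mono g (expMap β c y)| * A g) y := by
    intro g
    have h2 := JetLe.exp (K + 1) (lin (fun i => (g i : ℝ))) (lin (fun i => (g i : ℝ)) c) y
    have h3 := JetLe.clm_comp (ContinuousLinearMap.mul ℝ ℝ (mono g β))
      (g := fun y => Real.exp (lin (fun i => (g i : ℝ)) y + lin (fun i => (g i : ℝ)) c))
      (Real.contDiff_exp.comp ((lin _).contDiff.add contDiff_const)) h2
    have e : (fun y => mono g (expMap β c y)) = fun y => ContinuousLinearMap.mul ℝ ℝ (mono g β)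
        (Real.exp (lin (fun i => (g i : ℝ)) y + lin (fun i => (g i : ℝ)) c)) := by
      funext y; rw [mono_expMap]; rfl
    rw [e]
    refine h3.mono le_rfl ?_
    have h4 : ‖ContinuousLinearMap.mul ℝ ℝ (mono g β)‖ ≤ 1 :=
      (ContinuousLinearMap.opNorm_mul_apply_le ℝ ℝ (mono g β)).trans_eq (abs_mono_sign hβ g)
    rw [abs_mono_expMap hβ]
    exact mul_le_of_le_one_left (by positivity) h4
  have h5 := JetLe.sum (K := K + 1) (v := y) G
    (f := fun g y => mono g (expMap β c y) • h g (expMap β c y))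
    (fun g hg => (hsm g).smul (hsh g hg))
    (fun g hg => JetLe.smul (hsm g) (hsh g hg) (hjm g) (hCb g hg β c y))
  have hs6 : ContDiff ℝ ∞ (fun y => ∑ g ∈ G, mono g (expMap β c y) • h g (expMap β c y)) :=
    ContDiff.sum fun g hg => (hsm g).smul (hsh g hg)
  have h6 := JetLe.clm_comp (ContinuousLinearMap.mul ℝ ℝ t) hs6 h5
  have h7 := JetLe.fderiv_apply (w := Pi.single (M := fun _ => ℝ) i 1)
    ((ContinuousLinearMap.mul ℝ ℝ t).contDiff.comp hs6) (by simp [Pi.norm_single]) h6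
  refine h7.mono le_rfl ?_
  have h8 : ‖ContinuousLinearMap.mul ℝ ℝ t‖ ≤ t :=
    (ContinuousLinearMap.opNorm_mul_apply_le ℝ ℝ t).trans_eq (abs_of_nonneg ht)
  calc _ ≤ t * ∑ g ∈ G, 2 ^ (K + 1) * (|mono g (expMap β c y)| * A g * C g) := by
        refine mul_le_mul_of_nonneg_right h8 (Finset.sum_nonneg fun g _ => ?_)
        exact mul_nonneg (by positivity)
          (mul_nonneg (mul_nonneg (abs_nonneg _) (hA0 g)) (hC g))
    _ ≤ t * ∑ g ∈ G, D * |mono g (expMap β c y)| := by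
        refine mul_le_mul_of_nonneg_left (Finset.sum_le_sum fun g hg => ?_) ht
        have : 2 ^ (K + 1) * (A g * C g) ≤ D :=
          Finset.single_le_sum (f := fun g => 2 ^ (K + 1) * (A g * C g)) hterm0 hg
        calc _ = 2 ^ (K + 1) * (A g * C g) * |mono g (expMap β c y)| := by ring
          _ ≤ _ := by gcongr
    _ = _ := by rw [← Finset.mul_sum]; ring

end LogCoords

/-! ### Compact faces and the non-degeneracy estimate -/

open scoped ContDiff

section Faces

variable {n : ℕ}

/-- An exponent viewed as a real vector. -/
def toR (α : Fin n → ℕ) : Fin n → ℝ := fun i => (α i : ℝ)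

lemma toR_injective : Function.Injective (toR : (Fin n → ℕ) → Fin n → ℝ) := fun α β h => by
  funext i
  have := congrFun h i
  simpa [toR] using this

lemma dotR_add_smul (u y z : Fin n → ℝ) (p q : ℝ) :
    dotR u (p • y + q • z) = p * dotR u y + q * dotR u z := by
  simp only [dotR, Pi.add_apply, Pi.smul_apply, smul_eq_mul, Finset.mul_sum,
    ← Finset.sum_add_distrib]
  exact Finset.sum_congr rfl fun i _ => by ring

lemma dotR_le_of_le {u y z : Fin n → ℝ} (hu : ∀ i, 0 ≤ u i) (h : ∀ i, y i ≤ z i) :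
    dotR u y ≤ dotR u z :=
  Finset.sum_le_sum fun i _ => mul_le_mul_of_nonneg_left (h i) (hu i)

lemma eq_of_dotR_eq {u y z : Fin n → ℝ} (hu : ∀ i, 0 < u i) (h : ∀ i, y i ≤ z i)
    (he : dotR u z ≤ dotR u y) : y = z := by
  have h1 := (Finset.sum_eq_sum_iff_of_le fun i _ =>
    mul_le_mul_of_nonneg_left (h i) (hu i).le).1 (le_antisymm (dotR_le_of_le (fun i => (hu i).le) h) he)
  funext i
  exact mul_left_cancel₀ (hu i).ne' (h1 i (Finset.mem_univ i))

lemma toR_mem_newton {S : Set (Fin n → ℕ)} {α : Fin n → ℕ} (h : α ∈ S) :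
    toR α ∈ newtonPolyhedron S :=
  subset_convexHull _ _ ⟨α, h, fun _ => le_rfl⟩

/-- The exponents of `G` of weight `k` with respect to `u`. -/
def level (G : Finset (Fin n → ℕ)) (u : Fin n → ℝ) (k : ℝ) : Finset (Fin n → ℕ) :=
  G.filter fun g => dotR u (toR g) = k

/-- A weight that is `≥ k` on the generating exponents is `≥ k` on the Newton polyhedron; where it
equals `k`, only generators of weight `k` contribute. -/
lemma newton_weight {S : Set (Fin n → ℕ)} {G : Finset (Fin n → ℕ)}
    (hcov : ∀ α ∈ S, ∃ g ∈ G, g ≤ α) {u : Fin n → ℝ} (hu : ∀ i, 0 < u i) {k : ℝ}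
    (hk : ∀ g ∈ G, k ≤ dotR u (toR g)) {y : Fin n → ℝ} (hy : y ∈ newtonPolyhedron S) :
    k ≤ dotR u y ∧ (dotR u y = k → y ∈ convexHull ℝ (toR '' (level G u k : Set (Fin n → ℕ)))) := by
  set C := convexHull ℝ (toR '' (level G u k : Set (Fin n → ℕ))) with hC
  have hsub : newtonPolyhedron S ⊆ {y | k ≤ dotR u y ∧ (dotR u y = k → y ∈ C)} := by
    refine convexHull_min ?_ ?_
    · rintro x ⟨α, hα, hx⟩
      obtain ⟨g, hg, hgα⟩ := hcov α hα
      have hgx : ∀ i, toR g i ≤ x i := fun i =>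
        (by exact_mod_cast hgα i : (g i : ℝ) ≤ α i).trans (hx i)
      have h1 := dotR_le_of_le (fun i => (hu i).le) hgx
      refine ⟨(hk g hg).trans h1, fun he => ?_⟩
      have h2 : toR g = x := eq_of_dotR_eq hu hgx (he.le.trans (hk g hg))
      refine subset_convexHull _ _ ⟨g, ?_, h2⟩
      simp only [level, Finset.coe_filter, Set.mem_ofPred_eq]
      exact ⟨hg, by rw [h2, he]⟩
    · intro y hy z hz p q hp hq hpq
      simp only [Set.mem_ofPred_eq] at hy hz ⊢
      rw [dotR_add_smul]
      refine ⟨?_, fun he => ?_⟩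
      · have e1 : p * k + q * k = k := by rw [← add_mul, hpq, one_mul]
        linarith [mul_le_mul_of_nonneg_left hy.1 hp, mul_le_mul_of_nonneg_left hz.1 hq]
      · rcases hp.eq_or_lt with rfl | hp'
        · obtain rfl : q = 1 := by linarith
          simpa using hz.2 (by linarith)
        · rcases hq.eq_or_lt with rfl | hq'
          · obtain rfl : p = 1 := by linarith
            simpa using hy.2 (by linarith)
          · have e1 : p * k + q * k = k := by rw [← add_mul, hpq, one_mul]
            have h1 := mul_le_mul_of_nonneg_left hy.1 hp
            have h2 := mul_le_mul_of_nonneg_left hz.1 hq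
            have h3 : dotR u y = k := mul_left_cancel₀ hp'.ne' (by linarith)
            have h4 : dotR u z = k := mul_left_cancel₀ hq'.ne' (by linarith)
            exact convex_convexHull ℝ _ (hy.2 h3) (hz.2 h4) hp hq hpq
  exact hsub hy

/-- A positive weight cuts out the compact face spanned by the generators of least weight. -/
lemma traceFace_eq {S : Set (Fin n → ℕ)} {G : Finset (Fin n → ℕ)} (hGS : ∀ g ∈ G, g ∈ S)
    (hcov : ∀ α ∈ S, ∃ g ∈ G, g ≤ α) {u : Fin n → ℝ} (hu : ∀ i, 0 < u i) {k : ℝ}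
    (hk : ∀ g ∈ G, k ≤ dotR u (toR g)) (hne : (level G u k).Nonempty) :
    traceFace (newtonPolyhedron S) u
      = convexHull ℝ (toR '' (level G u k : Set (Fin n → ℕ))) ∧
    ∀ y, y ∈ traceFace (newtonPolyhedron S) u ↔ y ∈ newtonPolyhedron S ∧ dotR u y = k := by
  have h1 : ∀ y, y ∈ traceFace (newtonPolyhedron S) u ↔
      y ∈ newtonPolyhedron S ∧ dotR u y = k := by
    intro y
    obtain ⟨g, hg⟩ := hne
    rw [level, Finset.mem_filter] at hg
    constructor
    · rintro ⟨hy, hmin⟩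
      refine ⟨hy, le_antisymm ?_ (newton_weight hcov hu hk hy).1⟩
      exact (hmin _ (toR_mem_newton (hGS g hg.1))).trans_eq hg.2
    · rintro ⟨hy, he⟩
      exact ⟨hy, fun z hz => he.le.trans (newton_weight hcov hu hk hz).1⟩
  refine ⟨?_, h1⟩
  ext y
  rw [h1]
  constructor
  · rintro ⟨hy, he⟩
    exact (newton_weight hcov hu hk hy).2 he
  · intro hy
    have h2 : convexHull ℝ (toR '' (level G u k : Set (Fin n → ℕ))) ⊆
        {y | y ∈ newtonPolyhedron S ∧ dotR u y = k} := by
      refine convexHull_min ?_ ?_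
      · rintro _ ⟨g, hg, rfl⟩
        rw [Finset.mem_coe, level, Finset.mem_filter] at hg
        exact ⟨toR_mem_newton (hGS g hg.1), hg.2⟩
      · intro y hy z hz p q hp hq hpq
        refine ⟨convex_convexHull ℝ _ hy.1 hz.1 hp hq hpq, ?_⟩
        rw [dotR_add_smul, hy.2, hz.2, ← add_mul, hpq, one_mul]
    exact h2 hy

lemma mem_traceFace_iff {S : Set (Fin n → ℕ)} {G : Finset (Fin n → ℕ)} (hGS : ∀ g ∈ G, g ∈ S)
    (hcov : ∀ α ∈ S, ∃ g ∈ G, g ≤ α) {u : Fin n → ℝ} (hu : ∀ i, 0 < u i) {k : ℝ}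
    (hk : ∀ g ∈ G, k ≤ dotR u (toR g)) (hne : (level G u k).Nonempty) {α : Fin n → ℕ}
    (hα : α ∈ S) : toR α ∈ traceFace (newtonPolyhedron S) u ↔ α ∈ level G u k := by
  rw [(traceFace_eq hGS hcov hu hk hne).2]
  constructor
  · rintro ⟨-, he⟩
    obtain ⟨g, hg, hgα⟩ := hcov α hα
    have h2 : toR g = toR α := eq_of_dotR_eq hu
      (fun i => Nat.cast_le.2 (hgα i)) (he.le.trans (hk g hg))
    rw [← toR_injective h2, level, Finset.mem_filter]
    exact ⟨hg, by rw [h2, he]⟩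
  · intro h
    rw [level, Finset.mem_filter] at h
    exact ⟨toR_mem_newton hα, h.2⟩

lemma logd_mono (i : Fin n) (g : Fin n → ℕ) (x : Fin n → ℝ) :
    logd i (mono g) x = g i * mono g x := by
  rw [logd, pd, fderiv_mono, _root_.sum_apply, Finset.sum_eq_single i]
  · simp only [ContinuousLinearMap.toSpanSingleton_apply, _root_.smul_apply,
      ContinuousLinearMap.proj_apply, Pi.single_eq_same, smul_eq_mul]
    by_cases h : g i = 0
    · simp [h]
    · have h1 : mono g x = mono (g - Pi.single i 1) x * mono (Pi.single i 1) x := by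
        rw [← mono_add]
        congr 1
        funext j
        by_cases hj : j = i
        · subst hj; simp; omega
        · simp [Pi.single_eq_of_ne hj]
      have h2 : mono (Pi.single i 1) x = x i := by
        rw [mono, Finset.prod_eq_single i]
        · simp
        · intro j _ hj; simp [Pi.single_eq_of_ne hj]
        · simp
      rw [h1, h2]; ring
  · intro j _ hj
    simp [ContinuousLinearMap.toSpanSingleton_apply, hj]
  · simp

lemma pd_sum {ι : Type*} (s : Finset ι) {F : ι → (Fin n → ℝ) → ℝ}
    (hF : ∀ j ∈ s, ContDiff ℝ ∞ (F j)) (i : Fin n) (x : Fin n → ℝ) :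
    pd i (fun y => ∑ j ∈ s, F j y) x = ∑ j ∈ s, pd i (F j) x := by
  rw [pd, fderiv_fun_sum fun j hj => (hF j hj).differentiable (by simp) x, _root_.sum_apply]
  rfl

lemma pd_mul {p q : (Fin n → ℝ) → ℝ} (hp : ContDiff ℝ ∞ p) (hq : ContDiff ℝ ∞ q) (i : Fin n)
    (x : Fin n → ℝ) : pd i (fun y => p y * q y) x = p x * pd i q x + q x * pd i p x := by
  rw [pd, fderiv_fun_mul (hp.differentiable (by simp) x) (hq.differentiable (by simp) x)]
  rfl

/-- Logarithmic derivative of `∑ x ^ g * h g x`. -/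
lemma logd_decomposition {G : Finset (Fin n → ℕ)} {h : (Fin n → ℕ) → (Fin n → ℝ) → ℝ}
    (hh : ∀ g ∈ G, ContDiff ℝ ∞ (h g)) (i : Fin n) (x : Fin n → ℝ) :
    logd i (fun x => ∑ g ∈ G, mono g x * h g x) x
      = ∑ g ∈ G, mono g x * (g i * h g x + logd i (h g) x) := by
  rw [logd, pd_sum G (fun g hg => (mono_contDiff g).mul (hh g hg)), Finset.mul_sum]
  refine Finset.sum_congr rfl fun g hg => ?_
  rw [pd_mul (mono_contDiff g) (hh g hg)]
  have := logd_mono i g x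
  simp only [logd] at this ⊢
  linear_combination h g x * this

lemma facePoly_eq {S : Set (Fin n → ℕ)} {a : (Fin n → ℕ) → ℝ} (hS : S = {α | a α ≠ 0})
    {G : Finset (Fin n → ℕ)} (hGS : ∀ g ∈ G, g ∈ S)
    (hcov : ∀ α ∈ S, ∃ g ∈ G, g ≤ α) {u : Fin n → ℝ} (hu : ∀ i, 0 < u i) {k : ℝ}
    (hk : ∀ g ∈ G, k ≤ dotR u (toR g)) (hne : (level G u k).Nonempty) :
    facePoly a (traceFace (newtonPolyhedron S) u) = fun x => ∑ g ∈ level G u k, a g * mono g x := by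
  funext x
  rw [facePoly]
  rw [tsum_eq_sum (s := level G u k)]
  · refine Finset.sum_congr rfl fun g hg => ?_
    have hgS : g ∈ S := hGS g (Finset.mem_filter.1 hg).1
    exact if_pos ((mem_traceFace_iff hGS hcov hu hk hne hgS).2 hg)
  · intro α hα
    by_cases h : a α = 0
    · simp [h]
    · rw [if_neg]
      intro h'
      exact hα ((mem_traceFace_iff hGS hcov hu hk hne (by rw [hS]; exact h)).1 h')

/-- A sequence whose image under a linear map converges can be corrected, without changing the
image, to a convergent sequence. -/
lemma exists_convergent_preimage {E F : Type*} [NormedAddCommGroup E] [NormedSpace ℝ E]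
    [FiniteDimensional ℝ E] [NormedAddCommGroup F] [NormedSpace ℝ F] [FiniteDimensional ℝ F]
    (T : E →ₗ[ℝ] F) (z : ℕ → E) {w : F} (h : Tendsto (fun m => T (z m)) atTop (𝓝 w)) :
    ∃ (r : ℕ → E) (z' : E), Tendsto r atTop (𝓝 z') ∧ T z' = w ∧ ∀ m, T (r m) = T (z m) := by
  have hcl : IsClosed (LinearMap.range T : Set F) := Submodule.closed_of_finiteDimensional _
  have hw : w ∈ LinearMap.range T :=
    hcl.mem_of_tendsto h (Eventually.of_forall fun m => LinearMap.mem_range_self T (z m))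
  obtain ⟨R, hR⟩ := T.rangeRestrict.exists_rightInverse_of_surjective
    (LinearMap.range_eq_top.2 T.surjective_rangeRestrict)
  have hR' : ∀ v : LinearMap.range T, T (R v) = v := fun v => by
    have := congrArg Subtype.val (LinearMap.congr_fun hR v)
    simpa using this
  refine ⟨fun m => R ⟨T (z m), LinearMap.mem_range_self T (z m)⟩, R ⟨w, hw⟩, ?_, hR' _,
    fun m => hR' _⟩
  refine (R.continuous_of_finiteDimensional.tendsto _).comp ?_
  rw [tendsto_subtype_rng]
  exact h

end Faces

open scoped ContDiff

section LowerBound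

variable {n : ℕ}

lemma dotR_eq_lin (u y : Fin n → ℝ) : dotR u y = lin u y := by rw [lin_apply]; rfl

lemma dotR_comm (u y : Fin n → ℝ) : dotR u y = dotR y u :=
  Finset.sum_congr rfl fun _ _ => mul_comm _ _

/-- No face polynomial of a positive weight has a critical point in the torus, stated through the
weighted sums of exponents. -/
lemma no_critical {S : Set (Fin n → ℕ)} {a : (Fin n → ℕ) → ℝ} (hS : S = {α | a α ≠ 0})
    (hnd : NonDegenerateR a (newtonPolyhedron S))
    {G : Finset (Fin n → ℕ)} (hGS : ∀ g ∈ G, g ∈ S)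
    (hcov : ∀ α ∈ S, ∃ g ∈ G, g ≤ α) {u : Fin n → ℝ} (hu : ∀ i, 0 < u i) {k : ℝ}
    (hk : ∀ g ∈ G, k ≤ dotR u (toR g)) (hne : (level G u k).Nonempty)
    {x : Fin n → ℝ} (hx : ∀ i, x i ≠ 0) :
    ¬ ∀ i, ∑ g ∈ level G u k, a g * (g i * mono g x) = 0 := by
  intro hzero
  have hface : IsFaceOf (newtonPolyhedron S) (traceFace (newtonPolyhedron S) u) :=
    ⟨u, fun i => (hu i).le, rfl⟩
  have hcomp : IsCompact (traceFace (newtonPolyhedron S) u) := by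
    rw [(traceFace_eq hGS hcov hu hk hne).1]
    exact ((Finset.finite_toSet _).image _).isCompact_convexHull (𝕜 := ℝ)
  refine hnd _ hface hcomp x hx ?_
  rw [facePoly_eq hS hGS hcov hu hk hne]
  have hpd : ∀ i, pd i (fun x => ∑ g ∈ level G u k, a g * mono g x) x = 0 := by
    intro i
    refine (mul_eq_zero.1 ?_).resolve_left (hx i)
    have h1 := logd_decomposition (G := level G u k) (h := fun g _ => a g)
      (fun g _ => contDiff_const) i x
    rw [← logd]
    have h2 : (fun x => ∑ g ∈ level G u k, a g * mono g x)
        = fun x => ∑ g ∈ level G u k, mono g x * a g := by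
      funext x; exact Finset.sum_congr rfl fun g _ => mul_comm _ _
    rw [h2, h1, ← hzero i]
    refine Finset.sum_congr rfl fun g _ => ?_
    have : logd i (fun _ : Fin n → ℝ => a g) x = 0 := by simp [logd, pd]
    rw [this]; ring
  ext v
  rw [pi_eq_sum_univ' v, map_sum]
  simp only [map_smul]
  refine Finset.sum_eq_zero fun i _ => ?_
  rw [smul_eq_zero]
  exact Or.inr (hpd i)

/-- Non-degeneracy makes the logarithmic gradient of `f` comparable, near the origin, to the sum of
all the monomials of the Newton diagram. If this failed along a sequence `x m → 0`, the
exponents whose monomials survive after normalisation would span a compact face: a bounded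
correction of `-log |x m|` is a positive weight cutting out exactly these exponents. The limits of
the normalised monomials would be their values at a critical point of the face polynomial. -/
lemma logd_lower_bound {S : Set (Fin n → ℕ)} {a : (Fin n → ℕ) → ℝ} (hS : S = {α | a α ≠ 0})
    (hnd : NonDegenerateR a (newtonPolyhedron S))
    {G : Finset (Fin n → ℕ)} (hGS : ∀ g ∈ G, g ∈ S)
    (hcov : ∀ α ∈ S, ∃ g ∈ G, g ≤ α) {h : (Fin n → ℕ) → (Fin n → ℝ) → ℝ}
    (hh : ∀ g ∈ G, ContDiff ℝ ∞ (h g) ∧ HasCompactSupport (h g) ∧ h g 0 = a g) :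
    ∃ c > 0, ∃ r > 0, ∀ x : Fin n → ℝ, ‖x‖ < r → (∀ i, x i ≠ 0) →
      c * (∑ g ∈ G, |mono g x|) ^ 2 ≤
        ∑ i, logd i (fun x => ∑ g ∈ G, mono g x * h g x) x ^ 2 := by
  by_contra! hcon
  have h0 : ∀ m : ℕ, (0 : ℝ) < 1 / ((m : ℝ) + 1) := fun m => by positivity
  choose x hxr hx0 hlt using fun m : ℕ => hcon (1 / ((m : ℝ) + 1)) (h0 m) _ (h0 m)
  set M : ℕ → ℝ := fun m => ∑ g ∈ G, |mono g (x m)| with hM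
  have hMpos : ∀ m, 0 < M m := by
    intro m
    have h1 : 0 ≤ M m := Finset.sum_nonneg fun _ _ => abs_nonneg _
    refine h1.lt_of_ne fun h2 => ?_
    have h3 := hlt m
    change _ < 1 / ((m : ℝ) + 1) * (M m) ^ 2 at h3
    rw [← h2] at h3
    have h4 : 0 ≤ ∑ i, logd i (fun x => ∑ g ∈ G, mono g x * h g x) (x m) ^ 2 :=
      Finset.sum_nonneg fun _ _ => sq_nonneg _
    simp at h3
    linarith
  have hxlim : Tendsto x atTop (𝓝 0) := by
    refine squeeze_zero_norm (fun m => (hxr m).le) ?_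
    exact tendsto_one_div_add_atTop_nhds_zero_nat
  -- convergent subsequence of the normalised monomials and of the signs
  set P : ℕ → (G → ℝ) × (Fin n → ℝ) := fun m =>
    (fun g => |mono g.1 (x m)| / M m, fun i => SignType.sign (x m i)) with hP
  have hPmem : ∀ m, P m ∈ Metric.closedBall (0 : (G → ℝ) × (Fin n → ℝ)) 1 := by
    intro m
    rw [mem_closedBall_zero_iff, Prod.norm_def]
    refine max_le ((pi_norm_le_iff_of_nonneg zero_le_one).2 fun g => ?_)
      ((pi_norm_le_iff_of_nonneg zero_le_one).2 fun i => ?_)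
    · simp only [hP]
      rw [Real.norm_eq_abs, abs_div, abs_abs, abs_of_pos (hMpos m), div_le_one (hMpos m)]
      exact Finset.single_le_sum (f := fun g => |mono g (x m)|) (fun _ _ => abs_nonneg _) g.2
    · simp only [hP]
      rcases lt_trichotomy (x m i) 0 with h | h | h <;> simp [h]
  obtain ⟨⟨μ, β⟩, -, φ, hφ, hlim⟩ := (isCompact_closedBall _ _).tendsto_subseq hPmem
  have hφt := hφ.tendsto_atTop
  have hμ : ∀ g : G, Tendsto (fun m => |mono g.1 (x (φ m))| / M (φ m)) atTop (𝓝 (μ g)) := by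
    intro g
    exact ((continuous_apply g).tendsto _).comp ((continuous_fst.tendsto _).comp hlim)
  have hβ : ∀ i, Tendsto (fun m => (SignType.sign (x (φ m) i) : ℝ)) atTop (𝓝 (β i)) := by
    intro i
    exact ((continuous_apply i).tendsto _).comp ((continuous_snd.tendsto _).comp hlim)
  have hμ0 : ∀ g, 0 ≤ μ g := fun g =>
    ge_of_tendsto' (hμ g) fun m => div_nonneg (abs_nonneg _) (hMpos _).le
  have hβ1 : ∀ i, |β i| = 1 := by
    intro i
    refine tendsto_nhds_unique ((continuous_abs.tendsto _).comp (hβ i)) ?_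
    refine tendsto_const_nhds.congr fun m => ?_
    rcases lt_or_gt_of_ne (hx0 (φ m) i) with h | h <;> simp [h]
  have hμsum : ∑ g, μ g = 1 := by
    refine tendsto_nhds_unique (tendsto_finsetSum _ fun g _ => hμ g) ?_
    refine tendsto_const_nhds.congr fun m => ?_
    rw [← Finset.sum_div, Finset.sum_coe_sort G (fun g => |mono g (x (φ m))|)]
    exact (div_self (hMpos _).ne').symm
  -- the signed normalised monomials
  have hsigned : ∀ g : G, Tendsto (fun m => mono g.1 (x (φ m)) / M (φ m)) atTop
      (𝓝 (mono g.1 β * μ g)) := by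
    intro g
    have h1 : Tendsto (fun m => mono g.1 (fun i => (SignType.sign (x (φ m) i) : ℝ))) atTop
        (𝓝 (mono g.1 β)) :=
      ((mono_contDiff g.1).continuous.tendsto β).comp (tendsto_pi_nhds.2 hβ)
    refine (h1.mul (hμ g)).congr fun m => ?_
    rw [← mul_div_assoc]
    congr 1
    rw [mono, mono, Finset.abs_prod, ← Finset.prod_mul_distrib]
    refine Finset.prod_congr rfl fun i _ => ?_
    rw [abs_pow, ← mul_pow, sign_mul_abs]
  have hcrit : ∀ i, ∑ g : G, mono g.1 β * μ g * (g.1 i * a g.1) = 0 := by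
    intro i
    have h1 : Tendsto (fun m => logd i (fun x => ∑ g ∈ G, mono g x * h g x) (x (φ m)) / M (φ m))
        atTop (𝓝 (∑ g : G, mono g.1 β * μ g * (g.1 i * a g.1))) := by
      have h2 : ∀ g : G, Tendsto (fun m => mono g.1 (x (φ m)) / M (φ m) *
          (g.1 i * h g.1 (x (φ m)) + logd i (h g.1) (x (φ m)))) atTop
          (𝓝 (mono g.1 β * μ g * (g.1 i * a g.1))) := by
        intro g
        obtain ⟨hg1, hg2, hg3⟩ := hh g.1 g.2
        have h3 : Continuous fun x => (g.1 i : ℝ) * h g.1 x + logd i (h g.1) x :=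
          (continuous_const.mul hg1.continuous).add (logd_contDiff i hg1).continuous
        have h4 := (h3.tendsto 0).comp (hxlim.comp hφt)
        have h5 : (g.1 i : ℝ) * h g.1 0 + logd i (h g.1) 0 = g.1 i * a g.1 := by
          simp [logd, hg3]
        rw [h5] at h4
        exact (hsigned g).mul h4
      refine (tendsto_finsetSum _ fun g _ => h2 g).congr fun m => ?_
      rw [logd_decomposition (fun g hg => (hh g hg).1), Finset.sum_div,
        ← Finset.sum_coe_sort G]
      exact Finset.sum_congr rfl fun g _ => by ring
    refine tendsto_nhds_unique h1 ?_
    have h6 : Tendsto (fun m => Real.sqrt (1 / ((φ m : ℝ) + 1))) atTop (𝓝 0) := by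
      have := (Real.continuous_sqrt.tendsto 0).comp
        (tendsto_one_div_add_atTop_nhds_zero_nat.comp hφt)
      rw [Real.sqrt_zero] at this
      exact this
    refine squeeze_zero_norm (fun m => ?_) h6
    rw [Real.norm_eq_abs, abs_div, abs_of_pos (hMpos _), div_le_iff₀ (hMpos _)]
    refine abs_le_of_sq_le_sq ?_ (mul_nonneg (Real.sqrt_nonneg _) (hMpos _).le)
    rw [mul_pow, Real.sq_sqrt (h0 _).le]
    refine le_trans ?_ (hlt (φ m)).le
    exact Finset.single_le_sum
      (f := fun i => logd i (fun x => ∑ g ∈ G, mono g x * h g x) (x (φ m)) ^ 2)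
      (fun _ _ => sq_nonneg _) (Finset.mem_univ i)
  -- the surviving exponents
  set H : Type := {g : G // 0 < μ g} with hH
  set s : ℕ → Fin n → ℝ := fun m i => - Real.log |x (φ m) i| with hs
  set q : ℕ → ℝ := fun m => Real.log (M (φ m)) with hq
  have habs : ∀ m i, 0 < |x (φ m) i| := fun m i => abs_pos.2 (hx0 _ i)
  have hlog : ∀ m (g : G), dotR (s m) (toR g.1) + q m
      = - Real.log (|mono g.1 (x (φ m))| / M (φ m)) := by
    intro m g
    have hne : |mono g.1 (x (φ m))| ≠ 0 :=
      abs_ne_zero.2 (Finset.prod_ne_zero_iff.2 fun i _ => pow_ne_zero _ (hx0 _ i))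
    rw [Real.log_div hne (hMpos _).ne', mono, Finset.abs_prod, Real.log_prod fun i _ =>
        abs_ne_zero.2 (pow_ne_zero _ (hx0 _ i))]
    simp only [abs_pow, Real.log_pow, dotR, hs, toR, hq]
    have : ∑ i, -Real.log |x (φ m) i| * (g.1 i : ℝ) = - ∑ i, (g.1 i : ℝ) * Real.log |x (φ m) i| := by
      rw [← Finset.sum_neg_distrib]
      exact Finset.sum_congr rfl fun i _ => by ring
    rw [this]; ring
  let T : ((Fin n → ℝ) × ℝ) →ₗ[ℝ] (H → ℝ) :=
    LinearMap.pi fun g => (lin (toR g.1.1)).toLinearMap.comp (LinearMap.fst ℝ _ _)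
      + LinearMap.snd ℝ _ _
  have hT : ∀ z g, T z g = dotR z.1 (toR g.1.1) + z.2 := fun z g => by
    rw [dotR_comm, dotR_eq_lin]; rfl
  have : Finite H := inferInstance
  have : Fintype H := Fintype.ofFinite H
  have hTlim : Tendsto (fun m => T (s m, q m)) atTop (𝓝 fun g => - Real.log (μ g.1)) := by
    refine tendsto_pi_nhds.2 fun g => ?_
    have h1 := ((Real.continuousAt_log g.2.ne').tendsto.comp (hμ g.1)).neg
    refine h1.congr fun m => ?_
    rw [hT, hlog]
    rfl
  obtain ⟨ρ, z, hρ, hz, hTρ⟩ := exists_convergent_preimage T (fun m => (s m, q m)) hTlim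
  have hρ1 : Tendsto (fun m => (ρ m).1) atTop (𝓝 z.1) := (continuous_fst.tendsto _).comp hρ
  have hρ2 : Tendsto (fun m => (ρ m).2) atTop (𝓝 z.2) := (continuous_snd.tendsto _).comp hρ
  have hslim : ∀ i, Tendsto (fun m => s m i) atTop atTop := by
    intro i
    have h1 : Tendsto (fun m => |x (φ m) i|) atTop (𝓝[>] 0) := by
      rw [tendsto_nhdsWithin_iff]
      refine ⟨?_, Eventually.of_forall fun m => habs m i⟩
      have := ((continuous_abs.comp (continuous_apply i)).tendsto (0 : Fin n → ℝ)).comp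
        (hxlim.comp hφt)
      simp only [Function.comp, Pi.zero_apply, abs_zero] at this
      exact this
    exact tendsto_neg_atBot_atTop.comp (Real.tendsto_log_nhdsGT_zero.comp h1)
  have hdot : ∀ (v w g : Fin n → ℝ), dotR (v - w) g = dotR v g - dotR w g := fun v w g => by
    simp [dotR, sub_mul, Finset.sum_sub_distrib]
  have hdead : ∀ g : G, μ g = 0 → Tendsto (fun m => dotR (s m - (ρ m).1) (toR g.1) +
      (q m - (ρ m).2)) atTop atTop := by
    intro g hg
    have h1 : Tendsto (fun m => |mono g.1 (x (φ m))| / M (φ m)) atTop (𝓝[>] 0) := by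
      rw [tendsto_nhdsWithin_iff]
      refine ⟨hg ▸ hμ g, Eventually.of_forall fun m => div_pos (abs_pos.2
        (Finset.prod_ne_zero_iff.2 fun i _ => pow_ne_zero _ (hx0 _ i))) (hMpos _)⟩
    have h2 := tendsto_neg_atBot_atTop.comp (Real.tendsto_log_nhdsGT_zero.comp h1)
    have h3 : Tendsto (fun m => -(dotR (ρ m).1 (toR g.1) + (ρ m).2)) atTop
        (𝓝 (-(dotR z.1 (toR g.1) + z.2))) := by
      have h4 : Tendsto (fun m => dotR (ρ m).1 (toR g.1)) atTop (𝓝 (dotR z.1 (toR g.1))) := by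
        simp only [dotR_comm _ (toR g.1), dotR_eq_lin]
        exact ((lin _).continuous.tendsto _).comp hρ1
      exact (h4.add hρ2).neg
    refine (h2.atTop_add h3).congr fun m => ?_
    simp only [Function.comp]
    rw [← hlog, hdot]
    ring
  have hev1 : ∀ᶠ m in atTop, ∀ i, 0 < s m i - (ρ m).1 i := by
    rw [eventually_all]
    intro i
    have h1 : Tendsto (fun m => -(ρ m).1 i) atTop (𝓝 (-z.1 i)) :=
      (((continuous_apply i).tendsto _).comp hρ1).neg
    filter_upwards [((hslim i).atTop_add h1).eventually_gt_atTop 0] with m hm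
    linarith
  have hev2 : ∀ᶠ m in atTop, ∀ g : G, μ g = 0 →
      0 < dotR (s m - (ρ m).1) (toR g.1) + (q m - (ρ m).2) := by
    rw [eventually_all]
    intro g
    by_cases hg : μ g = 0
    · filter_upwards [(hdead g hg).eventually_gt_atTop 0] with m hm _
      exact hm
    · exact Eventually.of_forall fun m h' => absurd h' hg
  obtain ⟨m, hm1, hm2⟩ := (hev1.and hev2).exists
  set u : Fin n → ℝ := s m - (ρ m).1 with hu
  set k : ℝ := -(q m - (ρ m).2) with hk
  have hlive : ∀ g : G, 0 < μ g → dotR u (toR g.1) = k := by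
    intro g hg
    have h1 := congrFun (hTρ m) ⟨g, hg⟩
    rw [hT, hT] at h1
    simp only at h1
    rw [hu, hdot, hk]
    linarith
  have hge : ∀ g ∈ G, k ≤ dotR u (toR g) := by
    intro g hg
    rcases (hμ0 ⟨g, hg⟩).eq_or_lt with h1 | h1
    · have := hm2 ⟨g, hg⟩ h1.symm
      simp only at this
      rw [hk]; linarith
    · exact (hlive ⟨g, hg⟩ h1).ge
  have hlev : ∀ g : G, g.1 ∈ level G u k ↔ 0 < μ g := by
    intro g
    rw [level, Finset.mem_filter]
    refine ⟨fun h1 => (hμ0 g).lt_of_ne fun h2 => ?_, fun h1 => ⟨g.2, hlive g h1⟩⟩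
    have := hm2 g h2.symm
    rw [h1.2, hk] at this
    linarith
  have hne : (level G u k).Nonempty := by
    by_contra hemp
    have : ∀ g, μ g = 0 := fun g => by
      by_contra h1
      exact hemp ⟨g.1, (hlev g).2 ((hμ0 g).lt_of_ne' h1)⟩
    simp [this] at hμsum
  have hβ0 : ∀ i, β i ≠ 0 := fun i hi => by simpa [hi] using hβ1 i
  refine no_critical hS hnd hGS hcov (u := u) hm1 hge hne
    (x := fun i => β i * Real.exp (- z.1 i)) (fun i => mul_ne_zero (hβ0 i) (Real.exp_pos _).ne') ?_
  have hval : ∀ g : G, 0 < μ g →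
      mono g.1 (fun i => β i * Real.exp (- z.1 i)) = Real.exp z.2 * (mono g.1 β * μ g) := by
    intro g hg
    have h1 := congrFun hz ⟨g, hg⟩
    rw [hT] at h1
    simp only at h1
    have h2 : Real.exp (- dotR z.1 (toR g.1)) = Real.exp z.2 * μ g := by
      rw [← Real.exp_log hg, ← Real.exp_add]
      congr 1
      linarith
    have h3 : mono g.1 (fun i => β i * Real.exp (- z.1 i))
        = mono g.1 β * Real.exp (- dotR z.1 (toR g.1)) := by
      simp only [mono, mul_pow, Finset.prod_mul_distrib]
      congr 1
      rw [dotR, ← Finset.sum_neg_distrib, Real.exp_sum]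
      refine Finset.prod_congr rfl fun i _ => ?_
      rw [← Real.exp_nat_mul, toR]
      congr 1
      ring
    rw [h3, h2]; ring
  intro i
  have h4 : ∑ g ∈ level G u k, a g * (g i * mono g (fun i => β i * Real.exp (- z.1 i)))
      = ∑ g : G, Real.exp z.2 * (mono g.1 β * μ g * (g.1 i * a g.1)) := by
    rw [level, Finset.sum_filter, ← Finset.sum_coe_sort G]
    refine Finset.sum_congr rfl fun g _ => ?_
    by_cases hg : 0 < μ g
    · rw [if_pos (hlive g hg), hval g hg]; ring
    · have h5 : μ g = 0 := le_antisymm (not_lt.1 hg) (hμ0 g)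
      rw [if_neg, h5]
      · simp
      · intro h6
        exact hg ((hlev g).1 (Finset.mem_filter.2 ⟨g.2, h6⟩))
  rw [h4, ← Finset.mul_sum, hcrit i, mul_zero]

end LowerBound

/-! ### The simplicial face -/

open scoped ContDiff

section Simplex

variable {n : ℕ}

lemma newton_add_mem {S : Set (Fin n → ℕ)} {y z : Fin n → ℝ} (hy : y ∈ newtonPolyhedron S)
    (hz : ∀ i, 0 ≤ z i) : z + y ∈ newtonPolyhedron S := by
  have h : newtonPolyhedron S ⊆ (fun y => z + y) ⁻¹' newtonPolyhedron S := by
    refine convexHull_min ?_ ((convex_convexHull ℝ _).translate_preimage_right z)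
    rintro x ⟨α, hα, hx⟩
    exact subset_convexHull _ _ ⟨α, hα, fun i => (hx i).trans (le_add_of_nonneg_left (hz i))⟩
  exact h hy

lemma dotR_smul_left (c : ℝ) (u y : Fin n → ℝ) : dotR (c • u) y = c * dotR u y := by
  simp [dotR, Finset.mul_sum, mul_assoc]

lemma dotR_add_left (u v y : Fin n → ℝ) : dotR (u + v) y = dotR u y + dotR v y := by
  simp [dotR, add_mul, Finset.sum_add_distrib]

lemma dotR_sum_right {ι : Type*} (s : Finset ι) (u : Fin n → ℝ) (c : ι → ℝ)
    (p : ι → Fin n → ℝ) : dotR u (∑ k ∈ s, c k • p k) = ∑ k ∈ s, c k * dotR u (p k) := by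
  simp only [dotR, Finset.sum_apply, Pi.smul_apply, smul_eq_mul, Finset.mul_sum]
  rw [Finset.sum_comm]
  exact Finset.sum_congr rfl fun k _ => Finset.sum_congr rfl fun i _ => by ring

/-- A bounded face meeting the open orthant is cut out by a weight with positive entries: along a
coordinate of weight zero the face would contain a half-line. -/
lemma exists_weight (hn : 1 ≤ n) {S : Set (Fin n → ℕ)} {τ : Set (Fin n → ℝ)}
    (hface : IsFaceOf (newtonPolyhedron S) τ) (hcomp : IsCompact τ) {t : ℝ} (ht : 0 < t)
    (hmem : (fun _ => t) ∈ τ) :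
    ∃ u : Fin n → ℝ, (∀ i, 0 < u i) ∧ τ = traceFace (newtonPolyhedron S) u ∧
      dotR u (fun _ => t) = 1 := by
  obtain ⟨u, hu0, rfl⟩ := hface
  have hu : ∀ i, 0 < u i := by
    intro i
    refine (hu0 i).lt_of_ne fun hi => ?_
    obtain ⟨C, hC⟩ := hcomp.isBounded.exists_norm_le
    have hz : ∀ j, 0 ≤ (Pi.single i (|C| + 1) : Fin n → ℝ) j := by
      intro j
      by_cases hj : j = i
      · subst hj
        rw [Pi.single_eq_same]
        positivity
      · rw [Pi.single_eq_of_ne hj]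
    have hd : dotR u (Pi.single i (|C| + 1) + fun _ => t) = dotR u (fun _ => t) := by
      refine Finset.sum_congr rfl fun j _ => ?_
      by_cases hj : j = i
      · subst hj
        rw [← hi, zero_mul, zero_mul]
      · rw [Pi.add_apply, Pi.single_eq_of_ne hj, zero_add]
    have h1 := hC _ (show Pi.single i (|C| + 1) + (fun _ => t) ∈ traceFace _ u from
      ⟨newton_add_mem hmem.1 hz, fun z hz => hd.le.trans (hmem.2 z hz)⟩)
    have h2 := (norm_le_pi_norm (Pi.single i (|C| + 1) + fun _ => t) i).trans h1
    rw [Pi.add_apply, Pi.single_eq_same, Real.norm_eq_abs] at h2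
    linarith [le_abs_self (|C| + 1 + t), le_abs_self C]
  have hk : 0 < dotR u (fun _ => t) := by
    have : Nonempty (Fin n) := ⟨⟨0, hn⟩⟩
    exact Finset.sum_pos (fun i _ => mul_pos (hu i) ht) Finset.univ_nonempty
  refine ⟨(dotR u (fun _ => t))⁻¹ • u, fun i => mul_pos (inv_pos.2 hk) (hu i), ?_, ?_⟩
  · ext y
    simp only [traceFace, Set.mem_ofPred_eq, dotR_smul_left,
      mul_le_mul_iff_right₀ (inv_pos.2 hk)]
  · rw [dotR_smul_left, inv_mul_cancel₀ hk.ne']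

lemma exists_dual {p : Fin n → Fin n → ℝ} (hp : LinearIndependent ℝ p) (k : Fin n) :
    ∃ w : Fin n → ℝ, ∀ j, dotR w (p j) = if j = k then 1 else 0 := by
  have h1 : IsUnit (Matrix.of p) := Matrix.linearIndependent_rows_iff_isUnit.1 hp
  obtain ⟨w, hw⟩ := (Matrix.mulVec_surjective_iff_isUnit.2 h1) (Pi.single k 1)
  refine ⟨w, fun j => ?_⟩
  rw [dotR_comm]
  have := congrFun hw j
  rw [Pi.single_apply] at this
  exact this

/-- Affinely independent points on a hyperplane missing the origin are linearly independent. -/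
lemma linearIndependent_of_weight {p : Fin n → Fin n → ℝ} (hp : AffineIndependent ℝ p)
    {u : Fin n → ℝ} (hu : ∀ k, dotR u (p k) = 1) : LinearIndependent ℝ p := by
  rw [Fintype.linearIndependent_iff]
  intro g hg i
  have h0 : ∑ k, g k = 0 := by
    have h1 := dotR_sum_right Finset.univ u g p
    simp only [hg, hu, mul_one] at h1
    rw [← h1]
    simp [dotR]
  exact affineIndependent_iff.1 hp Finset.univ g h0 hg i (Finset.mem_univ i)

lemma affineIndependent_of_faceDim (hn : 1 ≤ n) {p : Fin n → Fin n → ℝ}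
    (h : faceDim (convexHull ℝ (Set.range p)) = n - 1) : AffineIndependent ℝ p := by
  have h1 : vectorSpan ℝ (convexHull ℝ (Set.range p)) = vectorSpan ℝ (Set.range p) := by
    rw [← direction_affineSpan, affineSpan_convexHull, direction_affineSpan]
  rw [affineIndependent_iff_finrank_vectorSpan_eq ℝ p (n := n - 1) (by rw [Fintype.card_fin]; omega),
    ← h1]
  exact h

lemma exists_coeff_of_mem_convexHull {p : Fin n → Fin n → ℝ} {y : Fin n → ℝ}
    (hy : y ∈ convexHull ℝ (Set.range p)) :
    ∃ w : Fin n → ℝ, (∀ k, 0 ≤ w k) ∧ ∑ k, w k = 1 ∧ y = ∑ k, w k • p k := by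
  have hsub : convexHull ℝ (Set.range p) ⊆
      {y | ∃ w : Fin n → ℝ, (∀ k, 0 ≤ w k) ∧ ∑ k, w k = 1 ∧ y = ∑ k, w k • p k} := by
    refine convexHull_min ?_ ?_
    · rintro _ ⟨k, rfl⟩
      refine ⟨Pi.single k 1, fun j => ?_, by simp, by simp [Pi.single_apply]⟩
      by_cases hj : j = k
      · subst hj; simp
      · rw [Pi.single_eq_of_ne hj]
    · rintro _ ⟨w, hw, hw1, rfl⟩ _ ⟨v, hv, hv1, rfl⟩ r s hr hs hrs
      refine ⟨r • w + s • v, fun k => ?_, ?_, ?_⟩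
      · exact add_nonneg (mul_nonneg hr (hw k)) (mul_nonneg hs (hv k))
      · simp only [Pi.add_apply, Pi.smul_apply, smul_eq_mul, Finset.sum_add_distrib,
          ← Finset.mul_sum, hw1, hv1, mul_one, hrs]
      · simp only [Pi.add_apply, Pi.smul_apply, smul_eq_mul, add_smul, Finset.sum_add_distrib,
          mul_smul, ← Finset.smul_sum]
  exact hsub hy

/-- The combinatorics of the face through `(t₀, …, t₀)`. The weight `u` equals `1` exactly at the
vertices among the generators. That `γ` has no vanishing entry expresses that `(t₀, …, t₀)` lies in
the relative interior: otherwise tilting `u` would cut out a smaller face through this point. -/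
lemma simplex_face (hn : 1 ≤ n) {S : Set (Fin n → ℕ)} {G : Finset (Fin n → ℕ)}
    (hGS : ∀ g ∈ G, g ∈ S) (hcov : ∀ α ∈ S, ∃ g ∈ G, g ≤ α)
    {t₀ : ℝ} (ht₀ : 0 < t₀) {τ₀ : Set (Fin n → ℝ)}
    (hface : IsFaceOf (newtonPolyhedron S) τ₀) (hmem : (fun _ => t₀) ∈ τ₀)
    (hmin : ∀ τ : Set (Fin n → ℝ), IsFaceOf (newtonPolyhedron S) τ → (fun _ => t₀) ∈ τ → τ₀ ⊆ τ)
    (hcomp : IsCompact τ₀) (hcodim : faceDim τ₀ = n - 1) {av : Fin n → Fin n → ℕ}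
    (hτ₀ : τ₀ = convexHull ℝ (Set.range fun k => toR (av k)))
    (hvert : ∀ α ∈ S, (toR α ∈ τ₀ ↔ ∃ k, α = av k)) (havS : ∀ k, av k ∈ S)
    {γ : Fin n → ℝ} (hγ : ∑ k, γ k • toR (av k) = fun _ => 1) :
    LinearIndependent ℝ (fun k => toR (av k)) ∧ (∀ k, 0 < γ k) ∧ ∑ k, γ k = 1 / t₀ ∧
    ∃ u : Fin n → ℝ, (∀ i, 0 < u i) ∧ (∀ k, dotR u (toR (av k)) = 1) ∧
      (∀ g ∈ G, 1 ≤ dotR u (toR g)) ∧ (∀ g ∈ G, dotR u (toR g) = 1 → ∃ k, g = av k) ∧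
      (∀ k, av k ∈ G) ∧ ∑ i, u i = ∑ k, γ k := by
  obtain ⟨u, hu, hτu, hut⟩ := exists_weight hn hface hcomp ht₀ hmem
  have hface_iff : ∀ y, y ∈ τ₀ ↔ y ∈ newtonPolyhedron S ∧ dotR u y = 1 := by
    intro y
    rw [hτu] at hmem ⊢
    constructor
    · rintro ⟨hy, h⟩
      refine ⟨hy, le_antisymm ?_ ?_⟩
      · rw [← hut]; exact h _ hmem.1
      · rw [← hut]; exact hmem.2 _ hy
    · rintro ⟨hy, h⟩
      exact ⟨hy, fun z hz => by rw [h, ← hut]; exact hmem.2 z hz⟩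
  have hge : ∀ y ∈ newtonPolyhedron S, 1 ≤ dotR u y := by
    intro y hy
    rw [hτu] at hmem
    rw [← hut]; exact hmem.2 _ hy
  have hav1 : ∀ k, dotR u (toR (av k)) = 1 := fun k =>
    ((hface_iff _).1 ((hvert _ (havS k)).2 ⟨k, rfl⟩)).2
  have hG1 : ∀ g ∈ G, 1 ≤ dotR u (toR g) := fun g hg => hge _ (toR_mem_newton (hGS g hg))
  have hGeq : ∀ g ∈ G, dotR u (toR g) = 1 → ∃ k, g = av k := fun g hg h =>
    (hvert g (hGS g hg)).1 ((hface_iff _).2 ⟨toR_mem_newton (hGS g hg), h⟩)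
  have havG : ∀ k, av k ∈ G := by
    intro k
    obtain ⟨g, hg, hgk⟩ := hcov _ (havS k)
    have h2 : toR g = toR (av k) := eq_of_dotR_eq hu
      (fun i => Nat.cast_le.2 (hgk i)) ((hav1 k).le.trans (hG1 g hg))
    rwa [← toR_injective h2]
  have hlin : LinearIndependent ℝ (fun k => toR (av k)) :=
    linearIndependent_of_weight (affineIndependent_of_faceDim hn (by rw [← hτ₀]; exact hcodim))
      hav1
  have hsum : ∑ i, u i = ∑ k, γ k := by
    have h1 := dotR_sum_right Finset.univ u γ (fun k => toR (av k))
    simp only [hγ, hav1, mul_one] at h1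
    rw [← h1]
    simp [dotR]
  have hut' : t₀ * ∑ i, u i = 1 := by
    rw [← hut, dotR, ← Finset.sum_mul, mul_comm]
  have hγ0 : ∀ k, 0 ≤ γ k := by
    obtain ⟨w, hw, -, hw2⟩ := exists_coeff_of_mem_convexHull (hτ₀ ▸ hmem)
    have h1 : ∑ k, (w k - t₀ * γ k) • toR (av k) = 0 := by
      simp only [sub_smul, Finset.sum_sub_distrib, mul_smul, ← Finset.smul_sum]
      rw [hγ, ← hw2]
      funext i
      simp
    intro k
    have h2 := Fintype.linearIndependent_iff.1 hlin _ h1 k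
    have h3 : 0 ≤ t₀ * γ k := by rw [← sub_eq_zero.1 h2]; exact hw k
    exact nonneg_of_mul_nonneg_right h3 ht₀
  have hγs : ∑ k, γ k = 1 / t₀ := by
    rw [← hsum, eq_div_iff ht₀.ne', mul_comm]; exact hut'
  refine ⟨hlin, fun k => (hγ0 k).lt_of_ne fun hk => ?_, hγs, u, hu, hav1, hG1, hGeq, havG, hsum⟩
  obtain ⟨w, hw⟩ := exists_dual hlin k
  have hw0 : dotR w (fun _ => t₀) = 0 := by
    have h1 := dotR_sum_right Finset.univ w γ (fun k => toR (av k))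
    rw [hγ] at h1
    simp only [hw] at h1
    have h2 : dotR w (fun _ => (1 : ℝ)) = 0 := by
      rw [h1]; simp [← hk]
    simp only [dotR, mul_one] at h2
    rw [dotR, ← Finset.sum_mul, h2, zero_mul]
  -- For small `δ` the tilted weight `u + δ w` is still positive and at least `1` on `G`.
  have hev : ∀ᶠ δ : ℝ in 𝓝[>] 0, (∀ i, 0 < (u + δ • w) i) ∧
      ∀ g ∈ G, 1 ≤ dotR (u + δ • w) (toR g) := by
    refine (Filter.eventually_all.2 fun i => ?_).and ((Finset.eventually_all G).2 fun g hg => ?_)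
    · have hc : Continuous fun δ : ℝ => (u + δ • w) i := by
        simp only [Pi.add_apply, Pi.smul_apply, smul_eq_mul]; fun_prop
      refine nhdsWithin_le_nhds ((hc.tendsto 0).eventually (lt_mem_nhds ?_))
      simpa using hu i
    · by_cases h : dotR u (toR g) = 1
      · obtain ⟨j, rfl⟩ := hGeq g hg h
        filter_upwards [self_mem_nhdsWithin] with δ hδ
        rw [dotR_add_left, dotR_smul_left, h, hw]
        have : (0 : ℝ) < δ := hδ
        split_ifs <;> simp [this.le]
      · have hc : Continuous fun δ : ℝ => dotR (u + δ • w) (toR g) := by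
          simp only [dotR_add_left, dotR_smul_left]; fun_prop
        have h1 : 1 < dotR (u + (0 : ℝ) • w) (toR g) := by
          rw [zero_smul, add_zero]; exact (hG1 g hg).lt_of_ne (Ne.symm h)
        exact nhdsWithin_le_nhds (((hc.tendsto 0).eventually (lt_mem_nhds h1)).mono
          fun _ h => h.le)
  obtain ⟨δ, ⟨hδu, hδG⟩, hδ⟩ := (hev.and self_mem_nhdsWithin).exists
  have hδ0 : (0 : ℝ) < δ := hδ
  obtain ⟨j, -, hj⟩ : ∃ j ∈ Finset.univ, γ j ≠ 0 :=
    Finset.exists_ne_zero_of_sum_ne_zero (by rw [hγs]; positivity)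
  have hjk : j ≠ k := fun h => hj (h ▸ hk.symm)
  have hne : (level G (u + δ • w) 1).Nonempty := by
    refine ⟨av j, ?_⟩
    rw [level, Finset.mem_filter, dotR_add_left, dotR_smul_left, hav1, hw, if_neg hjk]
    exact ⟨havG j, by simp⟩
  have hiff := (traceFace_eq hGS hcov hδu hδG hne).2
  have hin := hmin _ ⟨_, fun i => (hδu i).le, rfl⟩ ((hiff _).2
    ⟨((hface_iff _).1 hmem).1, by rw [dotR_add_left, dotR_smul_left, hut, hw0]; simp⟩)
  have h1 := ((hiff _).1 (hin ((hvert _ (havS k)).2 ⟨k, rfl⟩))).2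
  rw [dotR_add_left, dotR_smul_left, hav1, hw, if_pos rfl] at h1
  linarith

end Simplex

/-! ### The model integral -/

section Model

variable {n : ℕ} {p : Fin n → Fin n → ℝ} {γ : Fin n → ℝ}

/-- The linear change of coordinates `y ↦ (⟨p k, y⟩)_k`. -/
def coords (p : Fin n → Fin n → ℝ) (y : Fin n → ℝ) : Fin n → ℝ := fun k => lin (p k) y

lemma coords_eq (p : Fin n → Fin n → ℝ) : coords p = Matrix.toLin' (Matrix.of p) := by
  funext y k
  rw [coords, lin_apply]
  rfl

lemma det_ne_zero (hp : LinearIndependent ℝ p) : (Matrix.of p).det ≠ 0 :=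
  ((Matrix.isUnit_iff_isUnit_det _).1
    (Matrix.linearIndependent_rows_iff_isUnit.1 hp : IsUnit (Matrix.of p))).ne_zero

lemma map_coords (hp : LinearIndependent ℝ p) :
    Measure.map (coords p) volume = ENNReal.ofReal |(Matrix.of p).det⁻¹| • volume := by
  rw [coords_eq]
  exact Real.map_matrix_volume_pi_eq_smul_volume_pi (det_ne_zero hp)

lemma coords_injective (hp : LinearIndependent ℝ p) : Function.Injective (coords p) := by
  rw [coords_eq]
  exact Matrix.mulVec_injective_of_isUnit
    (Matrix.linearIndependent_rows_iff_isUnit.1 hp : IsUnit (Matrix.of p))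

lemma coords_measurableEmbedding (hp : LinearIndependent ℝ p) : MeasurableEmbedding (coords p) := by
  have hc : Continuous (coords p) := continuous_pi fun k => (lin (p k)).continuous
  exact hc.measurableEmbedding (coords_injective hp)

lemma integral_prod_lin (hp : LinearIndependent ℝ p) (q : Fin n → ℝ → ℂ) :
    ∫ y, ∏ k, q k (lin (p k) y) = (|(Matrix.of p).det|⁻¹ : ℝ) * ∏ k, ∫ v, q k v := by
  have h := (coords_measurableEmbedding hp).integral_map (μ := volume)
    (fun v => ∏ k, q k (v k))
  rw [map_coords hp, integral_smul_measure, integral_fintype_prod_volume_eq_prod] at h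
  rw [ENNReal.toReal_ofReal (abs_nonneg _), abs_inv] at h
  simpa [coords] using h.symm

lemma integrable_prod_lin (hp : LinearIndependent ℝ p) {q : Fin n → ℝ → ℝ}
    (hq : ∀ k, Integrable (q k)) : Integrable fun y => ∏ k, q k (lin (p k) y) := by
  have h : Integrable (fun v : Fin n → ℝ => ∏ k, q k (v k)) := Integrable.fintype_prod hq
  exact ((coords_measurableEmbedding hp).integrable_map_iff (μ := volume)).1
    (by rw [map_coords hp]; exact h.smul_measure ENNReal.ofReal_ne_top)

lemma wt_eq_prod (hγ : ∑ k, γ k • p k = fun _ => 1) (y : Fin n → ℝ) :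
    wt y = ∏ k, Real.exp (γ k * lin (p k) y) := by
  have h1 := dotR_sum_right Finset.univ y γ p
  rw [hγ] at h1
  rw [wt, ← Real.exp_sum]
  congr 1
  simp only [dotR_comm y, dotR_eq_lin] at h1
  rw [← h1, lin_apply]
  simp

lemma integrable_exp_bound {g : ℝ} (hg : 0 < g) {N : ℕ} (hN : g < N) :
    Integrable fun v : ℝ => Real.exp (g * v) * ((1 + Real.exp v) ^ N)⁻¹ := by
  have hc : Continuous fun v : ℝ => Real.exp (g * v) * ((1 + Real.exp v) ^ N)⁻¹ := by
    refine Continuous.mul (by fun_prop) (Continuous.inv₀ (by fun_prop) fun v => ?_)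
    have := Real.exp_pos v
    positivity
  have h1 : ∀ v : ℝ, 0 ≤ Real.exp (g * v) * ((1 + Real.exp v) ^ N)⁻¹ := fun v => by positivity
  rw [← integrableOn_univ, ← Set.Iic_union_Ioi (a := (0 : ℝ)), integrableOn_union]
  constructor
  · refine (integrableOn_exp_mul_Iic hg 0).mono' hc.aestronglyMeasurable (ae_of_all _ fun v => ?_)
    rw [Real.norm_of_nonneg (h1 v)]
    refine mul_le_of_le_one_right (Real.exp_pos _).le (inv_le_one_of_one_le₀ ?_)
    exact one_le_pow₀ (by linarith [Real.exp_pos v])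
  · refine (integrableOn_exp_mul_Ioi (a := g - N) (by linarith) 0).mono' hc.aestronglyMeasurable
      (ae_of_all _ fun v => ?_)
    rw [Real.norm_of_nonneg (h1 v), sub_mul, Real.exp_sub, div_eq_mul_inv, Real.exp_nat_mul]
    refine mul_le_mul_of_nonneg_left ?_ (Real.exp_pos _).le
    refine inv_anti₀ (pow_pos (Real.exp_pos _) _) ?_
    exact pow_le_pow_left₀ (Real.exp_pos _).le (by linarith) _

lemma integrable_majorant (hp : LinearIndependent ℝ p) (hγ : ∑ k, γ k • p k = fun _ => 1)
    (hpos : ∀ k, 0 < γ k) {N : ℕ} (hN : ∀ k, γ k < N) : Integrable (majorant p N) := by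
  have h := integrable_prod_lin hp fun k => integrable_exp_bound (hpos k) (hN k)
  refine h.congr (ae_of_all _ fun y => ?_)
  simp only [majorant, wt_eq_prod hγ, Finset.prod_mul_distrib]

lemma image_exp_univ : Real.exp '' Set.univ = Set.Ioi 0 := by
  rw [Set.image_univ, Real.range_exp]

lemma integral_exp_gamma_real {g : ℝ} (hg : 0 < g) {r : ℝ} (hr : 0 < r) :
    ∫ v : ℝ, (Real.exp (g * v) : ℂ) * Complex.exp (-(r * Real.exp v))
      = (1 / r) ^ (g : ℂ) * Complex.Gamma g := by
  rw [← Complex.integral_cpow_mul_exp_neg_mul_Ioi (a := g) (by simpa using hg) hr,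
    ← image_exp_univ, integral_image_eq_integral_abs_deriv_smul MeasurableSet.univ
      (fun x _ => (Real.hasDerivAt_exp x).hasDerivWithinAt) Real.exp_injective.injOn,
    Measure.restrict_univ]
  refine integral_congr_ae (ae_of_all _ fun v => ?_)
  simp only [abs_of_pos (Real.exp_pos _), Complex.real_smul]
  rw [← mul_assoc]
  congr 1
  have e1 : ((Real.exp v : ℝ) : ℂ) ^ ((g : ℂ) - 1) = ((Real.exp v ^ (g - 1) : ℝ) : ℂ) := by
    rw [Complex.ofReal_cpow (Real.exp_pos v).le]; push_cast; rfl
  rw [e1, ← Complex.ofReal_mul, ← Real.exp_mul, ← Real.exp_add]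
  congr 2; ring

lemma integrable_exp_gamma {g : ℝ} (hg : 0 < g) {δ : ℝ} (hδ : 0 < δ) :
    Integrable fun v : ℝ => Real.exp (g * v) * Real.exp (-(δ * Real.exp v)) := by
  have h := integrableOn_rpow_mul_exp_neg_mul_rpow (p := 1) (s := g - 1) (b := δ) (by linarith)
    one_pos hδ
  rw [← image_exp_univ, integrableOn_image_iff_integrableOn_abs_deriv_smul MeasurableSet.univ
      (fun x _ => (Real.hasDerivAt_exp x).hasDerivWithinAt) Real.exp_injective.injOn,
    integrableOn_univ] at h
  refine h.congr (ae_of_all _ fun v => ?_)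
  simp only [abs_of_pos (Real.exp_pos _), smul_eq_mul, Real.rpow_one]
  rw [← mul_assoc, ← Real.exp_mul, ← Real.exp_add, neg_mul]
  congr 2; ring

/-- Euler's integral in logarithmic coordinates; the case of real `r` extends to the half-plane by
analytic continuation. -/
lemma integral_exp_gamma {g : ℝ} (hg : 0 < g) {r : ℂ} (hr : 0 < r.re) :
    ∫ v : ℝ, (Real.exp (g * v) : ℂ) * Complex.exp (-(r * Real.exp v))
      = (1 / r) ^ (g : ℂ) * Complex.Gamma g := by
  set d : ℝ → ENNReal := fun v => ENNReal.ofReal (Real.exp (g * v)) with hd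
  have hdm : Measurable d := by fun_prop
  have hdt : ∀ᵐ v : ℝ, d v < ⊤ := ae_of_all _ fun v => ENNReal.ofReal_lt_top
  set ν := (volume : Measure ℝ).withDensity d with hν
  set X : ℝ → ℝ := fun v => -Real.exp v with hX
  have hset : Set.Ioi 0 ⊆ ProbabilityTheory.integrableExpSet X ν := by
    intro t ht
    refine (integrable_withDensity_iff_integrable_smul' hdm hdt).2 ?_
    refine (integrable_exp_gamma hg ht).congr (ae_of_all _ fun v => ?_)
    simp only [hd, hX, ENNReal.toReal_ofReal (Real.exp_pos _).le, smul_eq_mul, mul_neg]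
  have hmgf : ∀ z : ℂ, ProbabilityTheory.complexMGF X ν z
      = ∫ v : ℝ, (Real.exp (g * v) : ℂ) * Complex.exp (-(z * Real.exp v)) := by
    intro z
    rw [ProbabilityTheory.complexMGF, hν, integral_withDensity_eq_integral_toReal_smul hdm hdt]
    refine integral_congr_ae (ae_of_all _ fun v => ?_)
    simp only [hd, hX, ENNReal.toReal_ofReal (Real.exp_pos _).le, Complex.real_smul,
      Complex.ofReal_neg, mul_neg]
  have hU : IsOpen {z : ℂ | 0 < z.re} := isOpen_lt continuous_const Complex.continuous_re
  have h1 : AnalyticOnNhd ℂ (ProbabilityTheory.complexMGF X ν) {z : ℂ | 0 < z.re} :=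
    ProbabilityTheory.analyticOnNhd_complexMGF.mono fun z hz =>
      interior_mono hset (by rw [interior_Ioi]; exact hz)
  have h2 : AnalyticOnNhd ℂ (fun z : ℂ => (1 / z) ^ (g : ℂ) * Complex.Gamma g)
      {z : ℂ | 0 < z.re} := by
    refine DifferentiableOn.analyticOnNhd (fun z hz => ?_) hU
    have hz' : (0 : ℝ) < z.re := hz
    have hz0 : z ≠ 0 := fun h => by simp [h] at hz'
    refine DifferentiableAt.differentiableWithinAt (DifferentiableAt.mul_const
      (DifferentiableAt.cpow_const (by fun_prop (disch := exact hz0)) ?_) _)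
    left
    rw [one_div, Complex.inv_re]
    exact div_pos hz' (Complex.normSq_pos.2 hz0)
  have h3 : Tendsto (fun x : ℝ => (x : ℂ)) (𝓝[≠] 1) (𝓝[≠] 1) :=
    tendsto_nhdsWithin_iff.2 ⟨(Complex.continuous_ofReal.tendsto' 1 1 (by simp)).mono_left
      nhdsWithin_le_nhds, by
        filter_upwards [self_mem_nhdsWithin] with x hx
        simpa using hx⟩
  have h4 : ∀ᶠ x : ℝ in 𝓝[≠] 1, ProbabilityTheory.complexMGF X ν x
      = (1 / (x : ℂ)) ^ (g : ℂ) * Complex.Gamma g := by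
    filter_upwards [nhdsWithin_le_nhds (lt_mem_nhds one_pos)] with x hx
    rw [hmgf, integral_exp_gamma_real hg hx]
  have h5 := h1.eqOn_of_preconnected_of_frequently_eq h2
    (convex_halfSpace_re_gt 0).isPreconnected (z₀ := 1) (by simp) (h3.frequently h4.frequently)
  rw [← hmgf]
  exact h5 hr

/-- The phase `∑ η_j exp ⟨p j, y⟩` of the model integral. -/
def modelF (p : Fin n → Fin n → ℝ) (η : Fin n → ℝ) (y : Fin n → ℝ) : ℝ :=
  ∑ j, η j * Real.exp (lin (p j) y)

/-- The damping factor `exp (-δ ∑ exp ⟨p j, y⟩)`. -/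
def damp (p : Fin n → Fin n → ℝ) (δ : ℝ) (y : Fin n → ℝ) : ℝ :=
  Real.exp (-(δ * ∑ j, Real.exp (lin (p j) y)))

lemma wt_mul_damp (hγ : ∑ k, γ k • p k = fun _ => 1) (δ : ℝ) (y : Fin n → ℝ) :
    wt y * damp p δ y
      = ∏ k, Real.exp (γ k * lin (p k) y) * Real.exp (-(δ * Real.exp (lin (p k) y))) := by
  rw [wt_eq_prod hγ, damp, Finset.prod_mul_distrib, Finset.mul_sum, ← Finset.sum_neg_distrib,
    Real.exp_sum Finset.univ fun k => -(δ * Real.exp (lin (p k) y))]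

lemma integrable_damp (hp : LinearIndependent ℝ p) (hγ : ∑ k, γ k • p k = fun _ => 1)
    (hpos : ∀ k, 0 < γ k) {δ : ℝ} (hδ : 0 < δ) :
    Integrable fun y => wt y • (damp p δ y : ℂ) := by
  have h := (integrable_prod_lin hp fun k => integrable_exp_gamma (hpos k) hδ).ofReal (𝕜 := ℂ)
  refine h.congr (ae_of_all _ fun y => ?_)
  simp only [Complex.real_smul, ← wt_mul_damp hγ]
  exact Complex.ofReal_mul _ _

lemma osc_model (hp : LinearIndependent ℝ p) (hγ : ∑ k, γ k • p k = fun _ => 1)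
    (hpos : ∀ k, 0 < γ k) (η : Fin n → ℝ) {δ : ℝ} (hδ : 0 < δ) :
    osc (modelF p η) (fun y => (damp p δ y : ℂ)) = (|(Matrix.of p).det|⁻¹ : ℝ) *
      ∏ k, ((1 / ((δ : ℂ) - I * η k)) ^ (γ k : ℂ) * Complex.Gamma (γ k)) := by
  have h := integral_prod_lin hp fun k v =>
    (Real.exp (γ k * v) : ℂ) * Complex.exp (-(((δ : ℂ) - I * η k) * Real.exp v))
  simp only [fun k => integral_exp_gamma (r := (δ : ℂ) - I * η k) (hpos k) (by simpa using hδ)] at h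
  rw [← h, osc]
  refine integral_congr_ae (ae_of_all _ fun y => ?_)
  simp only [Complex.real_smul, ← Complex.ofReal_mul, wt_mul_damp hγ]
  rw [modelF, Complex.ofReal_prod, Complex.ofReal_sum, Finset.mul_sum, Complex.exp_sum,
    ← Finset.prod_mul_distrib]
  refine Finset.prod_congr rfl fun k _ => ?_
  rw [Complex.ofReal_mul (Real.exp _), mul_left_comm, Complex.ofReal_exp (-_), ← Complex.exp_add]
  congr 2
  push_cast
  ring

lemma one_div_cpow {x : ℝ} (hx : x ≠ 0) (g : ℝ) :
    (1 / (0 - I * x)) ^ (g : ℂ) = ((|x| ^ (-g) : ℝ) : ℂ) *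
      Complex.exp ((Real.sign x : ℂ) * (Real.pi : ℂ) * I * (g : ℂ) / 2) := by
  have hx' : 0 < |x| := abs_pos.2 hx
  have e1 : 1 / (0 - I * (x : ℂ)) = ((|x|⁻¹ : ℝ) : ℂ) * ((Real.sign x : ℂ) * I) := by
    have hxc : (x : ℂ) ≠ 0 := by exact_mod_cast hx
    have e0 : 1 / (0 - I * (x : ℂ)) = (x : ℂ)⁻¹ * I := by
      rw [zero_sub, ← neg_mul, one_div, mul_inv, inv_neg, Complex.inv_I, neg_neg, mul_comm]
    rw [e0, ← mul_assoc, ← Complex.ofReal_mul, ← Complex.ofReal_inv]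
    congr 2
    rcases hx.lt_or_gt with h | h
    · rw [Real.sign_of_neg h, abs_of_neg h]; field_simp
    · rw [Real.sign_of_pos h, abs_of_pos h, mul_one]
  have hlog : Complex.log ((Real.sign x : ℂ) * I) = (Real.sign x : ℂ) * (Real.pi : ℂ) * I / 2 := by
    rcases hx.lt_or_gt with h | h
    · rw [Real.sign_of_neg h]
      simp only [Complex.ofReal_neg, Complex.ofReal_one, neg_one_mul, Complex.log_neg_I]; ring
    · rw [Real.sign_of_pos h]
      simp only [Complex.ofReal_one, one_mul, Complex.log_I]; ring
  have hne : (Real.sign x : ℂ) * I ≠ 0 := by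
    rcases hx.lt_or_gt with h | h
    · simp [Real.sign_of_neg h]
    · simp [Real.sign_of_pos h]
  have hne' : ((|x|⁻¹ : ℝ) : ℂ) * ((Real.sign x : ℂ) * I) ≠ 0 :=
    mul_ne_zero (by exact_mod_cast (inv_pos.2 hx').ne') hne
  rw [e1, Complex.cpow_def_of_ne_zero hne', Complex.log_ofReal_mul (inv_pos.2 hx') hne, hlog,
    Real.rpow_def_of_pos hx', Complex.ofReal_exp, ← Complex.exp_add, Real.log_inv]
  congr 1
  push_cast
  ring

end Model

/-! ### Uniform admissibility of the damped model -/

open scoped ContDiff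

section ModelAdm

variable {n : ℕ} {p : Fin n → Fin n → ℝ} {γ : Fin n → ℝ}

/-- The functions `x ^ m * exp (-x)` at `x = exp s`; this family is closed under differentiation up
to linear combinations. -/
def expDecay (m : ℕ) (s : ℝ) : ℝ := Real.exp (m * s - Real.exp s)

lemma expDecay_contDiff (m : ℕ) : ContDiff ℝ ∞ (expDecay m) := by
  unfold expDecay; fun_prop

lemma deriv_expDecay (m : ℕ) :
    deriv (expDecay m) = fun s => m * expDecay m s - expDecay (m + 1) s := by
  funext s
  have h : HasDerivAt (expDecay m) (Real.exp (m * s - Real.exp s) * (m * 1 - Real.exp s)) s :=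
    (((hasDerivAt_id s).const_mul (m : ℝ)).sub (Real.hasDerivAt_exp s)).exp
  rw [h.deriv, expDecay, expDecay, mul_sub, ← Real.exp_add]
  push_cast
  rw [show (m : ℝ) * s - Real.exp s + s = (m + 1) * s - Real.exp s by ring]
  ring

lemma expDecay_le (m : ℕ) (s : ℝ) : |expDecay m s| ≤ m.factorial := by
  rw [expDecay, abs_of_pos (Real.exp_pos _), Real.exp_sub, Real.exp_nat_mul]
  have h := Real.pow_div_factorial_le_exp (Real.exp s) (Real.exp_pos s).le m
  rw [div_le_iff₀ (by positivity)] at h ⊢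
  linarith

lemma iteratedDeriv_expDecay (k : ℕ) : ∀ m, ∃ C, ∀ s, |iteratedDeriv k (expDecay m) s| ≤ C := by
  induction k with
  | zero => exact fun m => ⟨m.factorial, fun s => by simpa using expDecay_le m s⟩
  | succ k ih =>
    intro m
    obtain ⟨C1, h1⟩ := ih m
    obtain ⟨C2, h2⟩ := ih (m + 1)
    refine ⟨m * C1 + C2, fun s => ?_⟩
    have hc : ∀ m, ContDiffAt ℝ k (expDecay m) s := fun m =>
      ((expDecay_contDiff m).of_le (by exact_mod_cast le_top)).contDiffAt
    rw [iteratedDeriv_succ', deriv_expDecay,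
      iteratedDeriv_fun_sub (contDiffAt_const.mul (hc m)) (hc (m + 1)),
      iteratedDeriv_const_mul_field]
    refine (abs_sub _ _).trans (add_le_add ?_ (h2 s))
    rw [abs_mul, Nat.abs_cast]
    exact mul_le_mul_of_nonneg_left (h1 s) (Nat.cast_nonneg m)

lemma expDecay_jet (K : ℕ) : ∃ C, 0 ≤ C ∧ ∀ s, JetLe K (expDecay 0) C s := by
  choose C hC using fun k => iteratedDeriv_expDecay k 0
  have hC0 : ∀ k, 0 ≤ C k := fun k => (abs_nonneg _).trans (hC k 0)
  refine ⟨∑ k ∈ Finset.range (K + 1), C k, Finset.sum_nonneg fun k _ => hC0 k, fun s k hk => ?_⟩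
  rw [norm_iteratedFDeriv_eq_norm_iteratedDeriv]
  exact (hC k s).trans (Finset.single_le_sum (f := C) (fun k _ => hC0 k)
    (Finset.mem_range.2 (by omega)))

lemma prod_jet {V ι : Type*} [NormedAddCommGroup V] [NormedSpace ℝ V] (K : ℕ) (s : Finset ι)
    {f : ι → V → ℝ} (hf : ∀ i, ContDiff ℝ ∞ (f i))
    (h : ∀ i, ∃ C, 0 ≤ C ∧ ∀ v, JetLe K (f i) C v) :
    ∃ C, 0 ≤ C ∧ ∀ v, JetLe K (fun v => ∏ i ∈ s, f i v) C v := by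
  induction s using Finset.induction_on with
  | empty => exact ⟨1, zero_le_one, fun v => by simpa using JetLe.const K (1 : ℝ) v⟩
  | insert i s hi ih =>
    obtain ⟨A, hA, hA'⟩ := h i
    obtain ⟨B, hB, hB'⟩ := ih
    refine ⟨2 ^ K * (A * B), by positivity, fun v => ?_⟩
    simp only [Finset.prod_insert hi]
    exact JetLe.smul (hf i) (contDiff_prod fun j _ => hf j) (hA' v) (hB' v)

/-- The damping factors are translates of one fixed function, composed with a linear map. -/
lemma damp_eq (p : Fin n → Fin n → ℝ) {δ : ℝ} (hδ : 0 < δ) (y : Fin n → ℝ) :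
    damp p δ y = ∏ k, expDecay 0
      ((ContinuousLinearMap.pi fun k => lin (p k) : (Fin n → ℝ) →L[ℝ] Fin n → ℝ) y k
        + Real.log δ) := by
  simp only [expDecay, Nat.cast_zero, zero_mul, zero_sub, Real.exp_add, Real.exp_log hδ,
    ContinuousLinearMap.coe_pi', ← Real.exp_sum, damp, Finset.mul_sum]
  rw [Finset.sum_neg_distrib]
  simp only [mul_comm δ]

lemma damp_contDiff_real (p : Fin n → Fin n → ℝ) (δ : ℝ) : ContDiff ℝ ∞ (damp p δ) := by
  unfold damp; fun_prop

lemma damp_contDiff (p : Fin n → Fin n → ℝ) (δ : ℝ) :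
    ContDiff ℝ ∞ (fun y => (damp p δ y : ℂ)) :=
  Complex.ofRealCLM.contDiff.comp (damp_contDiff_real p δ)

lemma damp_jet (p : Fin n → Fin n → ℝ) (K : ℕ) : ∃ C, 0 ≤ C ∧ ∀ δ, 0 < δ → ∀ y,
    JetLe K (fun y => (damp p δ y : ℂ)) C y := by
  obtain ⟨C, hC, h1⟩ := expDecay_jet K
  have hproj : ∀ k : Fin n, ContDiff ℝ ∞ fun v : Fin n → ℝ => expDecay 0 (v k) := fun k =>
    (expDecay_contDiff 0).comp (contDiff_apply ℝ ℝ k)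
  obtain ⟨D, hD, h2⟩ := prod_jet K Finset.univ hproj fun k =>
    ⟨C * max 1 ‖ContinuousLinearMap.proj (R := ℝ) (φ := fun _ : Fin n => ℝ) k‖ ^ K, by positivity,
      fun v => by
        have := JetLe.comp_affine (ContinuousLinearMap.proj (R := ℝ) (φ := fun _ : Fin n => ℝ) k) 0
          (v := v) (expDecay_contDiff 0) (h1 _)
        simpa using this⟩
  set L : (Fin n → ℝ) →L[ℝ] Fin n → ℝ := ContinuousLinearMap.pi fun k => lin (p k) with hL
  refine ⟨‖Complex.ofRealCLM‖ * (D * max 1 ‖L‖ ^ K), by positivity, fun δ hδ y => ?_⟩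
  have h3 := JetLe.comp_affine L (fun _ => Real.log δ) (v := y)
    (contDiff_prod fun k _ => hproj k) (h2 _)
  have h4 : (fun y => ∏ k, expDecay 0 ((L y + (fun _ => Real.log δ : Fin n → ℝ)) k)) = damp p δ := by
    funext y
    rw [damp_eq p hδ]
    rfl
  rw [h4] at h3
  exact h3.clm_comp Complex.ofRealCLM (damp_contDiff_real p δ)

/-- The phase size of the model. -/
def modelM (p : Fin n → Fin n → ℝ) (y : Fin n → ℝ) : ℝ := ∑ j, Real.exp (lin (p j) y)

lemma modelF_contDiff (p : Fin n → Fin n → ℝ) (η : Fin n → ℝ) : ContDiff ℝ ∞ (modelF p η) := by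
  unfold modelF; fun_prop

lemma pd_modelF (p : Fin n → Fin n → ℝ) (η : Fin n → ℝ) (i : Fin n) (y : Fin n → ℝ) :
    pd i (modelF p η) y = ∑ j, (η j * p j i) * Real.exp (lin (p j) y) := by
  have h : HasFDerivAt (modelF p η)
      (∑ j, η j • (Real.exp (lin (p j) y) • lin (p j))) y :=
    HasFDerivAt.fun_sum fun j _ => ((lin (p j)).hasFDerivAt.exp).const_mul (η j)
  rw [pd, h.fderiv, _root_.sum_apply]
  refine Finset.sum_congr rfl fun j _ => ?_
  have h1 : lin (p j) (Pi.single i 1) = p j i := by simp [lin_apply, Pi.single_apply]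
  simp only [_root_.smul_apply, smul_eq_mul, h1]
  ring

lemma modelF_jet (p : Fin n → Fin n → ℝ) (η : Fin n → ℝ) (K : ℕ) : ∃ C, 0 ≤ C ∧ ∀ y i,
    JetLe K (pd i (modelF p η)) (C * modelM p y) y := by
  set B : ℝ := ∑ j, ∑ i, |η j * p j i| * max 1 ‖lin (p j)‖ ^ K with hB
  refine ⟨B, by positivity, fun y i => ?_⟩
  have h1 : ∀ j, JetLe K (fun y => (η j * p j i) • Real.exp (lin (p j) y))
      (|η j * p j i| * (Real.exp (lin (p j) y) * max 1 ‖lin (p j)‖ ^ K)) y := fun j k hk => by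
    have hc : ContDiffAt ℝ k (fun y => Real.exp (lin (p j) y)) y := by fun_prop
    have h2 := JetLe.exp K (lin (p j)) 0 y k hk
    simp only [add_zero] at h2
    rw [iteratedFDeriv_const_smul_apply' hc, norm_smul, Real.norm_eq_abs]
    gcongr
  have h2 := JetLe.sum Finset.univ (fun j _ => by fun_prop) fun j _ => h1 j
  have h3 : pd i (modelF p η) = fun y => ∑ j, (η j * p j i) • Real.exp (lin (p j) y) :=
    funext fun y => pd_modelF p η i y
  rw [h3]
  refine h2.mono le_rfl ?_
  rw [modelM, Finset.mul_sum]
  refine Finset.sum_le_sum fun j _ => ?_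
  rw [mul_left_comm, mul_comm]
  refine mul_le_mul_of_nonneg_right ?_ (Real.exp_pos _).le
  calc |η j * p j i| * max 1 ‖lin (p j)‖ ^ K
      ≤ ∑ i, |η j * p j i| * max 1 ‖lin (p j)‖ ^ K :=
        Finset.single_le_sum (f := fun i => |η j * p j i| * max 1 ‖lin (p j)‖ ^ K)
          (fun i _ => by positivity) (Finset.mem_univ i)
    _ ≤ B := Finset.single_le_sum
        (f := fun j => ∑ i, |η j * p j i| * max 1 ‖lin (p j)‖ ^ K)
          (fun i _ => by positivity) (Finset.mem_univ j)

/-- Since the `p j` are linearly independent, the gradient of the model phase is of full size. -/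
lemma modelF_lower (hp : LinearIndependent ℝ p) {η : Fin n → ℝ} (hη : ∀ j, η j ≠ 0) :
    ∃ c, 0 < c ∧ ∀ y, c * modelM p y ^ 2 ≤ ∑ i, pd i (modelF p η) y * pd i (modelF p η) y := by
  set T := Matrix.vecMulLinear (Matrix.of p) with hT
  have hinj : Function.Injective T := Matrix.vecMul_injective_iff_isUnit.2
    (Matrix.linearIndependent_rows_iff_isUnit.1 hp : IsUnit (Matrix.of p))
  obtain ⟨K, hK, hanti⟩ := T.exists_antilipschitzWith (LinearMap.ker_eq_bot.2 hinj)
  set B : ℝ := ∑ j, |η j|⁻¹ with hB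
  have hB0 : 0 ≤ B := by positivity
  refine ⟨((B * K) ^ 2 + 1)⁻¹, by positivity, fun y => ?_⟩
  set z : Fin n → ℝ := fun j => η j * Real.exp (lin (p j) y) with hz
  have hTz : ∀ i, pd i (modelF p η) y = T z i := by
    intro i
    rw [pd_modelF]
    exact Finset.sum_congr rfl fun j _ => mul_right_comm _ _ _
  have h1 : modelM p y ≤ B * ‖z‖ := by
    rw [modelM, hB, Finset.sum_mul]
    refine Finset.sum_le_sum fun j _ => ?_
    have h2 : |η j| * Real.exp (lin (p j) y) ≤ ‖z‖ := by
      refine le_trans (le_of_eq ?_) (norm_le_pi_norm z j)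
      rw [hz, Real.norm_eq_abs, abs_mul, abs_of_pos (Real.exp_pos _)]
    have h3 : 0 < |η j| := abs_pos.2 (hη j)
    rw [inv_mul_eq_div, le_div_iff₀ h3, mul_comm]
    exact h2
  have h2 : ‖z‖ ≤ K * ‖T z‖ := by
    have := hanti.le_mul_dist z 0
    simpa using this
  have h3 : ‖T z‖ ^ 2 ≤ ∑ i, T z i * T z i := by
    have h4 : ‖T z‖ ≤ √(∑ i, T z i * T z i) := by
      refine (pi_norm_le_iff_of_nonneg (Real.sqrt_nonneg _)).2 fun i => ?_
      rw [Real.norm_eq_abs]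
      refine Real.abs_le_sqrt ?_
      rw [sq]
      exact Finset.single_le_sum (f := fun i => T z i * T z i)
        (fun i _ => mul_self_nonneg _) (Finset.mem_univ i)
    calc ‖T z‖ ^ 2 ≤ √(∑ i, T z i * T z i) ^ 2 := by gcongr
      _ = _ := Real.sq_sqrt (Finset.sum_nonneg fun i _ => mul_self_nonneg _)
  simp only [hTz]
  have h5 : modelM p y ≤ B * K * ‖T z‖ := by
    rw [mul_assoc]; exact h1.trans (mul_le_mul_of_nonneg_left h2 hB0)
  have h6 : 0 ≤ modelM p y := Finset.sum_nonneg fun j _ => (Real.exp_pos _).le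
  rw [inv_mul_le_iff₀ (by positivity)]
  calc modelM p y ^ 2 ≤ (B * K * ‖T z‖) ^ 2 := by gcongr
    _ = (B * K) ^ 2 * ‖T z‖ ^ 2 := by ring
    _ ≤ ((B * K) ^ 2 + 1) * ‖T z‖ ^ 2 := by
      refine mul_le_mul_of_nonneg_right (by linarith) (sq_nonneg _)
    _ ≤ _ := by gcongr

lemma model_adm (hp : LinearIndependent ℝ p) (hγ : ∑ k, γ k • p k = fun _ => 1)
    (hpos : ∀ k, 0 < γ k) {η : Fin n → ℝ} (hη : ∀ j, η j ≠ 0) (K : ℕ) :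
    ∃ C c, 0 ≤ C ∧ 0 < c ∧ ∀ δ, 0 < δ →
      Adm p K C c (modelF p η) (fun y => (damp p δ y : ℂ)) (modelM p) := by
  obtain ⟨C1, hC1, h1⟩ := modelF_jet p η K
  obtain ⟨C2, hC2, h2⟩ := damp_jet p K
  obtain ⟨c, hc, h3⟩ := modelF_lower hp hη
  have hM : ∀ v, 0 ≤ modelM p v := fun v => Finset.sum_nonneg fun j _ => (Real.exp_pos _).le
  refine ⟨max C1 C2, c, le_max_of_le_left hC1, hc, fun δ hδ => ?_⟩
  exact
    { smoothF := modelF_contDiff p η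
      smoothΨ := damp_contDiff p δ
      int := integrable_damp hp hγ hpos hδ
      M_nonneg := hM
      M_ge := fun v j => Finset.single_le_sum (f := fun j => Real.exp (lin (p j) v))
        (fun j _ => (Real.exp_pos _).le) (Finset.mem_univ j)
      jetF := fun v i => (h1 v i).mono le_rfl
        (mul_le_mul_of_nonneg_right (le_max_left _ _) (hM v))
      jetΨ := fun v => (h2 δ hδ v).mono le_rfl (le_max_right _ _)
      lower := fun v _ => h3 v }

lemma damp_tendsto (p : Fin n → Fin n → ℝ) (y : Fin n → ℝ) :
    Tendsto (fun δ => (damp p δ y : ℂ)) (𝓝[>] 0) (𝓝 1) := by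
  have hc : Continuous fun δ => (damp p δ y : ℂ) := by
    unfold damp; fun_prop
  exact (hc.tendsto' 0 1 (by simp [damp])).mono_left nhdsWithin_le_nhds

lemma osc_model_tendsto (hp : LinearIndependent ℝ p) (hγ : ∑ k, γ k • p k = fun _ => 1)
    (hpos : ∀ k, 0 < γ k) {η : Fin n → ℝ} (hη : ∀ j, η j ≠ 0) :
    Tendsto (fun δ => osc (modelF p η) (fun y => (damp p δ y : ℂ))) (𝓝[>] 0)
      (𝓝 ((|(Matrix.of p).det|⁻¹ : ℝ) * ∏ k, ((((|η k| ^ (-γ k) : ℝ) : ℂ) *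
        Complex.exp ((Real.sign (η k) : ℂ) * (Real.pi : ℂ) * I * (γ k : ℂ) / 2)) *
          (Real.Gamma (γ k) : ℂ)))) := by
  have h1 : ∀ k, Tendsto (fun δ : ℝ => (1 / ((δ : ℂ) - I * η k)) ^ (γ k : ℂ)) (𝓝[>] 0)
      (𝓝 ((1 / (0 - I * η k)) ^ (γ k : ℂ))) := by
    intro k
    have hne : (0 : ℂ) - I * η k ≠ 0 := by
      rw [zero_sub, neg_ne_zero]
      exact mul_ne_zero I_ne_zero (by exact_mod_cast hη k)
    have hc : ContinuousAt (fun δ : ℝ => 1 / ((δ : ℂ) - I * η k)) 0 :=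
      continuousAt_const.div (by fun_prop) (by simpa using hne)
    refine Tendsto.mono_left ?_ nhdsWithin_le_nhds
    have h2 : Tendsto (fun δ : ℝ => 1 / ((δ : ℂ) - I * η k)) (𝓝 0)
        (𝓝 (1 / (0 - I * η k))) := by simpa [ContinuousAt] using hc
    refine h2.cpow tendsto_const_nhds (Or.inr ?_)
    simp only [zero_sub, one_div, Complex.inv_im, Complex.neg_im, Complex.mul_im, Complex.I_re,
      Complex.I_im, Complex.ofReal_re, zero_mul, one_mul, zero_add, neg_neg]
    refine div_ne_zero (hη k) ?_
    rw [zero_sub] at hne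
    exact (Complex.normSq_pos.2 hne).ne'
  simp only [one_div_cpow (hη _)] at h1
  have h2 := (tendsto_finsetProd Finset.univ fun k _ =>
    (h1 k).mul_const (Complex.Gamma (γ k))).const_mul (((|(Matrix.of p).det|⁻¹ : ℝ)) : ℂ)
  simp only [Complex.Gamma_ofReal] at h2
  refine h2.congr' ?_
  filter_upwards [self_mem_nhdsWithin] with δ hδ
  rw [osc_model hp hγ hpos η hδ]
  simp only [Complex.Gamma_ofReal]

end ModelAdm

/-! ### Decomposition into orthants -/

open scoped ContDiff

section Orthants

variable {n : ℕ}

/-- The open orthant with sign vector `β`. -/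
def orth (β : Fin n → ℝ) : Set (Fin n → ℝ) := {x | ∀ i, 0 < β i * x i}

/-- The sign vector in `{1, -1}ⁿ` encoded by a Boolean vector. -/
def sgnv (β : Fin n → Bool) : Fin n → ℝ := fun i => if β i then 1 else -1

lemma abs_sgnv (β : Fin n → Bool) (i : Fin n) : |sgnv β i| = 1 := by
  unfold sgnv
  split_ifs <;> simp

lemma expMap_injective {β : Fin n → ℝ} (hβ : ∀ i, |β i| = 1) (c : Fin n → ℝ) :
    Function.Injective (expMap β c) := by
  intro y z h
  funext i
  have h1 := congrFun h i
  have h2 : β i ≠ 0 := fun h0 => by simpa [h0] using hβ i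
  simpa [expMap, h2] using h1

lemma sq_of_abs_one {b : ℝ} (hb : |b| = 1) : b * b = 1 := by
  rw [← abs_mul_abs_self, hb, one_mul]

lemma expMap_ne_zero {β : Fin n → ℝ} (hβ : ∀ i, |β i| = 1) (c y : Fin n → ℝ) (i : Fin n) :
    expMap β c y i ≠ 0 :=
  mul_ne_zero (fun h0 => by simpa [h0] using hβ i) (Real.exp_pos _).ne'

lemma image_expMap {β : Fin n → ℝ} (hβ : ∀ i, |β i| = 1) (c : Fin n → ℝ) :
    expMap β c '' Set.univ = orth β := by
  ext x
  simp only [Set.image_univ, Set.mem_range, orth, Set.mem_ofPred_eq]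
  constructor
  · rintro ⟨y, rfl⟩ i
    rw [expMap, ← mul_assoc, sq_of_abs_one (hβ i), one_mul]
    exact Real.exp_pos _
  · intro h
    refine ⟨fun i => Real.log (β i * x i) - c i, funext fun i => ?_⟩
    rw [expMap, sub_add_cancel, Real.exp_log (h i), ← mul_assoc, sq_of_abs_one (hβ i), one_mul]

lemma abs_det_expMap {β : Fin n → ℝ} (hβ : ∀ i, |β i| = 1) (c y : Fin n → ℝ) :
    |(ContinuousLinearMap.pi fun i => expMap β c y i •
      (ContinuousLinearMap.proj i : (Fin n → ℝ) →L[ℝ] ℝ)).det|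
      = Real.exp (∑ i, c i) * wt y := by
  have h1 : ((ContinuousLinearMap.pi fun i => expMap β c y i •
      (ContinuousLinearMap.proj i : (Fin n → ℝ) →L[ℝ] ℝ) : (Fin n → ℝ) →L[ℝ] (Fin n → ℝ)) :
        (Fin n → ℝ) →ₗ[ℝ] (Fin n → ℝ)) = Matrix.toLin' (Matrix.diagonal (expMap β c y)) := by
    refine LinearMap.ext fun v => funext fun i => ?_
    simp [Matrix.mulVec_diagonal]
  rw [ContinuousLinearMap.det, h1, LinearMap.det_toLin', Matrix.det_diagonal, Finset.abs_prod]
  simp only [expMap, abs_mul, hβ, one_mul, Real.abs_exp, wt]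
  rw [← Real.exp_sum, ← Real.exp_add, Finset.sum_add_distrib, add_comm]

lemma setIntegral_orth {β : Fin n → ℝ} (hβ : ∀ i, |β i| = 1) (c : Fin n → ℝ)
    (g : (Fin n → ℝ) → ℂ) :
    ∫ x in orth β, g x = Real.exp (∑ i, c i) • ∫ y, wt y • g (expMap β c y) := by
  rw [← image_expMap hβ c, integral_image_eq_integral_abs_det_fderiv_smul volume
    MeasurableSet.univ (fun y _ => (expMap_hasFDerivAt β c y).hasFDerivWithinAt)
    (expMap_injective hβ c).injOn, setIntegral_univ, ← integral_smul]
  refine integral_congr_ae (ae_of_all _ fun y => ?_)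
  simp only [abs_det_expMap hβ, mul_smul]

lemma integrable_comp_expMap {β : Fin n → ℝ} (hβ : ∀ i, |β i| = 1) (c : Fin n → ℝ)
    {g : (Fin n → ℝ) → ℂ} (hg : Integrable g) :
    Integrable fun y => wt y • g (expMap β c y) := by
  have h1 := (integrableOn_image_iff_integrableOn_abs_det_fderiv_smul volume
    MeasurableSet.univ (fun y _ => (expMap_hasFDerivAt β c y).hasFDerivWithinAt)
    (expMap_injective hβ c).injOn g).1 hg.integrableOn
  rw [integrableOn_univ] at h1
  simp only [abs_det_expMap hβ, mul_smul] at h1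
  have h2 := h1.smul (Real.exp (∑ i, c i))⁻¹
  refine h2.congr (ae_of_all _ fun y => ?_)
  simp only [Pi.smul_apply]
  rw [smul_smul, inv_mul_cancel₀ (Real.exp_pos _).ne', one_smul]

lemma measurableSet_orth (β : Fin n → ℝ) : MeasurableSet (orth β) := by
  have : orth β = ⋂ i, {x | 0 < β i * x i} := by ext; simp [orth]
  rw [this]
  exact MeasurableSet.iInter fun i =>
    measurableSet_lt measurable_const ((measurable_pi_apply i).const_mul _)

lemma integral_eq_sum_orth {g : (Fin n → ℝ) → ℂ} (hg : Integrable g) :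
    ∫ x, g x = ∑ β : Fin n → Bool, ∫ x in orth (sgnv β), g x := by
  have h1 : (⋃ β : Fin n → Bool, orth (sgnv β)) =ᵐ[volume] (Set.univ : Set (Fin n → ℝ)) := by
    rw [eventuallyEq_univ, mem_ae_iff, ← mem_ae_iff]
    have h2 : ∀ᵐ x : Fin n → ℝ, ∀ i, x i ≠ 0 :=
      ae_all_iff.2 fun i =>
      Measure.ae_eval_ne (μ := fun _ : Fin n => (volume : Measure ℝ)) i 0
    filter_upwards [h2] with x hx
    refine Set.mem_iUnion.2 ⟨fun i => decide (0 < x i), fun i => ?_⟩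
    by_cases h : 0 < x i
    · simp [sgnv, h]
    · have : x i < 0 := lt_of_le_of_ne (not_lt.1 h) (hx i)
      simp [sgnv, h, this]
  rw [← setIntegral_univ, ← setIntegral_congr_set h1, integral_iUnion_fintype
    (fun β => measurableSet_orth _) ?_ fun β => hg.integrableOn]
  intro β β' hne
  refine Set.disjoint_left.2 fun x hx hx' => hne (funext fun i => ?_)
  have h3 := hx i
  have h4 := hx' i
  simp only [sgnv] at h3 h4
  cases hb : β i <;> cases hb' : β' i <;> simp_all <;> linarith

end Orthants

/-! ### The limit on a single orthant -/

open scoped ContDiff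

section OneOrthant

variable {n : ℕ}

/-- The shift of the logarithmic coordinates which normalises monomials of `u`-weight one: in the
original coordinates it is the anisotropic dilation `x i ↦ t ^ (-u i) * x i`. -/
def shift (u : Fin n → ℝ) (t : ℝ) : Fin n → ℝ := fun i => -(u i * Real.log t)

lemma lin_shift (u : Fin n → ℝ) (t : ℝ) (g : Fin n → ℕ) :
    lin (fun i => (g i : ℝ)) (shift u t) = -(dotR u (toR g) * Real.log t) := by
  rw [lin_apply, dotR, Finset.sum_mul, ← Finset.sum_neg_distrib]
  refine Finset.sum_congr rfl fun i _ => ?_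
  simp only [shift, toR]; ring

lemma mul_mono_shift (β u y : Fin n → ℝ) (g : Fin n → ℕ) {t : ℝ} (ht : 0 < t) :
    t * mono g (expMap β (shift u t) y)
      = mono g β * Real.exp (lin (toR g) y) * t ^ (1 - dotR u (toR g)) := by
  have e : t * Real.exp (-(dotR u (toR g) * Real.log t)) = t ^ (1 - dotR u (toR g)) := by
    rw [Real.rpow_def_of_pos ht]
    nth_rewrite 1 [← Real.exp_log ht]
    rw [← Real.exp_add]
    congr 1; ring
  rw [mono_expMap, lin_shift, Real.exp_add, ← e]
  change t * (mono g β * (Real.exp (lin (toR g) y) * _)) = _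
  ring

lemma mul_abs_mono_shift {β : Fin n → ℝ} (hβ : ∀ i, |β i| = 1) (u y : Fin n → ℝ) (g : Fin n → ℕ)
    {t : ℝ} (ht : 0 < t) : t * |mono g (expMap β (shift u t) y)|
      = Real.exp (lin (toR g) y) * t ^ (1 - dotR u (toR g)) := by
  have h := congrArg abs (mul_mono_shift β u y g ht)
  rwa [abs_mul, abs_mul, abs_mul, abs_of_pos ht, abs_mono_sign hβ, one_mul, Real.abs_exp,
    abs_of_nonneg (Real.rpow_nonneg ht.le _)] at h

lemma expMap_shift_tendsto (β : Fin n → ℝ) {u : Fin n → ℝ} (hu : ∀ i, 0 < u i) (y : Fin n → ℝ) :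
    Tendsto (fun t => expMap β (shift u t) y) atTop (𝓝 0) := by
  refine tendsto_pi_nhds.2 fun i => ?_
  have h1 : Tendsto (fun t => y i + shift u t i) atTop atBot :=
    tendsto_atBot_add_const_left _ _
      (tendsto_neg_atTop_atBot.comp (Real.tendsto_log_atTop.const_mul_atTop (hu i)))
  simpa [expMap] using (Real.tendsto_exp_atBot.comp h1).const_mul (β i)

/-- After the dilation, only the monomials of weight one survive in the phase. -/
lemma phase_tendsto {av : Fin n → Fin n → ℕ} (havinj : Function.Injective av)
    {G : Finset (Fin n → ℕ)} (havG : ∀ k, av k ∈ G) {h : (Fin n → ℕ) → (Fin n → ℝ) → ℝ}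
    {a : (Fin n → ℕ) → ℝ} (hh : ∀ g ∈ G, ContDiff ℝ ∞ (h g) ∧ HasCompactSupport (h g) ∧ h g 0 = a g)
    {u : Fin n → ℝ} (hu : ∀ i, 0 < u i) (hu1 : ∀ k, dotR u (toR (av k)) = 1)
    (hge : ∀ g ∈ G, 1 ≤ dotR u (toR g)) (heq : ∀ g ∈ G, dotR u (toR g) = 1 → ∃ k, g = av k)
    (β y : Fin n → ℝ) :
    Tendsto (fun t => t * ∑ g ∈ G, mono g (expMap β (shift u t) y) * h g (expMap β (shift u t) y))
      atTop (𝓝 (modelF (fun k => toR (av k)) (fun k => a (av k) * mono (av k) β) y)) := by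
  have hX := expMap_shift_tendsto β hu y
  have h1 : ∀ g ∈ G, Tendsto (fun t => (t * mono g (expMap β (shift u t) y)) *
      h g (expMap β (shift u t) y)) atTop
      (𝓝 (if ∃ k, g = av k then a g * mono g β * Real.exp (lin (toR g) y) else 0)) := by
    intro g hg
    have h2 : Tendsto (fun t => h g (expMap β (shift u t) y)) atTop (𝓝 (a g)) := by
      rw [← (hh g hg).2.2]
      exact ((hh g hg).1.continuous.tendsto 0).comp hX
    have h3 : Tendsto (fun t => t * mono g (expMap β (shift u t) y)) atTop
        (𝓝 (if ∃ k, g = av k then mono g β * Real.exp (lin (toR g) y) else 0)) := by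
      have h4 : Tendsto (fun t : ℝ => t ^ (1 - dotR u (toR g))) atTop
          (𝓝 (if ∃ k, g = av k then 1 else 0)) := by
        split_ifs with hk
        · obtain ⟨k, rfl⟩ := hk
          simp [hu1]
        · have h5 : 1 < dotR u (toR g) :=
            lt_of_le_of_ne (hge g hg) fun h => hk (heq g hg h.symm)
          have := tendsto_rpow_neg_atTop (y := dotR u (toR g) - 1) (by linarith)
          simpa using this
      have h6 := h4.const_mul (mono g β * Real.exp (lin (toR g) y))
      simp only [mul_ite, mul_one, mul_zero] at h6
      refine h6.congr' ?_
      filter_upwards [eventually_gt_atTop 0] with t ht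
      rw [mul_mono_shift β u y g ht]
    convert h3.mul h2 using 2
    split_ifs <;> ring
  have h7 := tendsto_finsetSum G h1
  have e : ∑ g ∈ G, (if ∃ k, g = av k then a g * mono g β * Real.exp (lin (toR g) y) else 0)
      = modelF (fun k => toR (av k)) (fun k => a (av k) * mono (av k) β) y := by
    have h8 : Finset.univ.image av = G.filter fun g => ∃ k, g = av k := by
      ext g
      simp only [Finset.mem_image, Finset.mem_univ, true_and, Finset.mem_filter]
      exact ⟨fun ⟨k, hk⟩ => ⟨hk ▸ havG k, k, hk.symm⟩, fun ⟨_, k, hk⟩ => ⟨k, hk.symm⟩⟩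
    rw [← Finset.sum_filter, ← h8, Finset.sum_image fun _ _ _ _ hk => havinj hk]
    rfl
  rw [← e]
  refine h7.congr fun t => ?_
  rw [Finset.mul_sum]
  exact Finset.sum_congr rfl fun g _ => by ring

/-- The rescaled phases and amplitudes on an orthant are admissible, uniformly for `t ≥ 1`. -/
lemma rescaled_adm {av : Fin n → Fin n → ℕ}
    {G : Finset (Fin n → ℕ)} (havG : ∀ k, av k ∈ G) {h : (Fin n → ℕ) → (Fin n → ℝ) → ℝ}
    (hh : ∀ g ∈ G, ContDiff ℝ ∞ (h g) ∧ HasCompactSupport (h g))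
    {u : Fin n → ℝ} (hu1 : ∀ k, dotR u (toR (av k)) = 1)
    {c r : ℝ} (hlow : ∀ x : Fin n → ℝ, ‖x‖ < r → (∀ i, x i ≠ 0) →
      c * (∑ g ∈ G, |mono g x|) ^ 2 ≤ ∑ i, logd i (fun x => ∑ g ∈ G, mono g x * h g x) x ^ 2)
    {β : Fin n → ℝ} (hβ : ∀ i, |β i| = 1) {φ : (Fin n → ℝ) → ℝ} (hφ : ContDiff ℝ ∞ φ)
    (hφc : HasCompactSupport φ) (hsupp : ∀ x ∈ tsupport φ, ‖x‖ < r) (K : ℕ) :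
    ∃ C, 0 ≤ C ∧ ∀ t : ℝ, 0 < t → Adm (fun k => toR (av k)) K C c
      (fun y => t * ∑ g ∈ G, mono g (expMap β (shift u t) y) * h g (expMap β (shift u t) y))
      (fun y => (φ (expMap β (shift u t) y) : ℂ))
      (fun y => t * ∑ g ∈ G, |mono g (expMap β (shift u t) y)|) := by
  obtain ⟨C1, hC1, hj1⟩ := phase_jet K G h hh
  obtain ⟨C2, hC2, hj2⟩ := jet_comp_expMap K hφ hφc
  have hsm : ContDiff ℝ ∞ (fun x => ∑ g ∈ G, mono g x * h g x) :=
    ContDiff.sum fun g hg => (mono_contDiff g).mul (hh g hg).1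
  set L : ℝ := ‖Complex.ofRealCLM‖ with hL
  refine ⟨max C1 (L * C2), le_max_of_le_left hC1, fun t ht => ?_⟩
  have hX := expMap_contDiff β (shift u t)
  have hM0 : ∀ y, 0 ≤ t * ∑ g ∈ G, |mono g (expMap β (shift u t) y)| := fun y =>
    mul_nonneg ht.le (Finset.sum_nonneg fun g _ => abs_nonneg _)
  refine ⟨contDiff_const.mul (hsm.comp hX), Complex.ofRealCLM.contDiff.comp (hφ.comp hX), ?_, hM0,
    ?_, ?_, ?_, ?_⟩
  · have hint : Integrable fun x => (φ x : ℂ) :=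
      (hφ.continuous.integrable_of_hasCompactSupport hφc).ofReal
    exact integrable_comp_expMap hβ (shift u t) hint
  · intro v j
    have h1 := mul_abs_mono_shift hβ u v (av j) ht
    rw [hu1, sub_self, Real.rpow_zero, mul_one] at h1
    change Real.exp (lin (toR (av j)) v) ≤ _
    rw [← h1]
    gcongr
    exact Finset.single_le_sum (f := fun g => |mono g (expMap β (shift u t) v)|)
      (fun g _ => abs_nonneg _) (havG j)
  · intro v i
    exact (hj1 β (shift u t) v t hβ ht.le i).mono le_rfl
      (mul_le_mul_of_nonneg_right (le_max_left _ _) (hM0 v))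
  · intro v
    exact (JetLe.clm_comp Complex.ofRealCLM (hφ.comp hX) (hj2 β (shift u t) v)).mono le_rfl
      (le_max_right _ _)
  · intro v hv
    have h1 : expMap β (shift u t) v ∈ tsupport φ := by
      have h2 : tsupport (fun y => (φ (expMap β (shift u t) y) : ℂ)) ⊆
          expMap β (shift u t) ⁻¹' tsupport φ := by
        refine closure_minimal (fun y hy => ?_) ((isClosed_tsupport φ).preimage hX.continuous)
        refine subset_tsupport φ fun h0 => hy ?_
        simp [h0]
      exact h2 hv
    have h3 := hlow _ (hsupp _ h1) (expMap_ne_zero hβ _ _)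
    have h4 : ∀ i, pd i (fun y => t * ∑ g ∈ G, mono g (expMap β (shift u t) y) *
        h g (expMap β (shift u t) y)) v
        = t * logd i (fun x => ∑ g ∈ G, mono g x * h g x) (expMap β (shift u t) v) := by
      intro i
      rw [← pd_comp_expMap hsm, pd, pd, fderiv_const_mul]
      · rfl
      · exact (hsm.comp hX).differentiable (by simp) v
    simp only [h4]
    calc _ = t ^ 2 * (c * (∑ g ∈ G, |mono g (expMap β (shift u t) v)|) ^ 2) := by ring
      _ ≤ t ^ 2 * ∑ i, logd i (fun x => ∑ g ∈ G, mono g x * h g x) (expMap β (shift u t) v) ^ 2 := by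
        gcongr
      _ = _ := by
        rw [Finset.mul_sum]
        exact Finset.sum_congr rfl fun i _ => by ring

/-- The rescaled oscillatory integral over one orthant converges to the model integral. -/
lemma orthant_tendsto {av : Fin n → Fin n → ℕ} (havinj : Function.Injective av)
    (hp : LinearIndependent ℝ fun k => toR (av k)) {γ : Fin n → ℝ}
    (hγ : ∑ k, γ k • toR (av k) = fun _ => 1) (hpos : ∀ k, 0 < γ k)
    {G : Finset (Fin n → ℕ)} (havG : ∀ k, av k ∈ G) {h : (Fin n → ℕ) → (Fin n → ℝ) → ℝ}
    {a : (Fin n → ℕ) → ℝ} (hh : ∀ g ∈ G, ContDiff ℝ ∞ (h g) ∧ HasCompactSupport (h g) ∧ h g 0 = a g)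
    (ha : ∀ k, a (av k) ≠ 0)
    {u : Fin n → ℝ} (hu : ∀ i, 0 < u i) (hu1 : ∀ k, dotR u (toR (av k)) = 1)
    (hge : ∀ g ∈ G, 1 ≤ dotR u (toR g)) (heq : ∀ g ∈ G, dotR u (toR g) = 1 → ∃ k, g = av k)
    {c r : ℝ} (hc : 0 < c) (hlow : ∀ x : Fin n → ℝ, ‖x‖ < r → (∀ i, x i ≠ 0) →
      c * (∑ g ∈ G, |mono g x|) ^ 2 ≤ ∑ i, logd i (fun x => ∑ g ∈ G, mono g x * h g x) x ^ 2)
    {β : Fin n → ℝ} (hβ : ∀ i, |β i| = 1) {φ : (Fin n → ℝ) → ℝ} (hφ : ContDiff ℝ ∞ φ)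
    (hφc : HasCompactSupport φ) (hsupp : ∀ x ∈ tsupport φ, ‖x‖ < r) :
    Tendsto (fun t : ℝ => osc
        (fun y => t * ∑ g ∈ G, mono g (expMap β (shift u t) y) * h g (expMap β (shift u t) y))
        (fun y => (φ (expMap β (shift u t) y) : ℂ))) atTop
      (𝓝 (φ 0 * ((|(Matrix.of fun k => toR (av k)).det|⁻¹ : ℝ) *
        ∏ k, ((((|a (av k)| ^ (-γ k) : ℝ) : ℂ) *
          Complex.exp ((Real.sign (a (av k) * mono (av k) β) : ℂ) * (Real.pi : ℂ) * I *
            (γ k : ℂ) / 2)) * (Real.Gamma (γ k) : ℂ))))) := by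
  obtain ⟨N, hN⟩ : ∃ N : ℕ, ∀ k, γ k < N := by
    obtain ⟨N, hN⟩ := exists_nat_gt (∑ k, γ k)
    exact ⟨N, fun k => (Finset.single_le_sum (f := γ) (fun k _ => (hpos k).le)
      (Finset.mem_univ k)).trans_lt hN⟩
  have hη : ∀ k, a (av k) * mono (av k) β ≠ 0 := fun k => mul_ne_zero (ha k) fun h0 => by
    simpa [h0] using abs_mono_sign hβ (av k)
  obtain ⟨C, hC, hadm⟩ := rescaled_adm (u := u) havG (fun g hg => ⟨(hh g hg).1, (hh g hg).2.1⟩) hu1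
    hlow hβ hφ hφc hsupp (n * N)
  obtain ⟨C', c', hC', hc', hadm'⟩ := model_adm hp hγ hpos hη (n * N)
  have hJ := osc_model_tendsto hp hγ hpos hη
  simp only [abs_mul, abs_mono_sign hβ, mul_one] at hJ
  refine osc_tendsto (l' := 𝓝[>] (0 : ℝ)) (fun k => toR (av k)) N hC hc hC' hc' (integrable_majorant hp hγ hpos hN)
    _ _ _ ((eventually_gt_atTop 0).mono hadm) _ _ _
    (eventually_nhdsWithin_of_forall fun δ hδ => hadm' δ hδ) _ _
    (phase_tendsto havinj havG hh hu hu1 hge heq β) (fun y => ?_) (fun y => tendsto_const_nhds)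
    (damp_tendsto _) hJ
  exact (Complex.continuous_ofReal.tendsto _).comp
    ((hφ.continuous.tendsto 0).comp (expMap_shift_tendsto β hu y))

end OneOrthant

/-! ### The asymptotic formula -/

open Asymptotics in
/-- **Explicit formula** for the leading coefficient `μ(φ)` of the oscillating integral
when `τ₀` is a compact simplex of codimension `1` whose vertices `a₁,…,aₙ` are the only
support points of `f` on `τ₀`. -/
theorem explicit_formula_simplex
    {n : ℕ} (hn : 1 ≤ n)
    (f : (Fin n → ℝ) → ℝ) (a : (Fin n → ℕ) → ℝ)
    (hfa : ∀ᶠ x in 𝓝 (0 : Fin n → ℝ), HasSum (fun α => a α * ∏ i, x i ^ α i) (f x))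
    (hf0 : f 0 = 0) (hcrit : fderiv ℝ f 0 = 0)
    (hnc : ∃ α : Fin n → ℕ, α ≠ 0 ∧ a α ≠ 0)
    (Γ : Set (Fin n → ℝ)) (hΓ : Γ = newtonPolyhedron {α | a α ≠ 0})
    (hnd : NonDegenerateR a Γ)
    (t₀ s₀ : ℝ) (ht₀pos : 0 < t₀)
    (ht₀mem : (fun _ => t₀) ∈ Γ)
    (ht₀min : ∀ t : ℝ, 0 < t → (fun _ => t) ∈ Γ → t₀ ≤ t)
    (hs₀ : s₀ = -1 / t₀) (hs₀Z : ∀ m : ℤ, s₀ ≠ (m : ℝ))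
    (τ₀ : Set (Fin n → ℝ)) (hτface : IsFaceOf Γ τ₀)
    (hτmem : (fun _ => t₀) ∈ τ₀)
    (hτmin : ∀ τ : Set (Fin n → ℝ), IsFaceOf Γ τ → (fun _ => t₀) ∈ τ → τ₀ ⊆ τ)
    (hτcomp : IsCompact τ₀)
    (hcodim : faceDim τ₀ = n - 1)
    (av : Fin n → Fin n → ℕ) (havinj : Function.Injective av)
    (hτ₀ : τ₀ = convexHull ℝ (Set.range fun k => fun i => (av k i : ℝ)))
    (hvert : ∀ α : Fin n → ℕ, a α ≠ 0 → ((fun i => (α i : ℝ)) ∈ τ₀ ↔ ∃ k, α = av k))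
    (hεne : ∀ k, a (av k) ≠ 0)
    (A : Matrix (Fin n) (Fin n) ℝ) (hA : A = Matrix.of fun i k => (av k i : ℝ))
    (γ : Fin n → ℝ) (hγ : ∀ i, ∑ k, γ k * (av k i : ℝ) = 1) :
    LinearIndependent ℚ (fun k : Fin n => fun i : Fin n => (av k i : ℚ)) ∧
    (∀ γ' : Fin n → ℝ, (∀ i, ∑ k, γ' k * (av k i : ℝ) = 1) → γ' = γ) ∧
    (∀ k, 0 < γ k) ∧ (∑ k, γ k = -s₀) ∧
    ∃ U : Set (Fin n → ℝ), IsOpen U ∧ (0 : Fin n → ℝ) ∈ U ∧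
      ∀ φ : (Fin n → ℝ) → ℝ, ContDiff ℝ (⊤ : ℕ∞) φ → HasCompactSupport φ → tsupport φ ⊆ U →
        (fun t : ℝ =>
            (∫ x : Fin n → ℝ, Complex.exp (Complex.I * (t : ℂ) * (f x : ℂ)) * (φ x : ℂ)) -
            ((|A.det|⁻¹ * φ 0 * ∏ j, Real.Gamma (γ j) * |a (av j)| ^ (-(γ j)) : ℝ) : ℂ) *
              (∑ β : Fin n → Bool, ∏ j, Complex.exp
                (((Real.sign (a (av j) * ∏ k, (if β k then (1 : ℝ) else -1) ^ (av j k)) : ℝ) : ℂ) *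
                  (Real.pi : ℂ) * Complex.I * ((γ j : ℝ) : ℂ) / 2)) *
              ((t ^ s₀ : ℝ) : ℂ))
          =o[atTop] fun t : ℝ => (t ^ s₀ : ℝ) := by
  set S : Set (Fin n → ℕ) := {α | a α ≠ 0} with hS
  subst hΓ
  obtain ⟨G, h, hGa, hcov, -, hh, hdec⟩ := exists_decomposition hfa
  have hγ' : ∑ k, γ k • toR (av k) = fun _ => 1 := by
    funext i
    rw [← hγ i, Finset.sum_apply]
    rfl
  obtain ⟨hp, hpos, hsum, u, hu, hu1, hge, heq, havG, husum⟩ := simplex_face hn (S := S) hGa hcov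
    ht₀pos hτface hτmem hτmin hτcomp hcodim hτ₀ hvert hεne hγ'
  have hs : ∑ i, u i = -s₀ := by rw [husum, hsum, hs₀]; ring
  -- `A` has the vertices as columns, the linear forms of the model integral use them as rows.
  have hdet : A.det = (Matrix.of fun k => toR (av k)).det := by
    rw [← Matrix.det_transpose, hA]
    rfl
  refine ⟨?_, ?_, hpos, by rw [← husum, hs], ?_⟩
  · rw [Fintype.linearIndependent_iff]
    intro q hq k
    have h1 := Fintype.linearIndependent_iff.1 hp (fun k => (q k : ℝ)) (by
      funext i
      have h2 := congrFun hq i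
      simp only [Finset.sum_apply, Pi.smul_apply, smul_eq_mul, Pi.zero_apply, toR] at h2 ⊢
      exact_mod_cast h2) k
    exact_mod_cast h1
  · intro γ' hγ''
    funext k
    have h1 := Fintype.linearIndependent_iff.1 hp (fun k => γ' k - γ k) (by
      funext i
      simp only [Finset.sum_apply, Pi.smul_apply, smul_eq_mul, Pi.zero_apply, toR, sub_mul,
        Finset.sum_sub_distrib, hγ, hγ'', sub_self]) k
    exact sub_eq_zero.1 h1
  obtain ⟨c, hc, r, hr, hlow⟩ := logd_lower_bound hS hnd hGa hcov hh
  obtain ⟨r', hr', hdec'⟩ := Metric.eventually_nhds_iff_ball.1 hdec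
  refine ⟨Metric.ball 0 (min r r'), Metric.isOpen_ball, Metric.mem_ball_self (lt_min hr hr'), ?_⟩
  intro φ hφ hφc hφU
  have hlim := tendsto_finsetSum Finset.univ fun (β : Fin n → Bool) _ =>
    orthant_tendsto havinj hp hγ' hpos havG hh hεne hu hu1 hge heq hc hlow (abs_sgnv β) hφ hφc
      fun x hx => by
        simpa using (Metric.ball_subset_ball (min_le_left _ _) (hφU hx) : x ∈ Metric.ball 0 r)
  have hft : ContDiff ℝ (⊤ : ℕ∞) fun x => ∑ g ∈ G, mono g x * h g x :=
    ContDiff.sum fun g hg => (mono_contDiff g).mul (hh g hg).1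
  -- On the support of `φ` the phase may be replaced by its monomial decomposition; the Jacobian of
  -- the rescaled logarithmic coordinates is `exp (∑ y i) * t ^ s₀`.
  have hI : ∀ t : ℝ, 0 < t →
      (∫ x : Fin n → ℝ, Complex.exp (Complex.I * (t : ℂ) * (f x : ℂ)) * (φ x : ℂ))
        = ((t ^ s₀ : ℝ) : ℂ) * ∑ β : Fin n → Bool, osc
          (fun y => t * ∑ g ∈ G, mono g (expMap (sgnv β) (shift u t) y) *
            h g (expMap (sgnv β) (shift u t) y))
          (fun y => (φ (expMap (sgnv β) (shift u t) y) : ℂ)) := by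
    intro t ht
    set g : (Fin n → ℝ) → ℂ := fun x =>
      Complex.exp (Complex.I * ((t * ∑ g ∈ G, mono g x * h g x : ℝ) : ℂ)) * (φ x : ℂ) with hg
    have h1 : (∫ x : Fin n → ℝ, Complex.exp (Complex.I * (t : ℂ) * (f x : ℂ)) * (φ x : ℂ))
        = ∫ x, g x := by
      refine integral_congr_ae (ae_of_all _ fun x => ?_)
      by_cases hx : x ∈ tsupport φ
      · have h2 := hdec' x (Metric.ball_subset_ball (min_le_right _ _) (hφU hx))
        simp only [hg, ← h2]
        push_cast
        rw [mul_assoc]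
      · simp [hg, image_eq_zero_of_notMem_tsupport hx]
    have h3 : Integrable g := by
      have hcont : Continuous g := by
        have h4 := hft.continuous
        have h5 := hφ.continuous
        simp only [hg]
        fun_prop
      refine hcont.integrable_of_hasCompactSupport ?_
      exact (hφc.comp_left (g := fun s : ℝ => (s : ℂ)) Complex.ofReal_zero).mul_left
    have h6 : Real.exp (∑ i, shift u t i) = t ^ s₀ := by
      rw [Real.rpow_def_of_pos ht]
      simp only [shift]
      rw [Finset.sum_neg_distrib, ← Finset.sum_mul, hs]
      congr 1; ring
    rw [h1, integral_eq_sum_orth h3, Finset.mul_sum]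
    refine Finset.sum_congr rfl fun β _ => ?_
    rw [setIntegral_orth (abs_sgnv β) (shift u t), h6, Complex.real_smul]
    congr 1
    refine integral_congr_ae (ae_of_all _ fun y => ?_)
    simp only [hg, mul_smul_comm]
  have hμ : ∑ β : Fin n → Bool, ((φ 0 : ℂ) * ((|(Matrix.of fun k => toR (av k)).det|⁻¹ : ℝ) *
        ∏ k, ((((|a (av k)| ^ (-γ k) : ℝ) : ℂ) *
          Complex.exp ((Real.sign (a (av k) * mono (av k) (sgnv β)) : ℂ) * (Real.pi : ℂ) * I *
            (γ k : ℂ) / 2)) * (Real.Gamma (γ k) : ℂ))))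
      = ((|A.det|⁻¹ * φ 0 * ∏ j, Real.Gamma (γ j) * |a (av j)| ^ (-(γ j)) : ℝ) : ℂ) *
              (∑ β : Fin n → Bool, ∏ j, Complex.exp
                (((Real.sign (a (av j) * ∏ k, (if β k then (1 : ℝ) else -1) ^ (av j k)) : ℝ) : ℂ) *
                  (Real.pi : ℂ) * Complex.I * ((γ j : ℝ) : ℂ) / 2)) := by
    rw [Finset.mul_sum, hdet]
    refine Finset.sum_congr rfl fun β _ => ?_
    simp only [Finset.prod_mul_distrib, mono, sgnv]
    push_cast
    ring
  rw [hμ] at hlim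
  rw [isLittleO_iff]
  intro ε hε
  filter_upwards [eventually_gt_atTop 0, (Metric.tendsto_nhds.1 hlim) ε hε] with t ht hdist
  rw [hI t ht, mul_comm ((t ^ s₀ : ℝ) : ℂ), ← sub_mul, norm_mul, Complex.norm_real]
  gcongr
  rw [← dist_eq_norm]
  exact hdist.le
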